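/- Let X₁, X₂, … be i.i.d. real random variables with a Lebesgue density, mean 0 and variance 1, and let S̄_n := max_{1≤k≤n} (X₁+…+X_k). Then D₊(S̄_n/√n | |Z|) → 0 as n → ∞ if and only if D₊(X₁ | |Z|) < ∞. -/

import Mathlib

open MeasureTheory ProbabilityTheory Filter
open scoped ENNReal Classical

/-- The Kullback–Leibler divergence (relative entropy) `D(μ | ν)` of two measures
on `ℝ`, with values in `[0,∞]`: it is `∫ log (dμ/dν) dμ` when `μ ≪ ν` and the
log-likelihood ratio is integrable, and `∞` otherwise. -/
noncomputable def KL (μ ν : Measure ℝ) : ℝ≥0∞ :=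
  if μ ≪ ν ∧ Integrable (llr μ ν) μ then ENNReal.ofReal (∫ x, llr μ ν x ∂μ) else ⊤

/-- The law of `|Z|` for a standard normal `Z` (one-sided standard normal law). -/
noncomputable def halfNormal : Measure ℝ := Measure.map (fun y => |y|) (gaussianReal 0 1)

/-- `D₊(U | |Z|)`: the relative entropy of `U` conditioned to be positive with
respect to the one-sided standard normal law. -/
noncomputable def Dplus {Ω : Type*} [MeasurableSpace Ω] (μ : Measure Ω) (U : Ω → ℝ) :
    ℝ≥0∞ :=
  KL ((Measure.map U μ)[|Set.Ioi 0]) halfNormal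

/-!
Let `Mₙ = max (0, S₁, …, Sₙ)`. Conditioned on being positive, `Mₙ` and the maximum of
`S₁, …, Sₙ` agree, and by Lindley's recursion `Mₙ` has the law of the walk reflected at `0`.

Necessity: on the event that the reflected walk sits at `0` at time `n - 1`, its next positive
value is that of a single step, so the law of `Mₙ` on `(0, ∞)` dominates a multiple of the law of
`X₁` on `(0, ∞)`. Hence finite relative entropy for one `n` forces `D₊(X₁ | |Z|) < ∞`.

Sufficiency: the law of `Mₙ` is nearly invariant under shifts of size `o(√n)`, by coupling two
walks started at distance `h` until they meet, so the Erdős–Kac limit theorem holds in total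
variation. It becomes convergence of relative entropies once the integrals of `f log (1 + √n f)`,
with `f` the density of `Mₙ`, are uniformly integrable in the scale of `Mₙ / √n`. To see this, let
the walk run for `n` steps, the last `m = n / (j⁴ + 2)` of which are singled out. If it has not
visited `0` during those, then `Mₙ` contains the free sum of `m` steps, whose law has a density of
order `1 / √m` up to a geometrically small part. Otherwise, decomposing at the last visit to `0`
bounds the law of `Mₙ` by `P(Mₙ₋ₘ = 0) / P(Mₘ = 0) ≤ C / j` times the law of `Mₘ`. For large `j`
this is a contraction, which bounds the entropy by induction on `n`.
-/

namespace EntropicErdosKac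

section Convolution

variable {M : Type*} [AddMonoid M] [MeasurableSpace M]

theorem conv_mono [MeasurableAdd₂ M] {ρ ρ' ν ν' : Measure M} [SFinite ν] [SFinite ν']
    (h : ρ ≤ ρ') (h' : ν ≤ ν') : ρ ∗ ν ≤ ρ' ∗ ν' := by
  refine Measure.le_iff.2 fun s hs ↦ ?_
  rw [← lintegral_indicator_one hs, ← lintegral_indicator_one hs,
    Measure.lintegral_conv (measurable_one.indicator hs),
    Measure.lintegral_conv (measurable_one.indicator hs)]
  exact lintegral_mono' h fun x ↦ lintegral_mono' h' le_rfl

theorem conv_univ [MeasurableAdd₂ M] (ρ ν : Measure M) [SFinite ν] :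
    (ρ ∗ ν) Set.univ = ρ Set.univ * ν Set.univ := by
  rw [Measure.conv, Measure.map_apply measurable_add .univ, Set.preimage_univ,
    ← Set.univ_prod_univ, Measure.prod_prod]

theorem conv_left_comm {G : Type*} [AddCommMonoid G] [MeasurableSpace G] [MeasurableAdd₂ G]
    (ρ ν π : Measure G) [SFinite ρ] [SFinite ν] [SFinite π] : ρ ∗ (ν ∗ π) = ν ∗ (ρ ∗ π) := by
  rw [← Measure.conv_assoc, Measure.conv_comm ρ ν, Measure.conv_assoc]

instance sFinite_finsetSum {α ι : Type*} [MeasurableSpace α] (s : Finset ι) (ρ : ι → Measure α)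
    [∀ i, SFinite (ρ i)] : SFinite (∑ i ∈ s, ρ i) := by
  rw [← Measure.sum_coe_finset]
  infer_instance

theorem finsetSum_conv [MeasurableAdd₂ M] {ι : Type*} (s : Finset ι) (ρ : ι → Measure M)
    (ν : Measure M) [∀ i, SFinite (ρ i)] [SFinite ν] : (∑ i ∈ s, ρ i) ∗ ν = ∑ i ∈ s, ρ i ∗ ν := by
  induction s using Finset.induction_on with
  | empty => simp
  | insert a s ha ih => rw [Finset.sum_insert ha, Finset.sum_insert ha, Measure.add_conv, ih]

/-- The `n`-fold convolution power of `μ`: the law of `X₁ + ⋯ + Xₙ` for independent `Xᵢ` of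
law `μ`. -/
noncomputable def convPow (μ : Measure M) : ℕ → Measure M
  | 0 => Measure.dirac 0
  | n + 1 => convPow μ n ∗ μ

variable (μ : Measure M)

theorem convPow_zero : convPow μ 0 = Measure.dirac 0 := rfl

theorem convPow_succ (n : ℕ) : convPow μ (n + 1) = convPow μ n ∗ μ := rfl

instance [MeasurableAdd₂ M] [IsProbabilityMeasure μ] (n : ℕ) :
    IsProbabilityMeasure (convPow μ n) := by
  induction n with
  | zero => exact Measure.dirac.isProbabilityMeasure
  | succ n ih => exact Measure.probabilitymeasure_of_probabilitymeasures_conv _ _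

end Convolution

section KilledWalk

variable (μ : Measure ℝ)

/-- One step of the random walk with step law `μ`, killed on leaving `(0, ∞)`: a sub-probability
law `ρ` of the current position is sent to the law of the next one. -/
noncomputable def killedStep (ρ : Measure ℝ) : Measure ℝ := (ρ ∗ μ).restrict (Set.Ioi 0)

/-- The law of `Sₙ` on the event `S₁ > 0, …, Sₙ > 0`, a sub-probability measure. -/
noncomputable def killedLaw (n : ℕ) : Measure ℝ := (killedStep μ)^[n] (Measure.dirac 0)

theorem killedLaw_succ (n : ℕ) : killedLaw μ (n + 1) = killedStep μ (killedLaw μ n) :=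
  Function.iterate_succ_apply' _ _ _

theorem killedStep_zero : killedStep μ 0 = 0 := by
  simp [killedStep]

variable [IsProbabilityMeasure μ]

theorem killedStep_dirac_zero : killedStep μ (Measure.dirac 0) = μ.restrict (Set.Ioi 0) := by
  simp [killedStep]

theorem killedLaw_one : killedLaw μ 1 = μ.restrict (Set.Ioi 0) := by
  rw [killedLaw, Function.iterate_one, killedStep_dirac_zero]

instance (ρ : Measure ℝ) [IsFiniteMeasure ρ] : IsFiniteMeasure (killedStep μ ρ) := by
  unfold killedStep
  infer_instance

instance (ρ : Measure ℝ) [IsFiniteMeasure ρ] (n : ℕ) :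
    IsFiniteMeasure ((killedStep μ)^[n] ρ) := by
  induction n with
  | zero => assumption
  | succ n ih => rw [Function.iterate_succ_apply']; infer_instance

instance (n : ℕ) : IsFiniteMeasure (killedLaw μ n) := by
  unfold killedLaw
  infer_instance

theorem killedStep_add (ρ ρ' : Measure ℝ) [SFinite ρ] [SFinite ρ'] :
    killedStep μ (ρ + ρ') = killedStep μ ρ + killedStep μ ρ' := by
  rw [killedStep, Measure.add_conv, Measure.restrict_add, killedStep, killedStep]

theorem killedStep_smul (c : ℝ≥0∞) (ρ : Measure ℝ) :
    killedStep μ (c • ρ) = c • killedStep μ ρ := by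
  rw [killedStep, Measure.conv_smul_left, Measure.restrict_smul, killedStep]

theorem killedStep_finsetSum {ι : Type*} (s : Finset ι) (ρ : ι → Measure ℝ) [∀ i, SFinite (ρ i)] :
    killedStep μ (∑ i ∈ s, ρ i) = ∑ i ∈ s, killedStep μ (ρ i) := by
  simp only [killedStep, finsetSum_conv, ← Measure.restrictₗ_apply, map_sum]

theorem iterate_killedStep_le (ρ : Measure ℝ) [SFinite ρ] (n : ℕ) :
    (killedStep μ)^[n] ρ ≤ ρ ∗ convPow μ n := by
  induction n with
  | zero => simp [convPow_zero]
  | succ n ih =>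
    rw [Function.iterate_succ_apply', convPow_succ, ← Measure.conv_assoc]
    exact Measure.restrict_le_self.trans (conv_mono ih le_rfl)

theorem killedLaw_succ_le (n : ℕ) : killedLaw μ (n + 1) ≤ μ.restrict (Set.Ioi 0) ∗ convPow μ n := by
  rw [killedLaw, Function.iterate_succ_apply, killedStep_dirac_zero]
  exact iterate_killedStep_le μ _ n

end KilledWalk

section LindleyRecursion

theorem restrict_Ioi_zero_map_max_zero (ρ : Measure ℝ) :
    (ρ.map (max · 0)).restrict (Set.Ioi 0) = ρ.restrict (Set.Ioi 0) := by
  have h_pre : (max · (0 : ℝ)) ⁻¹' Set.Ioi 0 = Set.Ioi 0 := by ext x; simp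
  have h_id : (max · (0 : ℝ)) =ᵐ[ρ.restrict (Set.Ioi 0)] id :=
    (ae_restrict_mem measurableSet_Ioi).mono fun x hx ↦ max_eq_left hx.le
  rw [Measure.restrict_map (by fun_prop) measurableSet_Ioi, h_pre, Measure.map_congr h_id,
    Measure.map_id]

variable (μ : Measure ℝ)

/-- The law of `max (0, S₁, …, Sₙ)`, computed by Lindley's recursion
`M ↦ max (M + X, 0)`. -/
noncomputable def maxLaw : ℕ → Measure ℝ
  | 0 => Measure.dirac 0
  | n + 1 => (maxLaw n ∗ μ).map (max · 0)

/-- The law of `max (0, S₁, …, Sₙ)` on the event that it is positive, a sub-probability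
measure. -/
noncomputable def posMaxLaw (n : ℕ) : Measure ℝ := (maxLaw μ n).restrict (Set.Ioi 0)

/-- The probability that `S₁, …, Sₙ ≤ 0`. -/
noncomputable def maxAtom (n : ℕ) : ℝ≥0∞ := maxLaw μ n {0}

/-- The part of `posMaxLaw μ n` on which the walk reflected at `0` has visited `0` during its
last `m` steps, decomposed according to the last visit. -/
noncomputable def recentLaw (n m : ℕ) : Measure ℝ :=
  ∑ k ∈ Finset.range m, maxAtom μ (n - 1 - k) • killedLaw μ (k + 1)

theorem maxLaw_succ (n : ℕ) : maxLaw μ (n + 1) = (maxLaw μ n ∗ μ).map (max · 0) := rfl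

theorem posMaxLaw_zero : posMaxLaw μ 0 = 0 := by
  simp [posMaxLaw, maxLaw]

theorem posMaxLaw_univ (n : ℕ) : posMaxLaw μ n Set.univ = maxLaw μ n (Set.Ioi 0) := by
  simp [posMaxLaw]

theorem maxLaw_Iio_zero (n : ℕ) : maxLaw μ n (Set.Iio 0) = 0 := by
  cases n with
  | zero => simp [maxLaw]
  | succ n =>
    rw [maxLaw_succ, Measure.map_apply (by fun_prop) measurableSet_Iio]
    have h_empty : (max · (0 : ℝ)) ⁻¹' Set.Iio 0 = ∅ := by ext x; simp
    rw [h_empty, measure_empty]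

theorem posMaxLaw_succ (n : ℕ) : posMaxLaw μ (n + 1) = killedStep μ (maxLaw μ n) := by
  rw [posMaxLaw, killedStep, maxLaw_succ, restrict_Ioi_zero_map_max_zero]

theorem maxLaw_eq_add (n : ℕ) : maxLaw μ n = posMaxLaw μ n + maxAtom μ n • Measure.dirac 0 := by
  have h_ae : ∀ᵐ x ∂maxLaw μ n, 0 ≤ x := by
    simpa [ae_iff, Set.Iio] using maxLaw_Iio_zero μ n
  have h_singleton : Set.Iic (0 : ℝ) =ᵐ[maxLaw μ n] ({0} : Set ℝ) := by
    filter_upwards [h_ae] with x hx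
    exact propext ⟨fun h ↦ le_antisymm h hx, fun h ↦ (Set.mem_singleton_iff.1 h).le⟩
  rw [posMaxLaw, maxAtom, ← Measure.restrict_singleton, ← Measure.restrict_congr_set h_singleton,
    ← Set.compl_Ioi, Measure.restrict_add_restrict_compl measurableSet_Ioi]

variable [IsProbabilityMeasure μ]

instance (n : ℕ) : IsProbabilityMeasure (maxLaw μ n) := by
  induction n with
  | zero => exact Measure.dirac.isProbabilityMeasure
  | succ n ih => exact Measure.isProbabilityMeasure_map (by fun_prop)

instance (n : ℕ) : IsFiniteMeasure (posMaxLaw μ n) := by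
  unfold posMaxLaw
  infer_instance

theorem posMaxLaw_univ_le (n : ℕ) : posMaxLaw μ n Set.univ ≤ 1 := by
  rw [posMaxLaw_univ]
  exact prob_le_one

theorem maxAtom_le_one (n : ℕ) : maxAtom μ n ≤ 1 := prob_le_one

theorem maxAtom_ne_top (n : ℕ) : maxAtom μ n ≠ ⊤ := measure_ne_top _ _

theorem posMaxLaw_univ_add_maxAtom (n : ℕ) : posMaxLaw μ n Set.univ + maxAtom μ n = 1 := by
  simpa using (congrArg (· Set.univ) (maxLaw_eq_add μ n)).symm

theorem posMaxLaw_add (n m : ℕ) :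
    posMaxLaw μ (n + m) = recentLaw μ (n + m) m + (killedStep μ)^[m] (posMaxLaw μ n) := by
  induction m with
  | zero => simp [recentLaw]
  | succ m ih =>
    have h_recent : killedStep μ (recentLaw μ (n + m) m) + maxAtom μ (n + m) • killedLaw μ 1
        = recentLaw μ (n + (m + 1)) (m + 1) := by
      rw [recentLaw, killedStep_finsetSum, recentLaw, Finset.sum_range_succ']
      congr 1
      refine Finset.sum_congr rfl fun k _ ↦ ?_
      rw [killedStep_smul, ← killedLaw_succ]
      congr 2
      omega
    have : SFinite (recentLaw μ (n + m) m) := sFinite_finsetSum _ _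
    rw [← add_assoc, posMaxLaw_succ, maxLaw_eq_add, killedStep_add, ih, killedStep_add,
      killedStep_smul, Function.iterate_succ_apply', killedStep_dirac_zero, ← killedLaw_one,
      add_assoc n m 1, ← h_recent, add_right_comm]

theorem posMaxLaw_eq_add {n m : ℕ} (h : m ≤ n) :
    posMaxLaw μ n = recentLaw μ n m + (killedStep μ)^[m] (posMaxLaw μ (n - m)) := by
  obtain ⟨d, rfl⟩ := Nat.exists_eq_add_of_le' h
  rw [Nat.add_sub_cancel, posMaxLaw_add]

theorem posMaxLaw_eq_recentLaw (n : ℕ) : posMaxLaw μ n = recentLaw μ n n := by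
  have h_zero : (killedStep μ)^[n] 0 = 0 := Function.iterate_fixed (killedStep_zero μ) n
  rw [posMaxLaw_eq_add μ le_rfl, Nat.sub_self, posMaxLaw_zero, h_zero, add_zero]

theorem smul_restrict_le_posMaxLaw {n : ℕ} (hn : 1 ≤ n) :
    maxAtom μ (n - 1) • μ.restrict (Set.Ioi 0) ≤ posMaxLaw μ n := by
  rw [posMaxLaw_eq_recentLaw, ← killedLaw_one]
  exact Finset.single_le_sum (f := fun k ↦ maxAtom μ (n - 1 - k) • killedLaw μ (k + 1))
    (fun k _ ↦ Measure.zero_le _) (Finset.mem_range.2 hn)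

theorem conv_Ioi (ρ : Measure ℝ) [SFinite ρ] (x : ℝ) :
    (ρ ∗ μ) (Set.Ioi x) = ∫⁻ y, ρ (Set.Ioi (x - y)) ∂μ := by
  rw [Measure.conv_comm, Measure.conv, Measure.map_apply (by fun_prop) measurableSet_Ioi,
    Measure.prod_apply (measurable_add measurableSet_Ioi)]
  congr! with y
  ext z
  simp [sub_lt_iff_lt_add']

theorem maxLaw_Ioi_of_neg (n : ℕ) {x : ℝ} (hx : x < 0) : maxLaw μ n (Set.Ioi x) = 1 := by
  rw [← prob_compl_eq_zero_iff measurableSet_Ioi, Set.compl_Ioi]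
  exact measure_mono_null (fun y hy ↦ lt_of_le_of_lt hy hx) (maxLaw_Iio_zero μ n)

theorem maxLaw_succ_Ioi (n : ℕ) {x : ℝ} (hx : 0 ≤ x) :
    maxLaw μ (n + 1) (Set.Ioi x) = ∫⁻ y, maxLaw μ n (Set.Ioi (x - y)) ∂μ := by
  have h_pre : (max · (0 : ℝ)) ⁻¹' Set.Ioi x = Set.Ioi x := by
    ext z
    simp [hx.not_gt]
  rw [maxLaw_succ, Measure.map_apply (by fun_prop) measurableSet_Ioi, h_pre, conv_Ioi]

theorem convPow_succ_Ioi (n : ℕ) (x : ℝ) :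
    convPow μ (n + 1) (Set.Ioi x) = ∫⁻ y, convPow μ n (Set.Ioi (x - y)) ∂μ :=
  conv_Ioi μ _ x

theorem maxLaw_Ioi_le_succ (n : ℕ) (x : ℝ) :
    maxLaw μ n (Set.Ioi x) ≤ maxLaw μ (n + 1) (Set.Ioi x) := by
  induction n generalizing x with
  | zero =>
    rcases lt_or_ge x 0 with h | h
    · rw [maxLaw_Ioi_of_neg μ _ h, maxLaw_Ioi_of_neg μ _ h]
    · simp [maxLaw, h]
  | succ n ih =>
    rcases lt_or_ge x 0 with h | h
    · rw [maxLaw_Ioi_of_neg μ _ h, maxLaw_Ioi_of_neg μ _ h]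
    · rw [maxLaw_succ_Ioi μ _ h, maxLaw_succ_Ioi μ _ h]
      exact lintegral_mono fun y ↦ ih _

theorem maxAtom_antitone : Antitone (maxAtom μ) := by
  have h_eq (n : ℕ) : maxAtom μ n = 1 - maxLaw μ n (Set.Ioi 0) := by
    rw [← posMaxLaw_univ, ← posMaxLaw_univ_add_maxAtom μ n,
      ENNReal.add_sub_cancel_left (measure_ne_top _ _)]
  refine antitone_nat_of_succ_le fun n ↦ ?_
  rw [h_eq, h_eq]
  exact tsub_le_tsub_left (maxLaw_Ioi_le_succ μ n 0) 1

theorem maxAtom_mul_le_succ (n : ℕ) : maxAtom μ n * μ (Set.Iic 0) ≤ maxAtom μ (n + 1) := by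
  have h_pre : (max · (0 : ℝ)) ⁻¹' {0} = Set.Iic 0 := by ext x; simp
  have h_le : maxAtom μ n • Measure.dirac 0 ≤ maxLaw μ n := by
    conv_rhs => rw [maxLaw_eq_add]
    exact Measure.le_add_left le_rfl
  have h_conv := conv_mono h_le (le_refl μ) (Set.Iic 0)
  rw [Measure.conv_smul_left, Measure.dirac_zero_conv] at h_conv
  rw [maxAtom.eq_def μ (n + 1), maxLaw_succ,
    Measure.map_apply (by fun_prop) (measurableSet_singleton _), h_pre]
  exact h_conv

theorem maxAtom_ne_zero (h : μ (Set.Iic 0) ≠ 0) (n : ℕ) : maxAtom μ n ≠ 0 := by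
  induction n with
  | zero => simp [maxAtom, maxLaw]
  | succ n ih => exact ((mul_ne_zero ih h).bot_lt.trans_le (maxAtom_mul_le_succ μ n)).ne'

theorem recentLaw_le (h : μ (Set.Iic 0) ≠ 0) {n m : ℕ} (hm : m ≤ n) :
    recentLaw μ n m ≤ (maxAtom μ (n - m) / maxAtom μ m) • posMaxLaw μ m := by
  rw [posMaxLaw_eq_recentLaw μ m, recentLaw, recentLaw, Finset.smul_sum]
  refine Finset.sum_le_sum fun k hk ↦ ?_
  rw [Finset.mem_range] at hk
  have h_coeff : maxAtom μ (n - 1 - k) ≤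
      maxAtom μ (n - m) / maxAtom μ m * maxAtom μ (m - 1 - k) := calc
    maxAtom μ (n - 1 - k) ≤ maxAtom μ (n - m) := maxAtom_antitone μ (by omega)
    _ = maxAtom μ (n - m) / maxAtom μ m * maxAtom μ m :=
      (ENNReal.div_mul_cancel (maxAtom_ne_zero μ h m) (maxAtom_ne_top μ m)).symm
    _ ≤ maxAtom μ (n - m) / maxAtom μ m * maxAtom μ (m - 1 - k) := by
      gcongr
      exact maxAtom_antitone μ (by omega)
  rw [smul_smul]
  intro s
  simp only [Measure.smul_apply, smul_eq_mul]
  gcongr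

end LindleyRecursion

section Standardized

/-- A law on `ℝ` with mean `0` and variance `1`. -/
structure IsStandardized (μ : Measure ℝ) : Prop where
  memLp : MemLp id 2 μ
  integral_id : ∫ x, x ∂μ = 0
  integral_sq : ∫ x, x ^ 2 ∂μ = 1

namespace IsStandardized

theorem not_ae_eq_zero {μ : Measure ℝ} (hμ : IsStandardized μ) :
    ¬ (fun x : ℝ ↦ x) =ᵐ[μ] 0 := fun h ↦ by
  have h_sq : ∫ x, x ^ 2 ∂μ = 0 := integral_eq_zero_of_ae <| h.mono fun x hx ↦ by simp_all
  exact zero_ne_one (h_sq.symm.trans hμ.integral_sq)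

variable {μ : Measure ℝ} [IsProbabilityMeasure μ] (hμ : IsStandardized μ)

include hμ

theorem lintegral_add_sq (c : ℝ) :
    ∫⁻ x, ENNReal.ofReal ((c + x) ^ 2) ∂μ = ENNReal.ofReal (c ^ 2) + 1 := by
  have h_id : Integrable (fun x : ℝ ↦ x) μ := hμ.memLp.integrable one_le_two
  have h_sq : Integrable (fun x : ℝ ↦ x ^ 2) μ := hμ.memLp.integrable_sq
  have h_expand : (fun x : ℝ ↦ (c + x) ^ 2) = fun x ↦ c ^ 2 + 2 * c * x + x ^ 2 := by
    ext x
    ring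
  have h_lin : Integrable (fun x : ℝ ↦ c ^ 2 + 2 * c * x) μ :=
    (integrable_const _).add (h_id.const_mul _)
  rw [← ofReal_integral_eq_lintegral_ofReal (h_expand ▸ h_lin.add h_sq)
    (ae_of_all _ fun x ↦ sq_nonneg _), h_expand, integral_add h_lin h_sq,
    integral_add (integrable_const _) (h_id.const_mul _), integral_const_mul, hμ.integral_id,
    hμ.integral_sq, ← ENNReal.ofReal_one, ← ENNReal.ofReal_add (sq_nonneg c) zero_le_one]
  simp

theorem lintegral_sq : ∫⁻ x, ENNReal.ofReal (x ^ 2) ∂μ = 1 := by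
  simpa using hμ.lintegral_add_sq 0

theorem lintegral_conv_sq (ρ : Measure ℝ) :
    ∫⁻ x, ENNReal.ofReal (x ^ 2) ∂(ρ ∗ μ) = ∫⁻ x, ENNReal.ofReal (x ^ 2) ∂ρ + ρ Set.univ := by
  rw [Measure.lintegral_conv (by fun_prop)]
  simp only [hμ.lintegral_add_sq]
  rw [lintegral_add_right _ measurable_const, lintegral_const, one_mul]

theorem lintegral_convPow_sq (n : ℕ) : ∫⁻ x, ENNReal.ofReal (x ^ 2) ∂(convPow μ n) = n := by
  induction n with
  | zero => simp [convPow_zero]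
  | succ n ih => rw [convPow_succ, hμ.lintegral_conv_sq, ih, measure_univ, Nat.cast_succ]

theorem lintegral_maxLaw_sq_le (n : ℕ) : ∫⁻ x, ENNReal.ofReal (x ^ 2) ∂(maxLaw μ n) ≤ n := by
  induction n with
  | zero => simp [maxLaw]
  | succ n ih =>
    rw [maxLaw_succ, lintegral_map (by fun_prop) (by fun_prop)]
    calc ∫⁻ x, ENNReal.ofReal (max x 0 ^ 2) ∂(maxLaw μ n ∗ μ)
        ≤ ∫⁻ x, ENNReal.ofReal (x ^ 2) ∂(maxLaw μ n ∗ μ) :=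
          lintegral_mono fun x ↦ ENNReal.ofReal_le_ofReal <| by
            rcases le_total x 0 with h | h <;> simp [h, sq_nonneg]
      _ = ∫⁻ x, ENNReal.ofReal (x ^ 2) ∂(maxLaw μ n) + 1 := by
          rw [hμ.lintegral_conv_sq, measure_univ]
      _ ≤ (n + 1 : ℕ) := by
          push_cast
          gcongr

theorem measure_Iic_zero_ne_zero : μ (Set.Iic 0) ≠ 0 := fun h ↦ by
  have h_nonneg : 0 ≤ᵐ[μ] fun x : ℝ ↦ x :=
    (measure_eq_zero_iff_ae_notMem.1 h).mono fun x hx ↦ (not_le.1 hx).le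
  exact hμ.not_ae_eq_zero <|
    (integral_eq_zero_iff_of_nonneg_ae h_nonneg (hμ.memLp.integrable one_le_two)).1 hμ.integral_id

theorem measure_Ioi_zero_ne_zero : μ (Set.Ioi 0) ≠ 0 := fun h ↦ by
  have h_nonneg : 0 ≤ᵐ[μ] fun x : ℝ ↦ -x :=
    (measure_eq_zero_iff_ae_notMem.1 h).mono fun x hx ↦ neg_nonneg.2 (not_lt.1 hx)
  have h_neg := (integral_eq_zero_iff_of_nonneg_ae h_nonneg
    (hμ.memLp.integrable one_le_two).neg).1 (by rw [integral_neg, hμ.integral_id, neg_zero])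
  exact hμ.not_ae_eq_zero (h_neg.mono fun x hx ↦ neg_eq_zero.1 hx)

theorem tendsto_mul_measure_Ioi {δ : ℝ} (hδ : 0 < δ) :
    Tendsto (fun n : ℕ ↦ (n : ℝ≥0∞) * μ (Set.Ioi (δ * √n))) atTop (nhds 0) := by
  have h_meas : Tendsto (fun x : ℝ ↦ μ (Set.Ioi x)) atTop (nhds 0) := by
    have h_inter := tendsto_measure_iInter_atTop (μ := μ) (s := fun x : ℝ ↦ Set.Ioi x)
      (fun _ ↦ measurableSet_Ioi.nullMeasurableSet) (fun _ _ h ↦ Set.Ioi_subset_Ioi h)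
      ⟨0, measure_ne_top _ _⟩
    have h_empty : ⋂ x : ℝ, Set.Ioi x = ∅ :=
      Set.eq_empty_of_forall_notMem fun x hx ↦ lt_irrefl x (Set.mem_iInter.1 hx x)
    rwa [h_empty, measure_empty] at h_inter
  have h_sqrt : Tendsto (fun n : ℕ ↦ δ * √n) atTop atTop :=
    (Real.tendsto_sqrt_atTop.comp tendsto_natCast_atTop_atTop).const_mul_atTop hδ
  have h_tail : Tendsto (fun n : ℕ ↦ ENNReal.ofReal (1 / δ ^ 2) *
      ∫⁻ y in Set.Ioi (δ * √n), ENNReal.ofReal (y ^ 2) ∂μ) atTop (nhds 0) := by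
    have h_lim := ENNReal.Tendsto.const_mul (a := ENNReal.ofReal (1 / δ ^ 2))
      (tendsto_setLIntegral_zero (hμ.lintegral_sq.trans_ne ENNReal.one_ne_top)
        (h_meas.comp h_sqrt)) (Or.inr ENNReal.ofReal_ne_top)
    rwa [mul_zero] at h_lim
  refine tendsto_of_tendsto_of_tendsto_of_le_of_le tendsto_const_nhds h_tail (fun _ ↦ zero_le)
    fun n ↦ ?_
  dsimp only
  rw [← setLIntegral_const, ← lintegral_const_mul _ (by fun_prop)]
  refine setLIntegral_mono (by fun_prop) fun y hy ↦ ?_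
  rw [← ENNReal.ofReal_mul (by positivity), ← ENNReal.ofReal_natCast]
  refine ENNReal.ofReal_le_ofReal ?_
  have h_sq : (δ * √n) ^ 2 ≤ y ^ 2 := pow_le_pow_left₀ (by positivity) hy.le 2
  rw [mul_pow, Real.sq_sqrt n.cast_nonneg] at h_sq
  rw [one_div_mul_eq_div, le_div_iff₀ (by positivity)]
  linarith

end IsStandardized

theorem measure_Ioi_le_lintegral_sq_div (ρ : Measure ℝ) {t : ℝ} (ht : 0 < t) :
    ρ (Set.Ioi t) ≤ (∫⁻ x, ENNReal.ofReal (x ^ 2) ∂ρ) / ENNReal.ofReal (t ^ 2) :=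
  (measure_mono fun _ hx ↦ ENNReal.ofReal_le_ofReal (pow_le_pow_left₀ ht.le (le_of_lt hx) 2)).trans
    (meas_ge_le_lintegral_div (by fun_prop) (by simpa using ht.ne') ENNReal.ofReal_ne_top)

end Standardized

section GaussianTail

theorem gaussianReal_le_volume : gaussianReal 0 1 ≤ volume := by
  rw [gaussianReal_of_var_ne_zero _ one_ne_zero]
  conv_rhs => rw [← withDensity_one (μ := volume)]
  refine withDensity_mono (ae_of_all _ fun x ↦ ENNReal.ofReal_le_one.2 ?_)
  have h_exp : Real.exp (-(x - 0) ^ 2 / (2 * ((1 : NNReal) : ℝ))) ≤ 1 :=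
    Real.exp_le_one_iff.2 (div_nonpos_of_nonpos_of_nonneg (by simp [sq_nonneg]) (by positivity))
  have h_inv : (√(2 * Real.pi * ((1 : NNReal) : ℝ)))⁻¹ ≤ 1 :=
    inv_le_one_of_one_le₀ (Real.one_le_sqrt.2 (by simpa using by linarith [Real.pi_gt_three]))
  exact mul_le_one₀ h_inv (Real.exp_nonneg _) h_exp

/-- The standard normal tail `P(Z > x)`. -/
noncomputable def gaussianTail (x : ℝ) : ℝ := (gaussianReal 0 1).real (Set.Ioi x)

theorem gaussianTail_le_add_abs_sub (x y : ℝ) : gaussianTail x ≤ gaussianTail y + |x - y| := by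
  have h_cover : Set.Ioi x ⊆ Set.Ioi y ∪ Set.Ioc x y := fun z hz ↦
    (lt_or_ge y z).imp id fun h ↦ ⟨hz, h⟩
  have h_Ioc : (gaussianReal 0 1).real (Set.Ioc x y) ≤ |x - y| := by
    refine ENNReal.toReal_le_of_le_ofReal (abs_nonneg _)
      ((gaussianReal_le_volume _).trans ?_)
    rw [Real.volume_Ioc, abs_sub_comm]
    exact ENNReal.ofReal_le_ofReal (le_abs_self _)
  exact (measureReal_mono h_cover).trans <|
    (measureReal_union_le _ _).trans (add_le_add_right h_Ioc _)

theorem continuous_gaussianTail : Continuous gaussianTail :=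
  (LipschitzWith.of_le_add fun x y ↦ gaussianTail_le_add_abs_sub x y).continuous

theorem gaussianTail_zero : gaussianTail 0 = 1 / 2 := by
  have := nullSingletonClass_gaussianReal (μ := 0) (v := 1) one_ne_zero
  have h_Iio : (gaussianReal 0 1).real (Set.Iio 0) = gaussianTail 0 := by
    have h_neg := gaussianReal_map_neg (μ := 0) (v := 1)
    rw [neg_zero] at h_neg
    conv_lhs => rw [← h_neg, map_measureReal_apply (by fun_prop) measurableSet_Iio]
    simp [gaussianTail]
  have h_Ici : (gaussianReal 0 1).real (Set.Ici 0) = gaussianTail 0 :=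
    measureReal_congr Ioi_ae_eq_Ici.symm
  have h_sum := probReal_add_probReal_compl (μ := gaussianReal 0 1) (measurableSet_Iio (a := 0))
  rw [Set.compl_Iio, h_Iio, h_Ici] at h_sum
  linarith

end GaussianTail

section ErdosKac

variable {μ : Measure ℝ} [IsProbabilityMeasure μ]

theorem charFun_convPow (n : ℕ) (t : ℝ) : charFun (convPow μ n) t = charFun μ t ^ n := by
  induction n with
  | zero => simp [convPow_zero]
  | succ n ih => rw [convPow_succ, charFun_conv, ih, pow_succ]

theorem tendsto_convPow_Ioi (hμ : IsStandardized μ) (x : ℝ) :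
    Tendsto (fun n : ℕ ↦ (convPow μ n).real (Set.Ioi (x * √n))) atTop (nhds (gaussianTail x)) := by
  have := nullSingletonClass_gaussianReal (μ := 0) (v := 1) one_ne_zero
  let ν (n : ℕ) : ProbabilityMeasure ℝ :=
    ⟨(convPow μ n).map ((√n)⁻¹ * ·), Measure.isProbabilityMeasure_map (by fun_prop)⟩
  have h_weak : Tendsto ν atTop (nhds ⟨gaussianReal 0 1, inferInstance⟩) := by
    refine ProbabilityMeasure.tendsto_iff_tendsto_charFun.2 fun t ↦ ?_
    have h_char := tendsto_charFun_inv_sqrt_mul_pow (X := id) aemeasurable_id hμ.integral_id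
      hμ.integral_sq t
    simpa [ν, charFun_map_mul, charFun_convPow, charFun_gaussianReal, neg_div] using h_char
  have h_Ioi : Tendsto (fun n ↦ (ν n : Measure ℝ).real (Set.Ioi x)) atTop
      (nhds (gaussianTail x)) :=
    (ENNReal.tendsto_toReal (measure_ne_top _ _)).comp
      (ProbabilityMeasure.tendsto_measure_of_null_frontier_of_tendsto' h_weak (by simp))
  refine h_Ioi.congr' ?_
  filter_upwards [eventually_ge_atTop 1] with n hn
  have h_sqrt : 0 < √(n : ℝ) := Real.sqrt_pos.2 (by exact_mod_cast hn)
  change ((convPow μ n).map ((√n)⁻¹ * ·)).real _ = _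
  rw [map_measureReal_apply (by fun_prop) measurableSet_Ioi]
  congr 1
  ext y
  simp [inv_mul_eq_div, lt_div_iff₀ h_sqrt]

theorem mul_maxLaw_Ioi_le {c : ℝ≥0∞} {K : ℕ} (hc : ∀ j, K ≤ j → c ≤ convPow μ j (Set.Ioi 0))
    (n : ℕ) (x : ℝ) : c * maxLaw μ n (Set.Ioi x) ≤ convPow μ (n + K) (Set.Ioi x) := by
  have h_of_neg (n : ℕ) {x : ℝ} (hx : x < 0) :
      c * maxLaw μ n (Set.Ioi x) ≤ convPow μ (n + K) (Set.Ioi x) := by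
    rw [maxLaw_Ioi_of_neg μ _ hx, mul_one]
    exact (hc _ (Nat.le_add_left K n)).trans (measure_mono (Set.Ioi_subset_Ioi hx.le))
  induction n generalizing x with
  | zero =>
    rcases lt_or_ge x 0 with hx | hx
    · exact h_of_neg 0 hx
    · simp [maxLaw, hx]
  | succ n ih =>
    rcases lt_or_ge x 0 with hx | hx
    · exact h_of_neg _ hx
    · rw [maxLaw_succ_Ioi μ _ hx, add_right_comm, convPow_succ_Ioi]
      exact (lintegral_const_mul_le _ _).trans (lintegral_mono fun y ↦ ih _)

theorem convPow_Ioi_le {c : ℝ≥0∞} {s t : ℝ} (hs : 0 ≤ s) (ht : 0 ≤ t)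
    (hc : ∀ j, convPow μ j (Set.Ioi t) ≤ c) (n : ℕ) {x : ℝ} (hx : -s ≤ x) :
    convPow μ n (Set.Ioi (x + s + t)) ≤ c * maxLaw μ n (Set.Ioi x) + n * μ (Set.Ioi s) := by
  have h_of_neg (n : ℕ) {x : ℝ} (hx : -s ≤ x) (hx0 : x < 0) :
      convPow μ n (Set.Ioi (x + s + t)) ≤ c * maxLaw μ n (Set.Ioi x) + n * μ (Set.Ioi s) := by
    rw [maxLaw_Ioi_of_neg μ _ hx0, mul_one]
    exact ((measure_mono (Set.Ioi_subset_Ioi (by linarith))).trans (hc n)).trans le_self_add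
  induction n generalizing x with
  | zero =>
    rcases lt_or_ge x 0 with hx0 | hx0
    · exact h_of_neg 0 hx hx0
    · simp [convPow_zero, show 0 ≤ x + s + t by positivity]
  | succ n ih =>
    rcases lt_or_ge x 0 with hx0 | hx0
    · exact h_of_neg _ hx hx0
    have h_meas : Measurable fun y ↦ maxLaw μ n (Set.Ioi (x - y)) :=
      (show Antitone fun y : ℝ ↦ maxLaw μ n (Set.Ioi y) from fun a b h ↦
        measure_mono (Set.Ioi_subset_Ioi h)).measurable.comp (by fun_prop)
    rw [maxLaw_succ_Ioi μ _ hx0, convPow_succ_Ioi]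
    calc ∫⁻ y, convPow μ n (Set.Ioi (x + s + t - y)) ∂μ
        ≤ ∫⁻ y, ((c * maxLaw μ n (Set.Ioi (x - y)) + n * μ (Set.Ioi s)) +
            (Set.Ioi s).indicator 1 y) ∂μ := by
          refine lintegral_mono fun y ↦ ?_
          by_cases hy : x + s < y
          · rw [Set.indicator_of_mem (Set.mem_Ioi.2 (by linarith)), Pi.one_apply]
            exact prob_le_one.trans le_add_self
          · rw [show x + s + t - y = x - y + s + t by ring]
            exact (ih (by linarith)).trans le_self_add
      _ = _ := by
          rw [lintegral_add_right _ (measurable_one.indicator measurableSet_Ioi),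
            lintegral_add_right _ measurable_const, lintegral_const_mul _ h_meas,
            lintegral_indicator_one measurableSet_Ioi, lintegral_const, measure_univ, mul_one]
          push_cast
          ring

theorem tendsto_convPow_Ioi_zero (hμ : IsStandardized μ) :
    Tendsto (fun n ↦ (convPow μ n).real (Set.Ioi 0)) atTop (nhds (1 / 2)) := by
  simpa [gaussianTail_zero] using tendsto_convPow_Ioi hμ 0

theorem exists_forall_convPow_Ioi_le (hμ : IsStandardized μ) {δ : ℝ} (hδ : 0 < δ) :
    ∃ t > 0, ∀ n, convPow μ n (Set.Ioi t) ≤ ENNReal.ofReal (1 / 2 + δ) := by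
  obtain ⟨K, hK⟩ := eventually_atTop.1
    ((tendsto_convPow_Ioi_zero hμ).eventually_lt_const (lt_add_of_pos_right _ hδ))
  have h_t : 0 < √(2 * K) + 1 := by positivity
  refine ⟨√(2 * K) + 1, h_t, fun n ↦ ?_⟩
  rcases le_or_gt K n with h | h
  · rw [← ofReal_measureReal]
    exact ENNReal.ofReal_le_ofReal
      ((measureReal_mono (Set.Ioi_subset_Ioi h_t.le)).trans (hK n h).le)
  · refine (measure_Ioi_le_lintegral_sq_div _ h_t).trans ?_
    rw [hμ.lintegral_convPow_sq, ← ENNReal.ofReal_natCast,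
      ← ENNReal.ofReal_div_of_pos (by positivity)]
    refine ENNReal.ofReal_le_ofReal ((div_le_iff₀ (by positivity)).2 ?_)
    have h_nK : (n : ℝ) ≤ K := by exact_mod_cast h.le
    nlinarith [Real.sq_sqrt (show 0 ≤ 2 * (K : ℝ) by positivity), Real.sqrt_nonneg (2 * K : ℝ)]

theorem eventually_gaussianTail_le (hμ : IsStandardized μ) {x δ : ℝ} (hx : 0 ≤ x) (hδ : 0 < δ) :
    ∀ᶠ n : ℕ in atTop, gaussianTail (x + 2 * δ) - 2 * δ ≤
      (1 / 2 + δ) * (maxLaw μ n).real (Set.Ioi (x * √n)) := by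
  obtain ⟨t, ht, h_tail⟩ := exists_forall_convPow_Ioi_le hμ hδ
  filter_upwards [(tendsto_convPow_Ioi hμ (x + 2 * δ)).eventually_const_lt (sub_lt_self _ hδ),
    (hμ.tendsto_mul_measure_Ioi hδ).eventually_lt_const (ENNReal.ofReal_pos.2 hδ),
    (Real.tendsto_sqrt_atTop.comp tendsto_natCast_atTop_atTop).eventually_ge_atTop (t / δ)]
    with n h_clt h_jump h_sqrt
  have h_level : x * √n + δ * √n + t ≤ (x + 2 * δ) * √n := by
    rw [Function.comp_apply, div_le_iff₀ hδ] at h_sqrt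
    linarith
  have h_le : convPow μ n (Set.Ioi ((x + 2 * δ) * √n)) ≤
      ENNReal.ofReal (1 / 2 + δ) * maxLaw μ n (Set.Ioi (x * √n)) + ENNReal.ofReal δ := by
    have h_nonneg : 0 ≤ x * √n + δ * √n := by positivity
    refine (measure_mono (Set.Ioi_subset_Ioi h_level)).trans
      ((convPow_Ioi_le (by positivity) ht.le h_tail n (by linarith)).trans ?_)
    gcongr
  have h_real := ENNReal.toReal_mono (by finiteness) h_le
  rw [ENNReal.toReal_add (by finiteness) (by finiteness), ENNReal.toReal_mul,
    ENNReal.toReal_ofReal (by positivity), ENNReal.toReal_ofReal hδ.le] at h_real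
  change (convPow μ n).real _ ≤ (1 / 2 + δ) * (maxLaw μ n).real _ + δ at h_real
  linarith

theorem mul_sqrt_add_le {x δ : ℝ} (hx : 0 ≤ x) (hδ : 0 < δ) {n K : ℕ}
    (h : |x - δ| * √K / δ ≤ √n) : (x - δ) * √((n + K : ℕ) : ℝ) ≤ x * √n := by
  rw [div_le_iff₀ hδ] at h
  have h_add : √((n + K : ℕ) : ℝ) ≤ √n + √K := by
    refine Real.sqrt_le_iff.2 ⟨by positivity, ?_⟩
    rw [add_sq, Real.sq_sqrt n.cast_nonneg, Real.sq_sqrt K.cast_nonneg, Nat.cast_add]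
    linarith [mul_nonneg (Real.sqrt_nonneg n) (Real.sqrt_nonneg K)]
  rcases le_total 0 (x - δ) with h_sign | h_sign
  · rw [abs_of_nonneg h_sign] at h
    nlinarith
  · exact (mul_nonpos_of_nonpos_of_nonneg h_sign (Real.sqrt_nonneg _)).trans (by positivity)

theorem eventually_le_gaussianTail (hμ : IsStandardized μ) {x δ : ℝ} (hx : 0 ≤ x) (hδ : 0 < δ)
    (hδ_half : δ < 1 / 2) :
    ∀ᶠ n : ℕ in atTop, (1 / 2 - δ) * (maxLaw μ n).real (Set.Ioi (x * √n)) ≤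
      gaussianTail (x - δ) + δ := by
  obtain ⟨K, hK⟩ := eventually_atTop.1
    ((tendsto_convPow_Ioi_zero hμ).eventually_const_lt (sub_lt_self _ hδ))
  have h_const (j : ℕ) (hj : K ≤ j) : ENNReal.ofReal (1 / 2 - δ) ≤ convPow μ j (Set.Ioi 0) := by
    rw [← ofReal_measureReal]
    exact ENNReal.ofReal_le_ofReal (hK j hj).le
  filter_upwards [((tendsto_convPow_Ioi hμ (x - δ)).comp
      (tendsto_add_atTop_nat K)).eventually_lt_const (lt_add_of_pos_right _ hδ),
    (Real.tendsto_sqrt_atTop.comp tendsto_natCast_atTop_atTop).eventually_ge_atTop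
      (|x - δ| * √K / δ)] with n h_clt h_sqrt
  have h_real := ENNReal.toReal_mono (by finiteness) (mul_maxLaw_Ioi_le h_const n (x * √n))
  rw [ENNReal.toReal_mul, ENNReal.toReal_ofReal (by linarith)] at h_real
  calc (1 / 2 - δ) * (maxLaw μ n).real (Set.Ioi (x * √n))
      ≤ (convPow μ (n + K)).real (Set.Ioi (x * √n)) := h_real
    _ ≤ (convPow μ (n + K)).real (Set.Ioi ((x - δ) * √((n + K : ℕ) : ℝ))) :=
      measureReal_mono (Set.Ioi_subset_Ioi (mul_sqrt_add_le hx hδ h_sqrt))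
    _ ≤ gaussianTail (x - δ) + δ := h_clt.le

theorem tendsto_maxLaw_Ioi (hμ : IsStandardized μ) {x : ℝ} (hx : 0 ≤ x) :
    Tendsto (fun n : ℕ ↦ (maxLaw μ n).real (Set.Ioi (x * √n))) atTop
      (nhds (2 * gaussianTail x)) := by
  have h_cont := continuous_gaussianTail
  refine tendsto_order.2 ⟨fun a ha ↦ ?_, fun a ha ↦ ?_⟩
  · have h_lim : ContinuousAt (fun δ ↦ (gaussianTail (x + 2 * δ) - 2 * δ) / (1 / 2 + δ)) 0 :=
      ContinuousAt.div (by fun_prop) (by fun_prop) (by norm_num)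
    obtain ⟨δ, h_δ, hδ⟩ := (((h_lim.eventually_const_lt (u := a) (by simpa [mul_comm] using ha)
      ).filter_mono nhdsWithin_le_nhds).and (self_mem_nhdsWithin (s := Set.Ioi 0))).exists
    have hδ : 0 < δ := hδ
    filter_upwards [eventually_gaussianTail_le hμ hx hδ] with n hn
    exact h_δ.trans_le ((div_le_iff₀' (by positivity)).2 hn)
  · have h_lim : ContinuousAt (fun δ ↦ (gaussianTail (x - δ) + δ) / (1 / 2 - δ)) 0 :=
      ContinuousAt.div (by fun_prop) (by fun_prop) (by norm_num)
    obtain ⟨δ, ⟨h_δ, hδ_half⟩, hδ⟩ := ((((h_lim.eventually_lt_const (u := a)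
      (by simpa [mul_comm] using ha)).and (eventually_lt_nhds (b := 1 / 2) (by norm_num))
      ).filter_mono nhdsWithin_le_nhds).and (self_mem_nhdsWithin (s := Set.Ioi 0))).exists
    filter_upwards [eventually_le_gaussianTail hμ hx hδ hδ_half] with n hn
    exact ((le_div_iff₀' (by linarith)).2 hn).trans_lt h_δ

end ErdosKac

section RecentVisit

variable (μ : Measure ℝ)

/-- A quadratic potential dominating the probability that the random walk started at `z` leaves
`(0, ∞)` within `j` steps, by Kolmogorov's inequality at the scale `a`. -/
noncomputable def exitPotential (a : ℝ) (j : ℕ) (z : ℝ) : ℝ≥0∞ :=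
  ENNReal.ofReal ((max (a - z) 0 ^ 2 + j) / a ^ 2)

/-- The probability that the reflected walk visits `0` during its last `m` steps up to time `n`. -/
noncomputable def recentVisitProb (n m : ℕ) : ℝ≥0∞ := maxAtom μ n + recentLaw μ n m Set.univ

@[fun_prop]
theorem measurable_exitPotential (a : ℝ) (j : ℕ) : Measurable (exitPotential a j) := by
  unfold exitPotential
  fun_prop

theorem one_le_exitPotential {a z : ℝ} (ha : 0 < a) (j : ℕ) (hz : z ≤ 0) :
    1 ≤ exitPotential a j z := by
  rw [exitPotential, ENNReal.one_le_ofReal, one_le_div (by positivity),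
    max_eq_left (by linarith)]
  nlinarith [j.cast_nonneg (α := ℝ)]

theorem exitPotential_le_indicator_add {a z : ℝ} (ha : 0 < a) (j : ℕ) (hz : 0 ≤ z) :
    exitPotential a j z ≤ (Set.Iic a).indicator 1 z + ENNReal.ofReal (j / a ^ 2) := by
  rw [exitPotential, add_div, ENNReal.ofReal_add (by positivity) (by positivity)]
  gcongr
  rcases le_or_gt z a with h | h
  · rw [Set.indicator_of_mem (Set.mem_Iic.2 h), Pi.one_apply, ENNReal.ofReal_le_one,
      div_le_one (by positivity), max_eq_left (by linarith)]
    exact pow_le_pow_left₀ (by linarith) (by linarith) 2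
  · rw [max_eq_right (by linarith)]
    simp

variable {μ} [IsProbabilityMeasure μ]

theorem lintegral_exitPotential_le (hμ : IsStandardized μ) {a : ℝ} (ha : 0 < a) (j : ℕ) (z : ℝ) :
    ∫⁻ y, exitPotential a j (z + y) ∂μ ≤ exitPotential a (j + 1) z := by
  set c := max (a - z) 0 with hc
  have h_sq (y : ℝ) : max (a - (z + y)) 0 ^ 2 ≤ (-c + y) ^ 2 := by
    have h_az : a - z ≤ c := le_max_left _ _
    rcases le_total (a - (z + y)) 0 with h | h
    · rw [max_eq_right h]
      nlinarith [sq_nonneg (-c + y)]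
    · rw [max_eq_left h, ← neg_sq (-c + y)]
      exact pow_le_pow_left₀ h (by linarith) 2
  calc ∫⁻ y, exitPotential a j (z + y) ∂μ
      ≤ ∫⁻ y, ENNReal.ofReal (1 / a ^ 2) * (ENNReal.ofReal ((-c + y) ^ 2) + j) ∂μ := by
        refine lintegral_mono fun y ↦ ?_
        rw [← ENNReal.ofReal_natCast, ← ENNReal.ofReal_add (by positivity) (by positivity),
          ← ENNReal.ofReal_mul (by positivity), one_div_mul_eq_div]
        exact ENNReal.ofReal_le_ofReal
          (div_le_div_of_nonneg_right (add_le_add (h_sq y) le_rfl) (by positivity))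
    _ = ENNReal.ofReal (1 / a ^ 2) * (ENNReal.ofReal (c ^ 2) + 1 + j) := by
        rw [lintegral_const_mul _ (by fun_prop), lintegral_add_right _ (by fun_prop),
          hμ.lintegral_add_sq, lintegral_const, measure_univ, mul_one, neg_sq]
    _ = exitPotential a (j + 1) z := by
        rw [← ENNReal.ofReal_natCast, ← ENNReal.ofReal_one,
          ← ENNReal.ofReal_add (by positivity) (by positivity),
          ← ENNReal.ofReal_add (by positivity) (by positivity),
          ← ENNReal.ofReal_mul (by positivity), exitPotential, ← hc]
        push_cast
        ring_nf

theorem measure_univ_le_iterate_killedStep_add (hμ : IsStandardized μ) {a : ℝ} (ha : 0 < a)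
    (j : ℕ) (ρ : Measure ℝ) [IsFiniteMeasure ρ] :
    ρ Set.univ ≤ (killedStep μ)^[j] ρ Set.univ + ∫⁻ z, exitPotential a j z ∂ρ := by
  induction j generalizing ρ with
  | zero => simp
  | succ j ih =>
    have h_exit : (ρ ∗ μ) (Set.Iic 0) ≤ ∫⁻ z in Set.Iic 0, exitPotential a j z ∂(ρ ∗ μ) := by
      rw [← setLIntegral_one]
      exact setLIntegral_mono (by fun_prop) fun z hz ↦ one_le_exitPotential ha j hz
    have h_split : ∫⁻ z, exitPotential a j z ∂(killedStep μ ρ) +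
        ∫⁻ z in Set.Iic 0, exitPotential a j z ∂(ρ ∗ μ) ≤ ∫⁻ z, exitPotential a (j + 1) z ∂ρ := by
      rw [killedStep, ← Set.compl_Ioi, lintegral_add_compl _ measurableSet_Ioi,
        Measure.lintegral_conv (by fun_prop)]
      exact lintegral_mono fun z ↦ lintegral_exitPotential_le hμ ha j z
    calc ρ Set.univ = (ρ ∗ μ) Set.univ := by
          rw [conv_univ, measure_univ (μ := μ), mul_one]
      _ = killedStep μ ρ Set.univ + (ρ ∗ μ) (Set.Iic 0) := by
          rw [killedStep, Measure.restrict_apply_univ, ← Set.compl_Ioi,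
            measure_add_measure_compl measurableSet_Ioi]
      _ ≤ _ := add_le_add (ih (killedStep μ ρ)) h_exit
      _ ≤ _ := by
          rw [add_assoc, Function.iterate_succ_apply]
          gcongr

variable (μ) in
theorem recentVisitProb_add {n m : ℕ} (h : m ≤ n) :
    recentVisitProb μ n m + (killedStep μ)^[m] (posMaxLaw μ (n - m)) Set.univ = 1 := by
  rw [← posMaxLaw_univ_add_maxAtom μ n, posMaxLaw_eq_add μ h, recentVisitProb, Measure.add_apply]
  ring

theorem recentVisitProb_le (hμ : IsStandardized μ) {a : ℝ} (ha : 0 < a) {n m : ℕ} (h : m ≤ n) :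
    recentVisitProb μ n m ≤ maxLaw μ (n - m) (Set.Iic a) + ENNReal.ofReal (m / a ^ 2) := by
  set κ := (killedStep μ)^[m] (posMaxLaw μ (n - m)) Set.univ
  have h_one : 1 ≤ κ + ∫⁻ z, exitPotential a m z ∂(maxLaw μ (n - m)) := calc
    1 = posMaxLaw μ (n - m) Set.univ + maxAtom μ (n - m) * 1 := by
      rw [mul_one, posMaxLaw_univ_add_maxAtom]
    _ ≤ (κ + ∫⁻ z, exitPotential a m z ∂(posMaxLaw μ (n - m))) +
          maxAtom μ (n - m) * exitPotential a m 0 := by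
      gcongr
      · exact measure_univ_le_iterate_killedStep_add hμ ha m _
      · exact one_le_exitPotential ha m le_rfl
    _ = κ + ∫⁻ z, exitPotential a m z ∂(maxLaw μ (n - m)) := by
      conv_rhs => rw [maxLaw_eq_add]
      rw [lintegral_add_measure, lintegral_smul_measure,
        lintegral_dirac' _ (measurable_exitPotential a m), smul_eq_mul, add_assoc]
  have h_nonneg : ∀ᵐ z ∂maxLaw μ (n - m), 0 ≤ z := by
    simpa [ae_iff, Set.Iio] using maxLaw_Iio_zero μ (n - m)
  rw [← recentVisitProb_add μ h, add_comm] at h_one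
  calc recentVisitProb μ n m ≤ ∫⁻ z, exitPotential a m z ∂(maxLaw μ (n - m)) :=
        (ENNReal.add_le_add_iff_left (by finiteness)).1 h_one
    _ ≤ ∫⁻ z, ((Set.Iic a).indicator 1 z + ENNReal.ofReal (m / a ^ 2)) ∂(maxLaw μ (n - m)) :=
        lintegral_mono_ae (h_nonneg.mono fun z ↦ exitPotential_le_indicator_add ha m)
    _ = _ := by
        rw [lintegral_add_right _ measurable_const, lintegral_indicator_one measurableSet_Iic,
          lintegral_const, measure_univ, mul_one]

theorem mul_measure_Iic_le_conv (ρ ν : Measure ℝ) [SFinite ν] (x y : ℝ) :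
    ρ (Set.Iic x) * ν (Set.Iic y) ≤ (ρ ∗ ν) (Set.Iic (x + y)) := by
  rw [← Measure.prod_prod, Measure.conv, Measure.map_apply (by fun_prop) measurableSet_Iic]
  exact measure_mono fun p hp ↦ show p.1 + p.2 ≤ x + y from add_le_add hp.1 hp.2

variable (μ) in
theorem mul_le_recentVisitProb {n m : ℕ} (h : m ≤ n) (hm : 1 ≤ m) (t : ℝ) :
    maxLaw μ (n - m) (Set.Iic t) * convPow μ m (Set.Iic (-t)) ≤ recentVisitProb μ n m := by
  set ρ := posMaxLaw μ (n - m)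
  have h_killed : (killedStep μ)^[m] ρ Set.univ ≤ (maxLaw μ (n - m) ∗ convPow μ m) (Set.Ioi 0) :=
    calc (killedStep μ)^[m] ρ Set.univ = (killedStep μ)^[m] ρ (Set.Ioi 0) := by
          obtain ⟨d, rfl⟩ := Nat.exists_eq_add_of_le' hm
          simp [Function.iterate_succ_apply', killedStep]
      _ ≤ _ := (iterate_killedStep_le μ ρ m).trans (conv_mono Measure.restrict_le_self le_rfl) _
  have h_compl : (maxLaw μ (n - m) ∗ convPow μ m) (Set.Iic 0) +
      (maxLaw μ (n - m) ∗ convPow μ m) (Set.Ioi 0) = 1 := by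
    rw [← Set.compl_Iic, prob_add_prob_compl measurableSet_Iic]
  have h_prod := mul_measure_Iic_le_conv (maxLaw μ (n - m)) (convPow μ m) t (-t)
  rw [add_neg_cancel] at h_prod
  refine h_prod.trans ((ENNReal.add_le_add_iff_right (by finiteness :
    (killedStep μ)^[m] ρ Set.univ ≠ ⊤)).1 ?_)
  rw [recentVisitProb_add μ h, ← h_compl]
  gcongr

variable (μ) in
theorem maxAtom_mul_recentVisitProb_le {n m : ℕ} (h : m ≤ n) :
    maxAtom μ n * recentVisitProb μ (2 * m) m ≤ maxAtom μ m * recentVisitProb μ n m := by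
  set g : ℝ≥0∞ := 1 + ∑ k ∈ Finset.range m, killedLaw μ (k + 1) Set.univ with hg
  have h_lower : maxAtom μ n * g ≤ recentVisitProb μ n m := by
    simp only [recentVisitProb, recentLaw, hg, mul_add, mul_one, Finset.mul_sum,
      Measure.coe_finsetSum, Finset.sum_apply, Measure.smul_apply, smul_eq_mul]
    gcongr
    exact maxAtom_antitone μ (by omega)
  have h_upper : recentVisitProb μ (2 * m) m ≤ maxAtom μ m * g := by
    simp only [recentVisitProb, recentLaw, hg, mul_add, mul_one, Finset.mul_sum,
      Measure.coe_finsetSum, Finset.sum_apply, Measure.smul_apply, smul_eq_mul]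
    gcongr with k hk
    · exact maxAtom_antitone μ (by omega)
    · exact maxAtom_antitone μ (by have := Finset.mem_range.1 hk; omega)
  calc maxAtom μ n * recentVisitProb μ (2 * m) m ≤ maxAtom μ n * (maxAtom μ m * g) := by gcongr
    _ = maxAtom μ m * (maxAtom μ n * g) := mul_left_comm _ _ _
    _ ≤ _ := by gcongr

theorem gaussianTail_strictAnti : StrictAnti gaussianTail := fun x y hxy ↦ by
  have h_pos : 0 < gaussianReal 0 1 (Set.Ioc x y) := by
    refine pos_iff_ne_zero.2 fun h ↦ ?_
    have h_vol := gaussianReal_absolutelyContinuous' 0 (v := 1) one_ne_zero h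
    rw [Real.volume_Ioc, ENNReal.ofReal_eq_zero] at h_vol
    linarith
  rw [gaussianTail, gaussianTail, ← Set.Ioc_union_Ioi_eq_Ioi hxy.le, measureReal_union
    (Set.Ioc_disjoint_Ioi le_rfl) measurableSet_Ioi]
  exact lt_add_of_pos_left _ (ENNReal.toReal_pos h_pos.ne' (measure_ne_top _ _))

theorem exists_eventually_le_recentVisitProb (hμ : IsStandardized μ) :
    ∃ c : ℝ, 0 < c ∧ ∀ᶠ m : ℕ in atTop, ENNReal.ofReal c ≤ recentVisitProb μ (2 * m) m := by
  have h_max : 0 < 1 - 2 * gaussianTail 1 := by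
    linarith [gaussianTail_strictAnti zero_lt_one, gaussianTail_zero]
  have h_sum : 0 < 1 - gaussianTail (-1) := sub_pos.2 <|
    (gaussianTail_strictAnti (show (-2 : ℝ) < -1 by norm_num)).trans_le measureReal_le_one
  obtain ⟨c, hc, hc_lt⟩ := exists_between (mul_pos h_max h_sum)
  refine ⟨c, hc, ?_⟩
  have h_lim := ((tendsto_maxLaw_Ioi hμ zero_le_one).const_sub 1).mul
    ((tendsto_convPow_Ioi hμ (-1)).const_sub 1)
  filter_upwards [h_lim.eventually_const_lt hc_lt, eventually_ge_atTop 1] with m h_lt hm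
  have h_le := mul_le_recentVisitProb μ (Nat.le_mul_of_pos_left m two_pos) hm (1 * √m)
  rw [two_mul, Nat.add_sub_cancel, ← two_mul, ← neg_one_mul, ← mul_assoc, mul_one (-1 : ℝ)] at h_le
  refine le_trans ?_ h_le
  rw [← probReal_compl_eq_one_sub measurableSet_Ioi, ← probReal_compl_eq_one_sub measurableSet_Ioi,
    Set.compl_Ioi, Set.compl_Ioi] at h_lt
  rw [← ofReal_measureReal, ← ofReal_measureReal, ← ENNReal.ofReal_mul measureReal_nonneg]
  exact ENNReal.ofReal_le_ofReal h_lt.le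

theorem eventually_maxLaw_Iic_le (hμ : IsStandardized μ) {j : ℕ} (hj : 1 ≤ j) :
    ∀ᶠ m : ℕ in atTop, maxLaw μ (j ^ 4 * m) (Set.Iic (j * √m)) ≤ ENNReal.ofReal (3 / j) := by
  have hj0 : 0 < 1 / (j : ℝ) := by positivity
  have h_lim := ((tendsto_maxLaw_Ioi hμ hj0.le).comp
    ((strictMono_mul_left_of_pos (show 0 < j ^ 4 by positivity)).tendsto_atTop)).const_sub 1
  have h_lip := gaussianTail_le_add_abs_sub 0 (1 / j)
  rw [gaussianTail_zero, zero_sub, abs_neg, abs_of_pos hj0] at h_lip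
  have h_lt : 1 - 2 * gaussianTail (1 / j) < 3 / j := by
    linarith [div_eq_mul_one_div (3 : ℝ) j]
  filter_upwards [h_lim.eventually_lt_const h_lt] with m hm
  have h_sqrt : 1 / (j : ℝ) * √((j ^ 4 * m : ℕ) : ℝ) = j * √m := by
    push_cast
    rw [Real.sqrt_mul (by positivity), show (j : ℝ) ^ 4 = (j ^ 2) ^ 2 by ring,
      Real.sqrt_sq (by positivity)]
    field_simp
  rw [Function.comp_apply, h_sqrt, ← probReal_compl_eq_one_sub measurableSet_Ioi,
    Set.compl_Ioi] at hm
  rw [← ofReal_measureReal]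
  exact ENNReal.ofReal_le_ofReal hm.le

theorem eventually_recentVisitProb_le (hμ : IsStandardized μ) {j : ℕ} (hj : 1 ≤ j) :
    ∀ᶠ m : ℕ in atTop, ∀ n, (j ^ 4 + 1) * m ≤ n →
      recentVisitProb μ n m ≤ ENNReal.ofReal (4 / j) := by
  filter_upwards [eventually_maxLaw_Iic_le hμ hj, eventually_ge_atTop 1] with m h_small hm n hn
  have h_level : 0 < j * √(m : ℝ) := by positivity
  have h_time : j ^ 4 * m ≤ n - m := by
    rw [add_mul, one_mul] at hn
    omega
  have h_Iic : maxLaw μ (n - m) (Set.Iic (j * √m)) ≤ maxLaw μ (j ^ 4 * m) (Set.Iic (j * √m)) := by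
    rw [← Set.compl_Ioi, prob_compl_eq_one_sub measurableSet_Ioi,
      prob_compl_eq_one_sub measurableSet_Ioi]
    exact tsub_le_tsub_left
      (monotone_nat_of_le_succ (fun k ↦ maxLaw_Ioi_le_succ μ k (j * √m)) h_time) 1
  have h_drift : (m : ℝ) / (j * √m) ^ 2 ≤ 1 / j := by
    rw [mul_pow, Real.sq_sqrt m.cast_nonneg, div_le_div_iff₀ (by positivity) (by positivity)]
    have h_j : (1 : ℝ) ≤ j := by exact_mod_cast hj
    nlinarith [mul_nonneg (mul_nonneg m.cast_nonneg j.cast_nonneg) (sub_nonneg.2 h_j)]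
  calc recentVisitProb μ n m
      ≤ maxLaw μ (n - m) (Set.Iic (j * √m)) + ENNReal.ofReal (m / (j * √m) ^ 2) :=
        recentVisitProb_le hμ h_level ((Nat.le_mul_of_pos_left m (by positivity)).trans hn)
    _ ≤ ENNReal.ofReal (3 / j) + ENNReal.ofReal (1 / j) :=
        add_le_add (h_Iic.trans h_small) (ENNReal.ofReal_le_ofReal h_drift)
    _ = ENNReal.ofReal (4 / j) := by
        rw [← ENNReal.ofReal_add (by positivity) (by positivity)]
        ring_nf

theorem exists_eventually_maxAtom_le (hμ : IsStandardized μ) :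
    ∃ C : ℝ, 0 < C ∧ ∀ j : ℕ, 1 ≤ j → ∀ᶠ m : ℕ in atTop,
      maxAtom μ ((j ^ 4 + 1) * m) ≤ ENNReal.ofReal (C / j) * maxAtom μ m := by
  obtain ⟨c, hc, h_lower⟩ := exists_eventually_le_recentVisitProb hμ
  refine ⟨4 / c, by positivity, fun j hj ↦ ?_⟩
  filter_upwards [h_lower, eventually_recentVisitProb_le hμ hj] with m h_lower h_upper
  have h_le : maxAtom μ ((j ^ 4 + 1) * m) * ENNReal.ofReal c ≤
      maxAtom μ m * ENNReal.ofReal (4 / j) := calc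
    _ ≤ maxAtom μ ((j ^ 4 + 1) * m) * recentVisitProb μ (2 * m) m := by gcongr
    _ ≤ maxAtom μ m * recentVisitProb μ ((j ^ 4 + 1) * m) m :=
      maxAtom_mul_recentVisitProb_le μ (Nat.le_mul_of_pos_left m (by positivity))
    _ ≤ _ := by
      gcongr
      exact h_upper _ le_rfl
  rw [div_right_comm, ENNReal.ofReal_div_of_pos hc, mul_comm (_ / _), ← mul_div_assoc,
    ENNReal.le_div_iff_mul_le (Or.inl (by simpa using hc)) (Or.inl (by finiteness))]
  exact h_le

end RecentVisit

section TotalVariation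

variable {α β : Type*} [MeasurableSpace α] [MeasurableSpace β] {μ ν ρ κ : Measure α} {ε δ : ℝ}

/-- The total variation distance of `μ` and `ν`, normalised as the supremum of
`|∫ F dμ - ∫ F dν|` over measurable `|F| ≤ 1`, is at most `ε`. -/
def TVDistLE (μ ν : Measure α) (ε : ℝ) : Prop :=
  ∀ F : α → ℝ, Measurable F → (∀ x, |F x| ≤ 1) → |∫ x, F x ∂μ - ∫ x, F x ∂ν| ≤ ε

theorem integrable_of_abs_le_one (μ : Measure α) [IsFiniteMeasure μ] {F : α → ℝ}
    (hF : Measurable F) (hF1 : ∀ x, |F x| ≤ 1) : Integrable F μ :=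
  Integrable.of_bound hF.aestronglyMeasurable 1 (ae_of_all _ hF1)

theorem abs_integral_le_measureReal (μ : Measure α) [IsFiniteMeasure μ] {F : α → ℝ} {c : ℝ}
    (hF : ∀ᵐ x ∂μ, |F x| ≤ c) : |∫ x, F x ∂μ| ≤ c * μ.real Set.univ := by
  rw [← Real.norm_eq_abs]
  exact norm_integral_le_of_norm_le_const hF

theorem TVDistLE.mono (h : TVDistLE μ ν ε) (hεδ : ε ≤ δ) : TVDistLE μ ν δ :=
  fun F hF hF1 ↦ (h F hF hF1).trans hεδ

theorem TVDistLE.symm (h : TVDistLE μ ν ε) : TVDistLE ν μ ε :=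
  fun F hF hF1 ↦ abs_sub_comm (∫ x, F x ∂μ) _ ▸ h F hF hF1

theorem TVDistLE.trans (h : TVDistLE μ ν ε) (h' : TVDistLE ν ρ δ) : TVDistLE μ ρ (ε + δ) :=
  fun F hF hF1 ↦ (abs_sub_le _ _ _).trans (add_le_add (h F hF hF1) (h' F hF hF1))

theorem TVDistLE.add {μ' ν' : Measure α} [IsFiniteMeasure μ] [IsFiniteMeasure ν]
    [IsFiniteMeasure μ'] [IsFiniteMeasure ν'] (h : TVDistLE μ ν ε) (h' : TVDistLE μ' ν' δ) :
    TVDistLE (μ + μ') (ν + ν') (ε + δ) := by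
  intro F hF hF1
  have hint (π : Measure α) [IsFiniteMeasure π] := integrable_of_abs_le_one π hF hF1
  rw [integral_add_measure (hint μ) (hint μ'), integral_add_measure (hint ν) (hint ν'),
    add_sub_add_comm]
  exact (abs_add_le _ _).trans (add_le_add (h F hF hF1) (h' F hF hF1))

theorem tvDistLE_of_le [IsFiniteMeasure ν] (h : μ ≤ ν) :
    TVDistLE μ ν (ν.real Set.univ - μ.real Set.univ) := by
  have := isFiniteMeasure_of_le ν h
  have hsum : ν = μ + (ν - μ) := by rw [add_comm, Measure.sub_add_cancel_of_le h]
  intro F hF hF1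
  have hint (π : Measure α) [IsFiniteMeasure π] := integrable_of_abs_le_one π hF hF1
  have hF' := abs_integral_le_measureReal (ν - μ) (ae_of_all _ hF1)
  have hmass : ν.real Set.univ = μ.real Set.univ + (ν - μ).real Set.univ := by
    rw [← measureReal_add_apply, ← hsum]
  have hF'' : ∫ x, F x ∂ν = ∫ x, F x ∂μ + ∫ x, F x ∂(ν - μ) := by
    rw [← integral_add_measure (hint _) (hint _), ← hsum]
  rw [abs_sub_comm, hF'', hmass, add_sub_cancel_left, add_sub_cancel_left]
  linarith

theorem TVDistLE.map (h : TVDistLE μ ν ε) {f : α → β} (hf : Measurable f) :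
    TVDistLE (μ.map f) (ν.map f) ε := by
  intro F hF hF1
  rw [integral_map hf.aemeasurable hF.aestronglyMeasurable,
    integral_map hf.aemeasurable hF.aestronglyMeasurable]
  exact h _ (hF.comp hf) fun x ↦ hF1 _

theorem TVDistLE.abs_measureReal_sub_le (h : TVDistLE μ ν ε) {s : Set α} (hs : MeasurableSet s) :
    |μ.real s - ν.real s| ≤ ε := by
  rw [← integral_indicator_one hs, ← integral_indicator_one hs]
  refine h _ (measurable_one.indicator hs) fun x ↦ ?_
  by_cases hx : x ∈ s <;> simp [hx]

theorem TVDistLE.abs_integral_sub_le_mul (h : TVDistLE μ ν ε) {F : α → ℝ} {M : ℝ} (hM : 0 < M)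
    (hF : Measurable F) (hFM : ∀ x, |F x| ≤ M) :
    |∫ x, F x ∂μ - ∫ x, F x ∂ν| ≤ M * ε := by
  have hscaled := h (fun x ↦ F x / M) (hF.div_const M) fun x ↦ by
    rw [abs_div, abs_of_pos hM]
    exact div_le_one_of_le₀ (hFM x) hM.le
  rwa [integral_div, integral_div, ← sub_div, abs_div, abs_of_pos hM, div_le_iff₀' hM]
    at hscaled

theorem tvDistLE_withDensity {p q : α → ℝ} (hp : Integrable p μ) (hq : Integrable q μ)
    (hp_meas : Measurable p) (hq_meas : Measurable q) (hp0 : 0 ≤ p) (hq0 : 0 ≤ q) :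
    TVDistLE (μ.withDensity fun x ↦ .ofReal (p x)) (μ.withDensity fun x ↦ .ofReal (q x))
      (∫ x, |p x - q x| ∂μ) := by
  intro F hF hF1
  have hint {r : α → ℝ} (hr : Integrable r μ) : Integrable (fun x ↦ r x * F x) μ :=
    hr.mul_bdd (c := 1) hF.aestronglyMeasurable (ae_of_all _ hF1)
  have hdens {r : α → ℝ} (hr : Measurable r) (hr0 : 0 ≤ r) :
      ∫ x, F x ∂(μ.withDensity fun x ↦ .ofReal (r x)) = ∫ x, r x * F x ∂μ := by
    rw [integral_withDensity_eq_integral_toReal_smul (by fun_prop) (by simp)]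
    simp only [ENNReal.toReal_ofReal (hr0 _), smul_eq_mul]
  rw [hdens hp_meas hp0, hdens hq_meas hq0, ← integral_sub (hint hp) (hint hq)]
  refine norm_integral_le_of_norm_le (f := fun x ↦ p x * F x - q x * F x) (hp.sub hq).abs
    (ae_of_all _ fun x ↦ ?_)
  rw [Real.norm_eq_abs, ← sub_mul, abs_mul]
  exact mul_le_of_le_one_right (abs_nonneg _) (hF1 x)

theorem TVDistLE.exists_le_le [IsFiniteMeasure μ] [IsFiniteMeasure ν] (h : TVDistLE μ ν ε) :
    ∃ κ : Measure α, κ ≤ μ ∧ κ ≤ ν ∧ μ.real Set.univ - ε ≤ κ.real Set.univ := by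
  obtain ⟨s, hs⟩ := exists_isHahnDecomposition μ ν
  have hsplit (π : Measure α) : π.restrict s + π.restrict sᶜ = π :=
    Measure.restrict_add_restrict_compl hs.measurableSet
  refine ⟨μ.restrict s + ν.restrict sᶜ, (add_le_add le_rfl hs.ge_on_compl).trans_eq (hsplit μ),
    (add_le_add hs.le_on le_rfl).trans_eq (hsplit ν), ?_⟩
  have hsc := (le_abs_self _).trans (h.abs_measureReal_sub_le hs.measurableSet.compl)
  rw [measureReal_add_apply, measureReal_restrict_apply_univ, measureReal_restrict_apply_univ]
  linarith [measureReal_add_measureReal_compl (μ := μ) hs.measurableSet]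

end TotalVariation

section TotalVariationConvolution

variable {G : Type*} [AddCommMonoid G] [MeasurableSpace G] [MeasurableAdd₂ G]
  {μ ν ρ κ : Measure G} {ε : ℝ}

theorem TVDistLE.dirac_conv [IsFiniteMeasure μ] [IsFiniteMeasure ν] (h : TVDistLE μ ν ε) (s : G) :
    TVDistLE (Measure.dirac s ∗ μ) (Measure.dirac s ∗ ν) ε := by
  simpa only [Measure.dirac_conv] using h.map (measurable_const_add s)

theorem integral_conv_eq_integral_dirac_conv [IsFiniteMeasure κ] [IsFiniteMeasure μ] {F : G → ℝ}
    (hF : Measurable F) (hF1 : ∀ x, |F x| ≤ 1) :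
    Integrable (fun s ↦ ∫ x, F x ∂(Measure.dirac s ∗ μ)) κ ∧
      ∫ x, F x ∂(κ ∗ μ) = ∫ s, ∫ x, F x ∂(Measure.dirac s ∗ μ) ∂κ := by
  have hint : Integrable (fun p : G × G ↦ F (p.1 + p.2)) (κ.prod μ) :=
    integrable_of_abs_le_one _ (hF.comp measurable_add) fun _ ↦ hF1 _
  have hshift (s : G) : ∫ x, F x ∂(Measure.dirac s ∗ μ) = ∫ x, F (s + x) ∂μ := by
    rw [Measure.dirac_conv, integral_map (by fun_prop) hF.aestronglyMeasurable]
  simp only [hshift]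
  exact ⟨hint.integral_prod_left, integral_conv (integrable_of_abs_le_one _ hF hF1)⟩

theorem TVDistLE.conv_left [IsFiniteMeasure κ] [IsFiniteMeasure μ] [IsFiniteMeasure ν]
    (h : TVDistLE μ ν ε) : TVDistLE (κ ∗ μ) (κ ∗ ν) (ε * κ.real Set.univ) := by
  intro F hF hF1
  obtain ⟨hμ_int, hμ⟩ := integral_conv_eq_integral_dirac_conv (κ := κ) (μ := μ) hF hF1
  obtain ⟨hν_int, hν⟩ := integral_conv_eq_integral_dirac_conv (κ := κ) (μ := ν) hF hF1
  rw [hμ, hν, ← integral_sub hμ_int hν_int]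
  exact abs_integral_le_measureReal κ (ae_of_all _ fun s ↦ h.dirac_conv s F hF hF1)

theorem tvDistLE_conv_of_ae [IsProbabilityMeasure κ] [IsFiniteMeasure μ]
    (h : ∀ᵐ s ∂κ, TVDistLE (Measure.dirac s ∗ μ) ν ε) : TVDistLE (κ ∗ μ) ν ε := by
  intro F hF hF1
  obtain ⟨hμ_int, hμ⟩ := integral_conv_eq_integral_dirac_conv (κ := κ) (μ := μ) hF hF1
  have hν : ∫ x, F x ∂ν = ∫ _, ∫ x, F x ∂ν ∂κ := by simp
  rw [hμ, hν, ← integral_sub hμ_int (integrable_const _)]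
  simpa using abs_integral_le_measureReal κ (h.mono fun s hs ↦ hs F hF hF1)

theorem TVDistLE.nsmul_dirac_conv [IsFiniteMeasure μ] {s : G}
    (h : TVDistLE (Measure.dirac s ∗ μ) μ ε) (k : ℕ) :
    TVDistLE (Measure.dirac (k • s) ∗ μ) μ (k * ε) := by
  induction k with
  | zero => intro F _ _; simp
  | succ k ih =>
    have hstep := (ih.dirac_conv s).trans h
    rw [← Measure.conv_assoc, Measure.dirac_conv_dirac, ← succ_nsmul'] at hstep
    exact hstep.mono (by push_cast; linarith)

end TotalVariationConvolution

section ConvolutionDensity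

theorem conv_withDensity {G : Type*} [AddGroup G] [MeasurableSpace G] [MeasurableAdd₂ G]
    [MeasurableNeg G] (ν π : Measure G) [SFinite ν] [SFinite π] [π.IsAddLeftInvariant]
    {f : G → ℝ≥0∞} (hf : Measurable f) :
    ν ∗ π.withDensity f = π.withDensity fun y ↦ ∫⁻ x, f (-x + y) ∂ν := by
  refine Measure.ext_of_lintegral _ fun g hg ↦ ?_
  have hdens : Measurable fun y ↦ ∫⁻ x, f (-x + y) ∂ν :=
    Measurable.lintegral_prod_right' (f := fun z : G × G ↦ f (-z.2 + z.1)) (by fun_prop)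
  have htranslate (x : G) :
      ∫⁻ y, g (x + y) ∂(π.withDensity f) = ∫⁻ y, f (-x + y) * g y ∂π := by
    rw [lintegral_withDensity_eq_lintegral_mul _ hf (by fun_prop),
      ← lintegral_add_left_eq_self (fun y ↦ f (-x + y) * g y) x]
    simp only [Pi.mul_apply, neg_add_cancel_left]
  rw [Measure.lintegral_conv hg, lintegral_withDensity_eq_lintegral_mul _ hdens hg]
  simp only [htranslate, Pi.mul_apply]
  rw [lintegral_lintegral_swap (by fun_prop)]
  exact lintegral_congr fun y ↦ lintegral_mul_const _ (by fun_prop)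

theorem conv_eq_smul_of_isAddLeftInvariant {G : Type*} [AddGroup G] [MeasurableSpace G]
    [MeasurableAdd₂ G] (ν π : Measure G) [SFinite π] [π.IsAddLeftInvariant] :
    ν ∗ π = ν Set.univ • π := by
  refine Measure.ext_of_lintegral _ fun g hg ↦ ?_
  simp [Measure.lintegral_conv hg, lintegral_add_left_eq_self, mul_comm]

theorem conv_volume_restrict (ν : Measure ℝ) [SFinite ν] {s : Set ℝ} (hs : MeasurableSet s) :
    ν ∗ volume.restrict s = volume.withDensity fun y ↦ ν ((fun x ↦ y - x) ⁻¹' s) := by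
  rw [← withDensity_indicator_one hs, conv_withDensity _ _ (measurable_one.indicator hs)]
  congr 1 with y
  have hpre : MeasurableSet ((fun x ↦ y - x) ⁻¹' s) := hs.preimage (by fun_prop)
  rw [← lintegral_indicator_one hpre]
  refine lintegral_congr fun x ↦ ?_
  rw [neg_add_eq_sub]
  rfl

theorem tendsto_integral_abs_comp_add_sub {p : ℝ → ℝ} (hp : Integrable p) :
    Tendsto (fun h : ℝ ↦ ∫ x, |p (x + h) - p x|) (nhds 0) (nhds 0) := by
  have hmp (h : ℝ) : MeasurePreserving (· + h) volume volume := measurePreserving_add_right volume h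
  have hcont : Continuous fun h : ℝ ↦ (⟨(· + h), by fun_prop⟩ : C(ℝ, ℝ)) :=
    ContinuousMap.continuous_of_continuous_uncurry _
      (by change Continuous fun z : ℝ × ℝ ↦ z.2 + z.1; fun_prop)
  let T (h : ℝ) : Lp ℝ 1 volume := Lp.compMeasurePreserving (· + h) (hmp h) (hp.toL1 p)
  have hT : Continuous T := continuous_const.compMeasurePreservingLp hcont hmp ENNReal.one_ne_top
  have hT_apply (h : ℝ) : T h =ᵐ[volume] fun x ↦ p (x + h) :=
    (Lp.coeFn_compMeasurePreserving _ (hmp h)).trans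
      ((hmp h).quasiMeasurePreserving.ae_eq_comp hp.coeFn_toL1)
  have hnorm (h : ℝ) : ‖T h - T 0‖ = ∫ x, |p (x + h) - p x| := by
    rw [L1.norm_eq_integral_norm]
    refine integral_congr_ae ?_
    filter_upwards [Lp.coeFn_sub (T h) (T 0), hT_apply h, hT_apply 0] with x hsub hh h0
    rw [hsub, Pi.sub_apply, hh, h0, add_zero, Real.norm_eq_abs]
  simpa [hnorm] using ((hT.sub (continuous_const (y := T 0))).norm).tendsto 0

theorem exists_tvDistLE_dirac_conv {ν : Measure ℝ} [IsFiniteMeasure ν] (hν : ν ≪ volume) {ε : ℝ}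
    (hε : 0 < ε) : ∃ a > 0, ∀ s : ℝ, |s| ≤ a → TVDistLE (Measure.dirac s ∗ ν) ν ε := by
  let p (x : ℝ) : ℝ := (ν.rnDeriv volume x).toReal
  have hp : Integrable p := Measure.integrable_toReal_rnDeriv
  have hp_meas : Measurable p := (Measure.measurable_rnDeriv _ _).ennreal_toReal
  have hp0 (x : ℝ) : 0 ≤ p x := ENNReal.toReal_nonneg
  have hdens : volume.withDensity (fun x ↦ ENNReal.ofReal (p x)) = ν := by
    refine .trans (withDensity_congr_ae ?_) (Measure.withDensity_rnDeriv_eq ν volume hν)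
    filter_upwards [Measure.rnDeriv_lt_top ν volume] with x hx
    exact ENNReal.ofReal_toReal hx.ne
  obtain ⟨a, ha, hlt⟩ := Metric.eventually_nhds_iff.1
    ((tendsto_integral_abs_comp_add_sub hp).eventually_lt_const hε)
  refine ⟨a / 2, half_pos ha, fun s hs ↦ ?_⟩
  have hshift : Measure.dirac s ∗ ν = volume.withDensity fun x ↦ ENNReal.ofReal (p (x + -s)) := by
    conv_lhs => rw [← hdens]
    rw [conv_withDensity _ _ (by fun_prop)]
    simp only [lintegral_dirac, add_comm]
  have htv := tvDistLE_withDensity (hp.comp_add_right (-s)) hp (by fun_prop) hp_meas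
    (fun x ↦ hp0 _) hp0
  rw [hdens, ← hshift] at htv
  exact htv.mono (hlt (by rw [Real.dist_eq, sub_zero, abs_neg]; linarith)).le

end ConvolutionDensity

section SignWalk

/-- The law of `±a` with equal probabilities, the step law of the simple random walk on `aℤ`. -/
noncomputable def signLaw (a : ℝ) : Measure ℝ :=
  (2⁻¹ : ℝ≥0∞) • (Measure.dirac a + Measure.dirac (-a))

instance isProbabilityMeasure_signLaw (a : ℝ) : IsProbabilityMeasure (signLaw a) :=
  ⟨by simp [signLaw, ENNReal.inv_two_add_inv_two]⟩

theorem convPow_signLaw_succ (a : ℝ) (n : ℕ) :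
    convPow (signLaw a) (n + 1) = (2⁻¹ : ℝ≥0∞) •
      ((convPow (signLaw a) n).map (· + a) + (convPow (signLaw a) n).map (· + -a)) := by
  rw [convPow_succ]
  nth_rw 2 [signLaw]
  rw [Measure.conv_smul_right, Measure.conv_add, Measure.conv_dirac, Measure.conv_dirac]

variable {F : ℝ → ℝ}

theorem integrable_convPow_signLaw (a : ℝ) (n : ℕ) (hF : Measurable F) :
    Integrable F (convPow (signLaw a) n) := by
  induction n generalizing F with
  | zero =>
    rw [convPow_zero]
    exact integrable_dirac (by simp)
  | succ n ih =>
    have hshift (b : ℝ) : Integrable F ((convPow (signLaw a) n).map (· + b)) :=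
      (integrable_map_measure hF.aestronglyMeasurable (by fun_prop)).2
        (ih (hF.comp (measurable_add_const b)))
    rw [convPow_signLaw_succ]
    exact ((hshift a).add_measure (hshift (-a))).smul_measure (by simp)

theorem integral_convPow_signLaw_succ (a : ℝ) (n : ℕ) (hF : Measurable F) :
    ∫ x, F x ∂(convPow (signLaw a) (n + 1)) =
      (∫ x, F (x + a) ∂(convPow (signLaw a) n) +
        ∫ x, F (x + -a) ∂(convPow (signLaw a) n)) / 2 := by
  have hshift (b : ℝ) : Integrable F ((convPow (signLaw a) n).map (· + b)) :=
    (integrable_map_measure hF.aestronglyMeasurable (by fun_prop)).2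
      (integrable_convPow_signLaw a n (hF.comp (measurable_add_const b)))
  rw [convPow_signLaw_succ, integral_smul_measure, integral_add_measure (hshift a) (hshift (-a)),
    integral_map (by fun_prop) hF.aestronglyMeasurable,
    integral_map (by fun_prop) hF.aestronglyMeasurable]
  simp [div_eq_inv_mul]

theorem integral_id_mul_convPow_signLaw_succ (a : ℝ) (n : ℕ) (hF : Measurable F) :
    ∫ x, x * F x ∂(convPow (signLaw a) (n + 1)) =
      (n + 1) * a / 2 * (∫ x, F (x + a) ∂(convPow (signLaw a) n) -
        ∫ x, F (x + -a) ∂(convPow (signLaw a) n)) := by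
  have hstep (n : ℕ) {F : ℝ → ℝ} (hF : Measurable F) :
      ∫ x, x * F x ∂(convPow (signLaw a) (n + 1)) =
        (∫ x, x * F (x + a) ∂(convPow (signLaw a) n) +
          ∫ x, x * F (x + -a) ∂(convPow (signLaw a) n)) / 2 +
        a / 2 * (∫ x, F (x + a) ∂(convPow (signLaw a) n) -
          ∫ x, F (x + -a) ∂(convPow (signLaw a) n)) := by
    have hsplit (b : ℝ) : ∫ x, (x + b) * F (x + b) ∂(convPow (signLaw a) n) =
        ∫ x, x * F (x + b) ∂(convPow (signLaw a) n) +
          b * ∫ x, F (x + b) ∂(convPow (signLaw a) n) := by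
      rw [← integral_const_mul, ← integral_add (integrable_convPow_signLaw a n (by fun_prop))
        (integrable_convPow_signLaw a n (by fun_prop))]
      simp only [add_mul]
    rw [integral_convPow_signLaw_succ a n (by fun_prop), hsplit, hsplit]
    ring
  rw [hstep n hF]
  induction n generalizing F with
  | zero => simp [convPow_zero]
  | succ n ih =>
    have hshift (b : ℝ) : Measurable fun x ↦ F (x + b) := hF.comp (measurable_add_const b)
    have hcomm : ∫ x, F (x + a + -a) ∂(convPow (signLaw a) n) =
        ∫ x, F (x + -a + a) ∂(convPow (signLaw a) n) := by simp only [add_right_comm]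
    rw [hstep n (hshift a), hstep n (hshift (-a)), ih (hshift a), ih (hshift (-a)),
      integral_convPow_signLaw_succ a n (hshift a),
      integral_convPow_signLaw_succ a n (hshift (-a)), hcomm]
    push_cast
    ring

theorem integral_sq_convPow_signLaw (a : ℝ) (n : ℕ) :
    ∫ x, x ^ 2 ∂(convPow (signLaw a) n) = n * a ^ 2 := by
  cases n with
  | zero => simp [convPow_zero]
  | succ n =>
    have hshift (b : ℝ) : ∫ x, x + b ∂(convPow (signLaw a) n) =
        ∫ x, x ∂(convPow (signLaw a) n) + b := by
      rw [integral_add (integrable_convPow_signLaw a n (by fun_prop)) (integrable_const b)]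
      simp
    simp only [pow_two]
    rw [integral_id_mul_convPow_signLaw_succ a n measurable_id', hshift, hshift]
    push_cast
    ring

theorem abs_integral_id_mul_convPow_signLaw_le (a : ℝ) (n : ℕ) (hF1 : ∀ x, |F x| ≤ 1) :
    |∫ x, x * F x ∂(convPow (signLaw a) n)| ≤ √n * |a| := by
  set c := √n * |a| with hc
  have hc0 : 0 ≤ c := by positivity
  have hc_sq : c ^ 2 = n * a ^ 2 := by rw [hc, mul_pow, Real.sq_sqrt n.cast_nonneg, sq_abs]
  have hmemLp : MemLp (fun x ↦ |x|) 2 (convPow (signLaw a) n) :=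
    (memLp_two_iff_integrable_sq (by fun_prop)).2 (integrable_convPow_signLaw a n (by fun_prop))
  have habs : |∫ x, x * F x ∂(convPow (signLaw a) n)| ≤
      ∫ x, |x| ∂(convPow (signLaw a) n) := by
    rw [← Real.norm_eq_abs]
    refine norm_integral_le_of_norm_le
      (integrable_convPow_signLaw a n (F := fun x ↦ |x|) measurable_norm) (ae_of_all _ fun x ↦ ?_)
    rw [Real.norm_eq_abs, abs_mul]
    exact mul_le_of_le_one_right (abs_nonneg x) (hF1 x)
  have hvar := variance_nonneg (fun x ↦ |x|) (convPow (signLaw a) n)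
  rw [variance_eq_sub hmemLp] at hvar
  simp only [Pi.pow_apply, sq_abs, integral_sq_convPow_signLaw] at hvar
  exact habs.trans (abs_le_of_sq_le_sq' (by linarith) hc0).2

theorem tvDistLE_dirac_conv_convPow_signLaw (a : ℝ) (n : ℕ) :
    TVDistLE (Measure.dirac a ∗ convPow (signLaw a) n)
      (Measure.dirac (-a) ∗ convPow (signLaw a) n) (2 / √(n + 1)) := by
  rcases eq_or_ne a 0 with rfl | ha
  · intro F _ _
    rw [neg_zero, sub_self, abs_zero]
    positivity
  intro F hF hF1
  have hshift (b : ℝ) : ∫ x, F x ∂(Measure.dirac b ∗ convPow (signLaw a) n) =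
      ∫ x, F (x + b) ∂(convPow (signLaw a) n) := by
    rw [Measure.dirac_conv, integral_map (by fun_prop) hF.aestronglyMeasurable]
    simp only [add_comm]
  have hbias := abs_integral_id_mul_convPow_signLaw_le a (n + 1) hF1
  rw [integral_id_mul_convPow_signLaw_succ a n hF, ← hshift, ← hshift, abs_mul, abs_div,
    abs_mul, Nat.cast_succ, abs_two, abs_of_nonneg (by positivity : (0 : ℝ) ≤ n + 1)] at hbias
  have ha' : 0 < |a| := abs_pos.2 ha
  have hroot : 0 < √((n : ℝ) + 1) := by positivity
  rw [← Real.mul_self_sqrt (by positivity : (0 : ℝ) ≤ n + 1),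
    Real.sqrt_mul_self (Real.sqrt_nonneg _)] at hbias
  rw [le_div_iff₀ hroot]
  refine le_of_mul_le_mul_left ?_ (by positivity : 0 < √((n : ℝ) + 1) * |a|)
  linarith

end SignWalk

section Smoothing

variable {μ : Measure ℝ} [IsProbabilityMeasure μ]

theorem exists_eq_add_conv_signLaw (hμ : μ ≪ volume) :
    ∃ a₀ > 0, ∀ a, |a| ≤ a₀ → ∃ ρ κ : Measure ℝ,
      IsFiniteMeasure κ ∧ μ = ρ + κ ∗ signLaw a ∧ 1 / 2 ≤ κ.real Set.univ := by
  obtain ⟨a₀, ha₀, hshift⟩ := exists_tvDistLE_dirac_conv hμ (by norm_num : (0 : ℝ) < 1 / 4)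
  refine ⟨a₀, ha₀, fun a ha ↦ ?_⟩
  have htv : TVDistLE (Measure.dirac a ∗ μ) (Measure.dirac (-a) ∗ μ) (1 / 4 + 1 / 4) :=
    (hshift a ha).trans (hshift (-a) (by rwa [abs_neg])).symm
  obtain ⟨κ, hκ, hκ', hmass⟩ := htv.exists_le_le
  have := isFiniteMeasure_of_le _ hκ
  have hback {b : ℝ} (h : κ ≤ Measure.dirac (-b) ∗ μ) : κ ∗ Measure.dirac b ≤ μ := by
    refine (conv_mono h le_rfl).trans_eq ?_
    rw [Measure.conv_comm, ← Measure.conv_assoc, Measure.dirac_conv_dirac, add_neg_cancel,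
      Measure.dirac_zero_conv]
  have hle : κ ∗ signLaw a ≤ μ := by
    rw [signLaw, Measure.conv_smul_right, Measure.conv_add]
    have hsum := add_le_add (hback hκ') (hback (b := -a) (by rwa [neg_neg]))
    refine (_root_.smul_le_smul_left (2⁻¹ : ℝ≥0∞) hsum).trans_eq ?_
    rw [← two_smul ℝ≥0∞ μ, smul_smul, ENNReal.inv_mul_cancel two_ne_zero ENNReal.ofNat_ne_top,
      one_smul]
  refine ⟨μ - κ ∗ signLaw a, κ, ‹_›, (Measure.sub_add_cancel_of_le hle).symm, ?_⟩
  rw [probReal_univ] at hmass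
  linarith

theorem weighted_inv_sqrt_le {x w : ℝ} (hx : 1 ≤ x) (hw : 1 / 2 ≤ w) :
    2 / √x * (1 - w) + 2 / √(x + 1) * w ≤ 2 / √(x + 1 / 4) := by
  have hsq {y : ℝ} (hy : 0 ≤ y) : (1 / √y) ^ 2 = 1 / y := by rw [div_pow, Real.sq_sqrt hy, one_pow]
  have hanti : 2 / √(x + 1) ≤ 2 / √x := by gcongr; linarith
  have hmean : (1 / √x + 1 / √(x + 1)) ^ 2 ≤ 2 * (1 / x + 1 / (x + 1)) := by
    nlinarith [sq_nonneg (1 / √x - 1 / √(x + 1)), hsq (by linarith : 0 ≤ x),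
      hsq (by linarith : 0 ≤ x + 1)]
  have hrat : 2 * (1 / x + 1 / (x + 1)) ≤ (2 / √(x + 1 / 4)) ^ 2 := by
    rw [div_pow, Real.sq_sqrt (by linarith), div_add_div _ _ (by linarith) (by linarith),
      ← mul_div_assoc, div_le_div_iff₀ (by nlinarith) (by linarith)]
    nlinarith
  have hsum : 1 / √x + 1 / √(x + 1) ≤ 2 / √(x + 1 / 4) :=
    le_of_sq_le_sq (hmean.trans hrat) (by positivity)
  calc 2 / √x * (1 - w) + 2 / √(x + 1) * w
      ≤ 1 / √x + 1 / √(x + 1) := by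
        rw [← mul_one_div 2 √x, ← mul_one_div 2 √(x + 1)] at *
        nlinarith
    _ ≤ 2 / √(x + 1 / 4) := hsum

/- Mineka's coupling: each factor `μ` contributes, with weight at least `1 / 2`, a further step of
the simple random walk. -/
theorem tvDistLE_dirac_conv_signLaw_conv_convPow {a : ℝ} {ρ κ : Measure ℝ} [IsFiniteMeasure κ]
    (hμ : μ = ρ + κ ∗ signLaw a) (hκ : 1 / 2 ≤ κ.real Set.univ) (j m : ℕ) :
    TVDistLE (Measure.dirac a ∗ (convPow (signLaw a) j ∗ convPow μ m))
      (Measure.dirac (-a) ∗ (convPow (signLaw a) j ∗ convPow μ m))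
      (2 / √((j : ℝ) + 1 + m / 4)) := by
  have : IsFiniteMeasure ρ := isFiniteMeasure_of_le μ (hμ ▸ Measure.le_add_right le_rfl)
  have hmass : ρ.real Set.univ = 1 - κ.real Set.univ := by
    rw [eq_sub_iff_add_eq, ← probReal_univ (μ := μ), hμ, measureReal_add_apply]
    simp only [measureReal_def, conv_univ, measure_univ, mul_one]
  have hdecomp (b : ℝ) (j m : ℕ) :
      Measure.dirac b ∗ (convPow (signLaw a) j ∗ convPow μ (m + 1)) =
        ρ ∗ (Measure.dirac b ∗ (convPow (signLaw a) j ∗ convPow μ m)) +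
          κ ∗ (Measure.dirac b ∗ (convPow (signLaw a) (j + 1) ∗ convPow μ m)) := by
    rw [convPow_succ μ, Measure.conv_comm (convPow μ m), conv_left_comm _ μ, conv_left_comm _ μ]
    nth_rw 1 [hμ]
    rw [Measure.add_conv, Measure.conv_assoc κ, conv_left_comm (signLaw a),
      convPow_succ (signLaw a), Measure.conv_comm (convPow (signLaw a) j) (signLaw a),
      Measure.conv_assoc]
  induction m generalizing j with
  | zero =>
    rw [convPow_zero, Measure.conv_dirac_zero]
    simpa using tvDistLE_dirac_conv_convPow_signLaw a j
  | succ m ih =>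
    rw [hdecomp, hdecomp]
    refine ((ih j).conv_left.add (ih (j + 1)).conv_left).mono ?_
    rw [hmass]
    have hx : (1 : ℝ) ≤ j + 1 + m / 4 := by linarith [(by positivity : (0 : ℝ) ≤ j + m / 4)]
    convert weighted_inv_sqrt_le hx hκ using 3
    all_goals push_cast; ring_nf

theorem exists_tvDistLE_dirac_conv_convPow_of_abs_le (hμ : μ ≪ volume) :
    ∃ h₀ > 0, ∀ m ≥ 1, ∀ h : ℝ, |h| ≤ h₀ →
      TVDistLE (Measure.dirac h ∗ convPow μ m) (convPow μ m) (4 / √m) := by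
  obtain ⟨h₀, hh₀, hdecomp⟩ := exists_eq_add_conv_signLaw hμ
  refine ⟨h₀, hh₀, fun m hm h hh ↦ ?_⟩
  have hhalf : |h / 2| ≤ h₀ := by
    rw [abs_div, abs_two]
    linarith [abs_nonneg h]
  obtain ⟨ρ, κ, _, hμ_eq, hκ⟩ := hdecomp (h / 2) hhalf
  have htv := (tvDistLE_dirac_conv_signLaw_conv_convPow hμ_eq hκ 0 m).dirac_conv (h / 2)
  rw [convPow_zero, Measure.dirac_zero_conv, ← Measure.conv_assoc, ← Measure.conv_assoc,
    Measure.dirac_conv_dirac, Measure.dirac_conv_dirac, add_neg_cancel, Measure.dirac_zero_conv,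
    add_halves] at htv
  have hroot : √(m : ℝ) / 2 ≤ √(((0 : ℕ) : ℝ) + 1 + m / 4) := by
    rw [← Real.sqrt_sq (by positivity : (0 : ℝ) ≤ √(m : ℝ) / 2), div_pow,
      Real.sq_sqrt m.cast_nonneg]
    exact Real.sqrt_le_sqrt (by push_cast; linarith)
  refine htv.mono ((div_le_div_of_nonneg_left two_pos.le (by positivity) hroot).trans_eq ?_)
  ring

theorem exists_tvDistLE_dirac_conv_convPow (hμ : μ ≪ volume) :
    ∃ C > 0, ∀ m ≥ 1, ∀ s : ℝ,
      TVDistLE (Measure.dirac s ∗ convPow μ m) (convPow μ m) (C * (1 + |s|) / √m) := by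
  obtain ⟨h₀, hh₀, hshift⟩ := exists_tvDistLE_dirac_conv_convPow_of_abs_le hμ
  refine ⟨4 * (2 + 1 / h₀), by positivity, fun m hm s ↦ ?_⟩
  obtain ⟨k, hk_ge, hk_le⟩ : ∃ k : ℕ, |s| / h₀ + 1 ≤ k ∧ (k : ℝ) ≤ |s| / h₀ + 2 :=
    ⟨⌈|s| / h₀ + 1⌉₊, Nat.le_ceil _, by
      linarith [Nat.ceil_lt_add_one (by positivity : 0 ≤ |s| / h₀ + 1)]⟩
  have hk_pos : (0 : ℝ) < k := by linarith [div_nonneg (abs_nonneg s) hh₀.le]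
  have hstep : |s / k| ≤ h₀ := by
    rw [abs_div, abs_of_pos hk_pos, div_le_comm₀ hk_pos hh₀]
    linarith
  have htv := (hshift m hm (s / k) hstep).nsmul_dirac_conv k
  rw [nsmul_eq_mul, mul_div_cancel₀ _ hk_pos.ne'] at htv
  refine htv.mono ?_
  rw [← mul_div_assoc]
  refine div_le_div_of_nonneg_right ?_ (Real.sqrt_nonneg _)
  have hexpand : 4 * (2 + 1 / h₀) * (1 + |s|) =
      (|s| / h₀ + 2) * 4 + 4 * (2 * |s| + 1 / h₀) := by ring
  linarith [(by positivity : 0 ≤ 4 * (2 * |s| + 1 / h₀))]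

end Smoothing

section LocalBound

variable {μ : Measure ℝ} [IsProbabilityMeasure μ]

theorem exists_convPow_Ioc_le (hμ : μ ≪ volume) :
    ∃ C > 0, ∀ m ≥ 1, ∀ x l : ℝ, 0 ≤ l →
      convPow μ m (Set.Ioc (x - l) x) ≤ ENNReal.ofReal (C * (1 + l) / √m) := by
  obtain ⟨C, hC, hshift⟩ := exists_tvDistLE_dirac_conv_convPow hμ
  refine ⟨C, hC, fun m hm x l hl ↦ ?_⟩
  have htv := (hshift m hm l).abs_measureReal_sub_le (measurableSet_Ioi (a := x))
  rw [Measure.dirac_conv, map_measureReal_apply (by fun_prop) measurableSet_Ioi,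
    Set.preimage_const_add_Ioi, ← measureReal_sdiff (Set.Ioi_subset_Ioi (by linarith))
    measurableSet_Ioi, Set.Ioi_sdiff_Ioi, abs_of_nonneg hl] at htv
  rw [← ofReal_measureReal]
  exact ENNReal.ofReal_le_ofReal ((le_abs_self _).trans htv)

theorem exists_restrict_le_smul_volume {ν : Measure ℝ} [SigmaFinite ν] (hν : ν ≪ volume)
    (hν0 : ν ≠ 0) :
    ∃ (s : Set ℝ) (N : ℕ), MeasurableSet s ∧ ν s ≠ 0 ∧
      ν.restrict s ≤ (N : ℝ≥0∞) • volume.restrict (Set.Icc (-N : ℝ) N) := by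
  set p := ν.rnDeriv volume with hp
  have hp_meas : Measurable p := Measure.measurable_rnDeriv _ _
  let s (N : ℕ) : Set ℝ := {x | p x ≤ N} ∩ Set.Icc (-N) N
  have hs (N : ℕ) : MeasurableSet (s N) :=
    (measurableSet_le hp_meas measurable_const).inter measurableSet_Icc
  have hcover : ∀ᵐ x ∂ν, x ∈ ⋃ N, s N := by
    filter_upwards [hν.ae_le (Measure.rnDeriv_lt_top ν volume)] with x hx
    obtain ⟨N₁, hN₁⟩ := ENNReal.exists_nat_gt hx.ne
    obtain ⟨N₂, hN₂⟩ := exists_nat_ge |x|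
    refine Set.mem_iUnion.2 ⟨max N₁ N₂, hN₁.le.trans ?_, abs_le.1 (hN₂.trans ?_)⟩ <;> simp
  obtain ⟨N, hN⟩ : ∃ N, ν (s N) ≠ 0 := by
    by_contra! hnull
    refine hν0 (Measure.measure_univ_eq_zero.1 ?_)
    rw [← measure_of_measure_compl_eq_zero hcover]
    exact measure_iUnion_null hnull
  refine ⟨s N, N, hs N, hN, ?_⟩
  calc ν.restrict (s N) = (volume.restrict (s N)).withDensity p := by
        rw [← restrict_withDensity (hs N), hp, Measure.withDensity_rnDeriv_eq ν volume hν]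
    _ ≤ (volume.restrict (s N)).withDensity fun _ ↦ (N : ℝ≥0∞) :=
        withDensity_mono (ae_restrict_of_forall_mem (hs N) fun x hx ↦ hx.1)
    _ = (N : ℝ≥0∞) • volume.restrict (s N) := withDensity_const _
    _ ≤ (N : ℝ≥0∞) • volume.restrict (Set.Icc (-N : ℝ) N) :=
        _root_.smul_le_smul_left _ (Measure.restrict_mono Set.inter_subset_right le_rfl)

theorem exists_convPow_conv_restrict_le (hμ : μ ≪ volume) :
    ∃ (s : Set ℝ) (C : ℝ), MeasurableSet s ∧ μ s ≠ 0 ∧ 0 ≤ C ∧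
      ∀ m ≥ 1, convPow μ m ∗ μ.restrict s ≤ ENNReal.ofReal (C / √m) • volume := by
  obtain ⟨C, hC, hinterval⟩ := exists_convPow_Ioc_le hμ
  obtain ⟨s, N, hs, hs0, hle⟩ := exists_restrict_le_smul_volume hμ (IsProbabilityMeasure.ne_zero μ)
  refine ⟨s, N * (C * (1 + (2 * N + 1))), hs, hs0, by positivity, fun m hm ↦ ?_⟩
  have hbox : convPow μ m ∗ volume.restrict (Set.Icc (-N : ℝ) N) ≤
      ENNReal.ofReal (C * (1 + (2 * N + 1)) / √m) • volume := by
    rw [conv_volume_restrict _ measurableSet_Icc, ← withDensity_const]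
    refine withDensity_mono (ae_of_all _ fun y ↦ ?_)
    refine (measure_mono fun x hx ↦ ?_).trans
      (hinterval m hm (y + N) (2 * N + 1) (by positivity))
    simp only [Set.mem_preimage, Set.mem_Icc] at hx
    constructor <;> linarith
  calc convPow μ m ∗ μ.restrict s
      ≤ convPow μ m ∗ ((N : ℝ≥0∞) • volume.restrict (Set.Icc (-N : ℝ) N)) := conv_mono le_rfl hle
    _ = (N : ℝ≥0∞) • (convPow μ m ∗ volume.restrict (Set.Icc (-N : ℝ) N)) :=
        Measure.conv_smul_right ..
    _ ≤ (N : ℝ≥0∞) • ENNReal.ofReal (C * (1 + (2 * N + 1)) / √m) • volume :=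
        _root_.smul_le_smul_left _ hbox
    _ = ENNReal.ofReal (N * (C * (1 + (2 * N + 1))) / √m) • volume := by
        rw [smul_smul, ← ENNReal.ofReal_natCast, ← ENNReal.ofReal_mul N.cast_nonneg,
          ← mul_div_assoc]

theorem exists_convPow_le_smul_volume_add {s : Set ℝ} (hs : MeasurableSet s) (hs0 : μ s ≠ 0)
    {c : ℝ≥0∞} {k : ℕ} (hc : ∀ l ≥ k, convPow μ l ∗ μ.restrict s ≤ c • volume) (j : ℕ) :
    ∃ E : Measure ℝ, IsFiniteMeasure E ∧
      convPow μ (k + j) ≤ (c / μ s) • volume + E ∧ E Set.univ ≤ μ sᶜ ^ j := by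
  induction j with
  | zero => exact ⟨convPow μ k, inferInstance, Measure.le_add_left le_rfl, by simp⟩
  | succ j ih =>
    obtain ⟨E, _, hle, hE⟩ := ih
    refine ⟨E ∗ μ.restrict sᶜ, inferInstance, ?_, ?_⟩
    · have hcoef : c + c / μ s * μ sᶜ = c / μ s := by
        nth_rw 1 [← ENNReal.div_mul_cancel hs0 (measure_ne_top μ s) (b := c)]
        rw [← mul_add, measure_add_measure_compl hs, measure_univ, mul_one]
      have hrest : convPow μ (k + j) ∗ μ.restrict sᶜ ≤
          (c / μ s * μ sᶜ) • volume + E ∗ μ.restrict sᶜ := by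
        refine (conv_mono hle le_rfl).trans_eq ?_
        rw [Measure.add_conv, Measure.conv_smul_left, Measure.conv_comm,
          conv_eq_smul_of_isAddLeftInvariant, smul_smul, Measure.restrict_apply_univ]
      calc convPow μ (k + (j + 1))
          = convPow μ (k + j) ∗ μ.restrict s + convPow μ (k + j) ∗ μ.restrict sᶜ := by
            rw [← Measure.conv_add, Measure.restrict_add_restrict_compl hs, ← add_assoc,
              convPow_succ]
        _ ≤ c • volume + ((c / μ s * μ sᶜ) • volume + E ∗ μ.restrict sᶜ) :=
            add_le_add (hc _ (Nat.le_add_right k j)) hrest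
        _ = (c / μ s) • volume + E ∗ μ.restrict sᶜ := by rw [← add_assoc, ← add_smul, hcoef]
    · rw [conv_univ, Measure.restrict_apply_univ, pow_succ]
      gcongr

theorem exists_convPow_le_smul_volume_add_pow (hμ : μ ≪ volume) :
    ∃ C θ : ℝ, 0 < C ∧ 0 ≤ θ ∧ θ < 1 ∧ ∀ m ≥ 1, ∃ E : Measure ℝ, IsFiniteMeasure E ∧
      convPow μ m ≤ ENNReal.ofReal (C / √m) • volume + E ∧
      E Set.univ ≤ ENNReal.ofReal (θ ^ (m / 2)) := by
  obtain ⟨s, C, hs, hs0, hC, hle⟩ := exists_convPow_conv_restrict_le hμ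
  have hs_pos : 0 < μ.real s := ENNReal.toReal_pos hs0 (measure_ne_top μ s)
  have hcompl : μ.real sᶜ = 1 - μ.real s := probReal_compl_eq_one_sub hs
  refine ⟨2 * C / μ.real s + 1, μ.real sᶜ, by positivity, measureReal_nonneg, by linarith,
    fun m hm ↦ ?_⟩
  have hdensity (l : ℕ) (hl : l ≥ m - m / 2) :
      convPow μ l ∗ μ.restrict s ≤ ENNReal.ofReal (2 * C / √m) • volume := by
    refine (hle l (by lia)).trans ?_
    gcongr ENNReal.ofReal ?_ • volume
    have hroot : √(m : ℝ) ≤ 2 * √l := by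
      rw [Real.sqrt_le_left (by positivity), mul_pow, Real.sq_sqrt l.cast_nonneg]
      exact_mod_cast (by lia : m ≤ 2 ^ 2 * l)
    rw [div_le_div_iff₀ (by linarith [Real.sqrt_pos.2 (Nat.cast_pos (α := ℝ).2 hm)])
      (by positivity)]
    nlinarith
  obtain ⟨E, hE, hEle, hEmass⟩ := exists_convPow_le_smul_volume_add hs hs0 hdensity (m / 2)
  rw [Nat.sub_add_cancel (Nat.div_le_self m 2)] at hEle
  refine ⟨E, hE, hEle.trans (add_le_add ?_ le_rfl), ?_⟩
  · gcongr ?_ • volume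
    rw [← ofReal_measureReal (μ := μ), ← ENNReal.ofReal_div_of_pos hs_pos, div_right_comm]
    exact ENNReal.ofReal_le_ofReal (by gcongr; linarith)
  · rwa [ENNReal.ofReal_pow measureReal_nonneg, ofReal_measureReal]

end LocalBound

section ScheffeSmoothing

theorem tendsto_integral_abs_sub_of_ae_tendsto {α : Type*} [MeasurableSpace α] {π : Measure α}
    {p : ℕ → α → ℝ} {q : α → ℝ} (hp : ∀ n, Integrable (p n) π) (hq : Integrable q π)
    (hp0 : ∀ n, 0 ≤ p n) (hq0 : 0 ≤ q) (hlim : ∀ᵐ x ∂π, Tendsto (p · x) atTop (nhds (q x)))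
    (hint : Tendsto (fun n ↦ ∫ x, p n x ∂π) atTop (nhds (∫ x, q x ∂π))) :
    Tendsto (fun n ↦ ∫ x, |p n x - q x| ∂π) atTop (nhds 0) := by
  have hpos_int (n : ℕ) : Integrable (fun x ↦ max (q x - p n x) 0) π := (hq.sub (hp n)).pos_part
  have hpos : Tendsto (fun n ↦ ∫ x, max (q x - p n x) 0 ∂π) atTop (nhds (∫ _, 0 ∂π)) := by
    refine tendsto_integral_of_dominated_convergence q (fun n ↦ (hpos_int n).1) hq
      (fun n ↦ ae_of_all _ fun x ↦ ?_) (hlim.mono fun x hx ↦ ?_)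
    · rw [Real.norm_of_nonneg (le_max_right _ _)]
      exact max_le (sub_le_self _ (hp0 n x)) (hq0 x)
    · simpa using (hx.const_sub (q x)).max (tendsto_const_nhds (x := (0 : ℝ)))
  have hpq (n : ℕ) : Integrable (fun x ↦ p n x - q x) π := (hp n).sub hq
  have hsplit (n : ℕ) : ∫ x, |p n x - q x| ∂π
      = (∫ x, p n x ∂π - ∫ x, q x ∂π) + 2 * ∫ x, max (q x - p n x) 0 ∂π := by
    rw [← integral_sub (hp n) hq, ← integral_const_mul,
      ← integral_add (hpq n) ((hpos_int n).const_mul 2)]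
    congr with x
    rcases le_total (q x) (p n x) with h | h
    · rw [abs_of_nonneg (sub_nonneg.2 h), max_eq_right (sub_nonpos.2 h)]
      ring
    · rw [abs_of_nonpos (sub_nonpos.2 h), max_eq_left (sub_nonneg.2 h)]
      ring
  rw [integral_zero] at hpos
  simpa [hsplit] using (hint.sub_const (∫ x, q x ∂π)).add (hpos.const_mul 2)

theorem isProbabilityMeasure_cond_volume_Ico {a : ℝ} (ha : 0 < a) :
    IsProbabilityMeasure (volume[|Set.Ico 0 a]) :=
  cond_isProbabilityMeasure_of_finite (by simpa using ha) (by simp)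

/-- The density of `ν ∗ U`, where `U` is the uniform law on `[0, a)`. -/
noncomputable def smoothedDensity (ν : Measure ℝ) (a y : ℝ) : ℝ :=
  a⁻¹ * (ν.real (Set.Ioi (y - a)) - ν.real (Set.Ioi y))

variable (ν : Measure ℝ) [IsFiniteMeasure ν]

theorem smoothedDensity_nonneg {a : ℝ} (ha : 0 ≤ a) : 0 ≤ smoothedDensity ν a := fun y ↦
  mul_nonneg (inv_nonneg.2 ha)
    (sub_nonneg.2 (measureReal_mono (Set.Ioi_subset_Ioi (sub_le_self y ha))))

@[fun_prop]
theorem measurable_smoothedDensity (a : ℝ) : Measurable (smoothedDensity ν a) := by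
  have hanti : Antitone fun y ↦ ν.real (Set.Ioi y) := fun x y hxy ↦
    measureReal_mono (Set.Ioi_subset_Ioi hxy)
  exact ((hanti.measurable.comp (measurable_sub_const a)).sub hanti.measurable).const_mul _

theorem conv_cond_volume_Ico {a : ℝ} (ha : 0 < a) :
    ν ∗ volume[|Set.Ico 0 a] = volume.withDensity fun y ↦ .ofReal (smoothedDensity ν a y) := by
  have hpre (y : ℝ) : (fun x ↦ y - x) ⁻¹' Set.Ico 0 a = Set.Ioi (y - a) \ Set.Ioi y := by
    ext x
    simp only [Set.mem_preimage, Set.mem_Ico, Set.mem_sdiff, Set.mem_Ioi, not_lt, sub_nonneg]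
    constructor <;> rintro ⟨h, h'⟩ <;> constructor <;> linarith
  rw [ProbabilityTheory.cond, Measure.conv_smul_right, conv_volume_restrict ν measurableSet_Ico,
    ← withDensity_smul' _ _ (by simpa using ha)]
  congr with y
  rw [Pi.smul_apply, smul_eq_mul, hpre, Real.volume_Ico, sub_zero, ← ofReal_measureReal,
    ← ENNReal.ofReal_inv_of_pos ha, ← ENNReal.ofReal_mul (by positivity),
    measureReal_sdiff (Set.Ioi_subset_Ioi (sub_le_self y ha.le)) measurableSet_Ioi,
    smoothedDensity]

theorem integrable_smoothedDensity_and_integral_eq {a : ℝ} (ha : 0 < a) :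
    Integrable (smoothedDensity ν a) ∧ ∫ y, smoothedDensity ν a y = ν.real Set.univ := by
  have := isProbabilityMeasure_cond_volume_Ico ha
  have h0 := smoothedDensity_nonneg ν ha.le
  have hmass : ∫⁻ y, .ofReal (smoothedDensity ν a y) = ν Set.univ := by
    rw [← setLIntegral_univ, ← withDensity_apply _ .univ, ← conv_cond_volume_Ico ν ha, conv_univ,
      this.measure_univ, mul_one]
  have hmeas := (measurable_smoothedDensity ν a).aestronglyMeasurable (μ := volume)
  refine ⟨(lintegral_ofReal_ne_top_iff_integrable hmeas (ae_of_all _ h0)).1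
    (hmass ▸ measure_ne_top ν _), ?_⟩
  rw [integral_eq_lintegral_of_nonneg_ae (ae_of_all _ h0) hmeas, hmass, measureReal_def]

variable {ν}

theorem eventually_tvDistLE_conv_cond_volume_Ico {σ : ℕ → Measure ℝ}
    [∀ n, IsProbabilityMeasure (σ n)] [IsProbabilityMeasure ν]
    (hlim : ∀ x, Tendsto (fun n ↦ (σ n).real (Set.Ioi x)) atTop (nhds (ν.real (Set.Ioi x))))
    {a ε : ℝ} (ha : 0 < a) (hε : 0 < ε) :
    ∀ᶠ n in atTop, TVDistLE (σ n ∗ volume[|Set.Ico 0 a]) (ν ∗ volume[|Set.Ico 0 a]) ε := by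
  have hdens (π : Measure ℝ) [IsFiniteMeasure π] := integrable_smoothedDensity_and_integral_eq π ha
  have hL1 := tendsto_integral_abs_sub_of_ae_tendsto (fun n ↦ (hdens (σ n)).1) (hdens ν).1
    (fun n ↦ smoothedDensity_nonneg _ ha.le) (smoothedDensity_nonneg _ ha.le)
    (ae_of_all _ fun y ↦ ((hlim (y - a)).sub (hlim y)).const_mul a⁻¹)
    (by simp only [(hdens _).2, probReal_univ, tendsto_const_nhds])
  filter_upwards [hL1.eventually_le_const hε] with n hn
  rw [conv_cond_volume_Ico _ ha, conv_cond_volume_Ico _ ha]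
  exact (tvDistLE_withDensity (hdens _).1 (hdens _).1 (by fun_prop) (by fun_prop)
    (smoothedDensity_nonneg _ ha.le) (smoothedDensity_nonneg _ ha.le)).mono hn

theorem tvDistLE_conv_cond_volume_Ico {a ε : ℝ} (ha : 0 < a)
    (hν : ∀ s, |s| ≤ a → TVDistLE (Measure.dirac s ∗ ν) ν ε) :
    TVDistLE (ν ∗ volume[|Set.Ico 0 a]) ν ε := by
  have := isProbabilityMeasure_cond_volume_Ico ha
  rw [Measure.conv_comm]
  refine tvDistLE_conv_of_ae ((ae_cond_mem measurableSet_Ico).mono fun s hs ↦ hν s ?_)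
  rw [abs_of_nonneg hs.1]
  exact hs.2.le

theorem eventually_tvDistLE_of_tendsto_Ioi {σ : ℕ → Measure ℝ}
    [∀ n, IsProbabilityMeasure (σ n)] [IsProbabilityMeasure ν] (hν : ν ≪ volume)
    (hlim : ∀ x, Tendsto (fun n ↦ (σ n).real (Set.Ioi x)) atTop (nhds (ν.real (Set.Ioi x))))
    (hshift : ∀ ε > 0, ∃ a > 0, ∀ᶠ n in atTop, ∀ s, |s| ≤ a →
      TVDistLE (Measure.dirac s ∗ σ n) (σ n) ε) {ε : ℝ} (hε : 0 < ε) :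
    ∀ᶠ n in atTop, TVDistLE (σ n) ν ε := by
  obtain ⟨a, ha, hσa⟩ := hshift (ε / 3) (by positivity)
  obtain ⟨b, hb, hνb⟩ := exists_tvDistLE_dirac_conv hν (show 0 < ε / 3 by positivity)
  have hc : 0 < min a b := lt_min ha hb
  filter_upwards [hσa, eventually_tvDistLE_conv_cond_volume_Ico hlim hc
    (show 0 < ε / 3 by positivity)] with n hσn hn
  have hσn' := tvDistLE_conv_cond_volume_Ico hc fun s hs ↦ hσn s (hs.trans (min_le_left a b))
  have hν' := tvDistLE_conv_cond_volume_Ico hc fun s hs ↦ hνb s (hs.trans (min_le_right a b))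
  exact (hσn'.symm.trans (hn.trans hν')).mono (by linarith)

end ScheffeSmoothing

section HalfNormal

instance isProbabilityMeasure_halfNormal : IsProbabilityMeasure halfNormal :=
  Measure.isProbabilityMeasure_map (by fun_prop)

theorem halfNormal_eq_smul_restrict :
    halfNormal = (2 : ℝ≥0∞) • (gaussianReal 0 1).restrict (Set.Ioi 0) := by
  have hneg : (gaussianReal 0 1).map (fun x ↦ -x) = gaussianReal 0 1 := by
    simpa using gaussianReal_map_neg (μ := 0) (v := 1)
  have h0 : ∀ᵐ x ∂gaussianReal 0 1, x ≠ 0 := by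
    have := nullSingletonClass_gaussianReal (μ := 0) (v := 1) (by norm_num)
    exact measure_eq_zero_iff_ae_notMem.1 (measure_singleton 0)
  ext s hs
  rw [halfNormal, Measure.map_apply (by fun_prop) hs, Measure.smul_apply,
    Measure.restrict_apply hs, smul_eq_mul, two_mul,
    ← measure_inter_add_sdiff _ (measurableSet_Ioi (a := (0 : ℝ)))]
  congr 1
  · congr 1
    ext x
    simp only [Set.mem_inter_iff, Set.mem_preimage, Set.mem_Ioi]
    exact and_congr_left fun hx ↦ by rw [abs_of_pos hx]
  · conv_rhs => rw [← hneg, Measure.map_apply (by fun_prop) (hs.inter measurableSet_Ioi)]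
    refine measure_congr (h0.mono fun x hx ↦ propext ?_)
    change |x| ∈ s ∧ ¬0 < x ↔ -x ∈ s ∧ 0 < -x
    rw [neg_pos, not_lt, ← hx.le_iff_lt]
    exact and_congr_left fun hx0 ↦ by rw [abs_of_nonpos hx0]

theorem halfNormal_absolutelyContinuous_volume : halfNormal ≪ volume := by
  rw [halfNormal_eq_smul_restrict]
  exact (Measure.smul_absolutelyContinuous.trans Measure.absolutelyContinuous_restrict).trans
    (gaussianReal_absolutelyContinuous 0 (by norm_num))

theorem halfNormal_Iic_zero : halfNormal (Set.Iic 0) = 0 := by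
  rw [halfNormal_eq_smul_restrict, Measure.smul_apply, Measure.restrict_apply measurableSet_Iic,
    Set.Iic_inter_Ioi, Set.Ioc_self, measure_empty, smul_zero]

theorem halfNormal_real_Ioi {x : ℝ} (hx : 0 ≤ x) :
    halfNormal.real (Set.Ioi x) = 2 * gaussianTail x := by
  rw [measureReal_def, halfNormal_eq_smul_restrict, Measure.smul_apply,
    Measure.restrict_apply measurableSet_Ioi, Set.Ioi_inter_Ioi, sup_eq_left.2 hx]
  simp [gaussianTail, measureReal_def]

end HalfNormal

section MaxLawTotalVariation

/-- The law of `max_{0 ≤ k ≤ n} S_k / √n`. -/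
noncomputable def scaledMaxLaw (μ : Measure ℝ) (n : ℕ) : Measure ℝ := (maxLaw μ n).map (· / √n)

theorem scaledMaxLaw_Ioi {μ : Measure ℝ} {n : ℕ} (hn : 1 ≤ n) (x : ℝ) :
    scaledMaxLaw μ n (Set.Ioi x) = maxLaw μ n (Set.Ioi (x * √n)) := by
  rw [scaledMaxLaw, Measure.map_apply (by fun_prop) measurableSet_Ioi]
  congr 1 with y
  rw [Set.mem_preimage, Set.mem_Ioi, Set.mem_Ioi, lt_div_iff₀ (by positivity)]

variable {μ : Measure ℝ} [IsProbabilityMeasure μ]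

theorem tvDistLE_maxLaw_conv_convPow {n m : ℕ} (h : m ≤ n) :
    TVDistLE (maxLaw μ n) (maxLaw μ (n - m) ∗ convPow μ m)
      (2 * (recentVisitProb μ n m).toReal) := by
  set ρ := (killedStep μ)^[m] (posMaxLaw μ (n - m))
  have hle : ρ ≤ maxLaw μ n := calc
    ρ ≤ posMaxLaw μ n := by
      rw [posMaxLaw_eq_add μ h]
      exact Measure.le_add_left le_rfl
    _ ≤ maxLaw μ n := Measure.restrict_le_self
  have hle' : ρ ≤ maxLaw μ (n - m) ∗ convPow μ m :=
    (iterate_killedStep_le μ _ m).trans (conv_mono Measure.restrict_le_self le_rfl)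
  have hmass : 1 - ρ.real Set.univ = (recentVisitProb μ n m).toReal := by
    have hadd := congrArg ENNReal.toReal (recentVisitProb_add μ h)
    have hfin : recentVisitProb μ n m ≠ ⊤ :=
      ne_top_of_le_ne_top ENNReal.one_ne_top (recentVisitProb_add μ h ▸ le_self_add)
    rw [ENNReal.toReal_add hfin (measure_ne_top _ _), ENNReal.toReal_one] at hadd
    rw [measureReal_def]
    linarith
  have htv := tvDistLE_of_le hle
  have htv' := tvDistLE_of_le hle'
  rw [probReal_univ, hmass] at htv htv'
  exact (htv.symm.trans htv').mono (two_mul _).ge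

theorem exists_tvDistLE_dirac_conv_maxLaw (hμ : μ ≪ volume) :
    ∃ C > 0, ∀ n m : ℕ, 1 ≤ m → m ≤ n → ∀ s : ℝ,
      TVDistLE (Measure.dirac s ∗ maxLaw μ n) (maxLaw μ n)
        (4 * (recentVisitProb μ n m).toReal + C * (1 + |s|) / √m) := by
  obtain ⟨C, hC, hshift⟩ := exists_tvDistLE_dirac_conv_convPow hμ
  refine ⟨C, hC, fun n m hm hmn s ↦ ?_⟩
  have hcmp := tvDistLE_maxLaw_conv_convPow (μ := μ) hmn
  have hconv := (hshift m hm s).conv_left (κ := maxLaw μ (n - m))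
  rw [conv_left_comm, probReal_univ, mul_one] at hconv
  exact ((hcmp.dirac_conv s).trans (hconv.trans hcmp.symm)).mono (by linarith)

instance (n : ℕ) : IsProbabilityMeasure (scaledMaxLaw μ n) :=
  Measure.isProbabilityMeasure_map (by fun_prop)

theorem tendsto_scaledMaxLaw_Ioi (hμ : IsStandardized μ) (x : ℝ) :
    Tendsto (fun n ↦ (scaledMaxLaw μ n).real (Set.Ioi x)) atTop
      (nhds (halfNormal.real (Set.Ioi x))) := by
  rcases le_or_gt 0 x with hx | hx
  · rw [halfNormal_real_Ioi hx]
    refine (tendsto_maxLaw_Ioi hμ hx).congr' ?_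
    filter_upwards [eventually_ge_atTop 1] with n hn
    rw [measureReal_def, measureReal_def, scaledMaxLaw_Ioi hn]
  · have hone : halfNormal.real (Set.Ioi x) = 1 := by
      rw [← Set.compl_Iic, probReal_compl_eq_one_sub measurableSet_Iic, measureReal_def,
        measure_mono_null (Set.Iic_subset_Iic.2 hx.le) halfNormal_Iic_zero, ENNReal.toReal_zero,
        sub_zero]
    refine tendsto_const_nhds.congr' ?_
    filter_upwards [eventually_ge_atTop 1] with n hn
    rw [measureReal_def (scaledMaxLaw μ n), scaledMaxLaw_Ioi hn,
      maxLaw_Ioi_of_neg μ n (mul_neg_of_neg_of_pos hx (by positivity)), ENNReal.toReal_one, hone]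

theorem exists_tvDistLE_dirac_conv_scaledMaxLaw (hμ : μ ≪ volume) :
    ∃ C > 0, ∀ n m : ℕ, 1 ≤ m → m ≤ n → ∀ s : ℝ,
      TVDistLE (Measure.dirac s ∗ scaledMaxLaw μ n) (scaledMaxLaw μ n)
        (4 * (recentVisitProb μ n m).toReal + C * (1 + |s| * √n) / √m) := by
  obtain ⟨C, hC, hshift⟩ := exists_tvDistLE_dirac_conv_maxLaw hμ
  refine ⟨C, hC, fun n m hm hmn s ↦ ?_⟩
  have hn : 0 < √(n : ℝ) := by
    have : 1 ≤ n := hm.trans hmn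
    positivity
  have hscale : Measure.dirac s ∗ scaledMaxLaw μ n
      = (Measure.dirac (s * √n) ∗ maxLaw μ n).map (· / √n) := by
    rw [scaledMaxLaw, Measure.dirac_conv, Measure.dirac_conv, Measure.map_map (by fun_prop)
      (by fun_prop), Measure.map_map (by fun_prop) (by fun_prop)]
    congr 1 with x
    simp only [Function.comp_apply]
    field_simp
  rw [hscale, ← abs_of_pos hn, ← abs_mul, abs_of_pos hn]
  exact (hshift n m hm hmn (s * √n)).map (by fun_prop)

theorem exists_eventually_tvDistLE_dirac_conv_scaledMaxLaw (hμ : IsStandardized μ)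
    (hac : μ ≪ volume) {ε : ℝ} (hε : 0 < ε) :
    ∃ a > 0, ∀ᶠ n in atTop, ∀ s, |s| ≤ a →
      TVDistLE (Measure.dirac s ∗ scaledMaxLaw μ n) (scaledMaxLaw μ n) ε := by
  obtain ⟨C, hC, hshift⟩ := exists_tvDistLE_dirac_conv_scaledMaxLaw hac
  obtain ⟨j, hj⟩ := exists_nat_gt (48 / ε)
  have hj0 : (0 : ℝ) < j := lt_trans (by positivity) hj
  have hjε : 4 * (4 / (j : ℝ)) ≤ ε / 3 := by
    rw [div_lt_iff₀ hε] at hj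
    rw [← mul_div_assoc, div_le_div_iff₀ hj0 (by norm_num)]
    linarith
  set T : ℕ := j ^ 4 + 1
  have hT : 0 < T := by positivity
  have htend : Tendsto (fun n : ℕ ↦ n / T) atTop atTop := Nat.tendsto_div_const_atTop hT.ne'
  have hsmall : Tendsto (fun n : ℕ ↦ C / √((n / T : ℕ) : ℝ)) atTop (nhds 0) :=
    tendsto_const_nhds.div_atTop
      (Real.tendsto_sqrt_atTop.comp (tendsto_natCast_atTop_atTop.comp htend))
  refine ⟨ε / (3 * C * √(2 * T)), by positivity, ?_⟩
  filter_upwards [htend.eventually (eventually_recentVisitProb_le hμ (Nat.cast_pos.1 hj0)),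
    hsmall.eventually_le_const (show 0 < ε / 3 by positivity), eventually_ge_atTop T]
    with n hvisit hdrift hTn s hs
  set m := n / T
  have hm : 1 ≤ m := (Nat.one_le_div_iff hT).2 hTn
  have hmn : T * m ≤ n := Nat.mul_div_le n T
  have hnm : √(n : ℝ) ≤ √(2 * T) * √m := by
    have hlt : n < T * (m + 1) := Nat.lt_mul_div_succ n hT
    have hle : n ≤ 2 * T * m := by nlinarith
    rw [← Real.sqrt_mul (by positivity)]
    exact Real.sqrt_le_sqrt (mod_cast hle)
  refine (hshift n m hm (Nat.div_le_self n T) s).mono ?_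
  have hvisit' : 4 * (recentVisitProb μ n m).toReal ≤ ε / 3 :=
    (mul_le_mul_of_nonneg_left (ENNReal.toReal_le_of_le_ofReal (by positivity) (hvisit n hmn))
      (by norm_num)).trans hjε
  have hshift' : C * (|s| * √n) / √m ≤ ε / 3 := by
    rw [div_le_iff₀ (by positivity)]
    calc C * (|s| * √n) ≤ C * (ε / (3 * C * √(2 * T)) * (√(2 * T) * √m)) := by gcongr
      _ = ε / 3 * √m := by field_simp
  calc 4 * (recentVisitProb μ n m).toReal + C * (1 + |s| * √n) / √m
      = 4 * (recentVisitProb μ n m).toReal + C / √m + C * (|s| * √n) / √m := by ring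
    _ ≤ ε := by linarith

theorem eventually_tvDistLE_scaledMaxLaw_halfNormal (hμ : IsStandardized μ) (hac : μ ≪ volume)
    {ε : ℝ} (hε : 0 < ε) : ∀ᶠ n in atTop, TVDistLE (scaledMaxLaw μ n) halfNormal ε :=
  eventually_tvDistLE_of_tendsto_Ioi halfNormal_absolutelyContinuous_volume
    (tendsto_scaledMaxLaw_Ioi hμ)
    (fun _ ↦ exists_eventually_tvDistLE_dirac_conv_scaledMaxLaw hμ hac) hε

end MaxLawTotalVariation

section LogEntropy

theorem log_one_add_le_log_one_add {a b : ℝ} (ha : 0 ≤ a) (hab : a ≤ b) :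
    Real.log (1 + a) ≤ Real.log (1 + b) :=
  Real.log_le_log (by linarith) (by linarith)

theorem log_one_add_mul_le {a b : ℝ} (ha : 0 ≤ a) (hb : 0 ≤ b) :
    Real.log (1 + a * b) ≤ Real.log (1 + a) + Real.log (1 + b) := by
  rw [← Real.log_mul (by positivity) (by positivity)]
  exact Real.log_le_log (by positivity) (by nlinarith)

theorem mul_log_one_add_mul_le {a b t : ℝ} (ha : 0 ≤ a) (hb : 0 ≤ b) (ht : 0 ≤ t) :
    a * Real.log (1 + t * b) ≤ a * Real.log (1 + t * a) + b := by
  rcases le_or_gt b a with hba | hab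
  · have hlog := log_one_add_le_log_one_add (mul_nonneg ht hb) (mul_le_mul_of_nonneg_left hba ht)
    nlinarith
  rcases ha.eq_or_lt with rfl | ha_pos
  · simpa using hb
  have hratio : 1 + t * b ≤ (1 + t * a) * (b / a) := by
    have hone : 1 < b / a := (one_lt_div ha_pos).2 hab
    have hexp : (1 + t * a) * (b / a) = b / a + t * b := by field_simp
    linarith
  have hlog : Real.log (1 + t * b) ≤ Real.log (1 + t * a) + (b / a - 1) := calc
    Real.log (1 + t * b) ≤ Real.log ((1 + t * a) * (b / a)) :=
      Real.log_le_log (by positivity) hratio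
    _ = Real.log (1 + t * a) + Real.log (b / a) :=
      Real.log_mul (by positivity) (div_pos (ha.trans_lt hab) ha_pos).ne'
    _ ≤ Real.log (1 + t * a) + (b / a - 1) := by
      gcongr
      exact Real.log_le_sub_one_of_pos (div_pos (ha_pos.trans hab) ha_pos)
  calc a * Real.log (1 + t * b) ≤ a * (Real.log (1 + t * a) + (b / a - 1)) := by gcongr
    _ = a * Real.log (1 + t * a) + b - a := by field_simp; ring
    _ ≤ a * Real.log (1 + t * a) + b := by linarith

/-- The convex function `a ↦ a log (1 + t a)` on `[0, ∞]`. It replaces `x log x`, which takes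
negative values; `t` is the spatial scale on which a density `a` is measured. -/
noncomputable def mulLog (t : ℝ) (a : ℝ≥0∞) : ℝ≥0∞ :=
  a * ENNReal.ofReal (Real.log (1 + t * a.toReal))

variable {t : ℝ} {a b : ℝ≥0∞}

@[fun_prop]
theorem measurable_mulLog (t : ℝ) : Measurable (mulLog t) := by
  unfold mulLog
  fun_prop

theorem mulLog_le_mulLog (ht : 0 ≤ t) (hb : b ≠ ⊤) (hab : a ≤ b) : mulLog t a ≤ mulLog t b := by
  have hreal := ENNReal.toReal_mono hb hab
  exact mul_le_mul' hab (ENNReal.ofReal_le_ofReal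
    (log_one_add_le_log_one_add (by positivity) (by gcongr)))

theorem mul_ofReal_log_le_mulLog_add (ht : 0 ≤ t) (ha : a ≠ ⊤) (hb : b ≠ ⊤) :
    a * ENNReal.ofReal (Real.log (1 + t * b.toReal)) ≤ mulLog t a + b := by
  lift a to NNReal using ha
  lift b to NNReal using hb
  have hlog : 0 ≤ Real.log (1 + t * a) := Real.log_nonneg (by nlinarith [a.2, mul_nonneg ht a.2])
  have hle := ENNReal.ofReal_le_ofReal (mul_log_one_add_mul_le a.coe_nonneg b.coe_nonneg ht)
  rwa [ENNReal.ofReal_add (by positivity) b.coe_nonneg, ENNReal.ofReal_mul a.coe_nonneg,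
    ENNReal.ofReal_mul a.coe_nonneg, ENNReal.ofReal_coe_nnreal, ENNReal.ofReal_coe_nnreal] at hle

theorem mulLog_mul_left_le {s : ℝ} (hs : 0 ≤ s) (ht : 0 ≤ t) (a : ℝ≥0∞) :
    mulLog (s * t) a ≤ ENNReal.ofReal (Real.log (1 + s)) * a + mulLog t a := by
  have hta : 0 ≤ t * a.toReal := by positivity
  unfold mulLog
  rw [mul_comm _ a, ← mul_add, ← ENNReal.ofReal_add (Real.log_nonneg (by linarith))
    (Real.log_nonneg (by linarith)), mul_assoc]
  gcongr
  exact log_one_add_mul_le hs hta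

theorem mulLog_mul (t : ℝ) (c a : ℝ≥0∞) : mulLog t (c * a) = c * mulLog (t * c.toReal) a := by
  rw [mulLog, mulLog, ENNReal.toReal_mul, mul_assoc, mul_assoc]

theorem mulLog_le_of_le_three_mul (ht : 0 ≤ t) (hb : b ≠ ⊤) (h : a ≤ 3 * b) :
    mulLog t a ≤ 3 * mulLog (3 * t) b := calc
  mulLog t a ≤ mulLog t (3 * b) := mulLog_le_mulLog ht (ENNReal.mul_ne_top (by finiteness) hb) h
  _ = 3 * mulLog (3 * t) b := by rw [mulLog_mul, ENNReal.toReal_ofNat, mul_comm t]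

theorem mulLog_le_of_le_add_add {c : ℝ} {w v : ℝ≥0∞} (ht : 0 ≤ t) (hc : 0 ≤ c) (hw : w ≠ ⊤)
    (hv : v ≠ ⊤) (h : a ≤ ENNReal.ofReal c + w + v) :
    mulLog t a ≤ ENNReal.ofReal (Real.log (1 + 3 * t * c)) * a + 3 * mulLog (3 * t) w
      + 3 * mulLog (3 * t) v := by
  have hmax : a ≤ 3 * max (max (ENNReal.ofReal c) w) v := h.trans <| calc
    ENNReal.ofReal c + w + v ≤ max (max (ENNReal.ofReal c) w) v
        + max (max (ENNReal.ofReal c) w) v + max (max (ENNReal.ofReal c) w) v := by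
      gcongr <;> simp
    _ = 3 * max (max (ENNReal.ofReal c) w) v := by ring
  rcases max_choice (max (ENNReal.ofReal c) w) v with hcw | hmax_v
  · rcases max_choice (ENNReal.ofReal c) w with hmax_c | hmax_w
    · rw [hcw, hmax_c] at hmax
      have hreal : a.toReal ≤ 3 * c := ENNReal.toReal_le_of_le_ofReal (by positivity)
        (by rwa [ENNReal.ofReal_mul (by norm_num), ENNReal.ofReal_ofNat])
      refine le_add_right (le_add_right ?_)
      unfold mulLog
      rw [mul_comm]
      gcongr ENNReal.ofReal ?_ * a
      exact log_one_add_le_log_one_add (by positivity) (by nlinarith)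
    · rw [hcw, hmax_w] at hmax
      exact le_add_right (le_add_left (mulLog_le_of_le_three_mul ht hw hmax))
  · rw [hmax_v] at hmax
    exact le_add_left (mulLog_le_of_le_three_mul ht hv hmax)

variable {α : Type*} [MeasurableSpace α] {π ρ ρ' : Measure α}

theorem mulLog_lintegral_le {κ : Measure α} {f : α → ℝ≥0∞} (ht : 0 ≤ t) (hf : Measurable f)
    (hfin : ∫⁻ x, f x ∂κ ≠ ⊤) :
    mulLog t (∫⁻ x, f x ∂κ) ≤ ∫⁻ x, mulLog t (f x) ∂κ + κ Set.univ * ∫⁻ x, f x ∂κ := by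
  set m := ∫⁻ x, f x ∂κ
  calc mulLog t m = ∫⁻ x, f x * ENNReal.ofReal (Real.log (1 + t * m.toReal)) ∂κ :=
        (lintegral_mul_const _ hf).symm
    _ ≤ ∫⁻ x, mulLog t (f x) + m ∂κ := by
        refine lintegral_mono_ae ((ae_lt_top hf hfin).mono fun x hx ↦ ?_)
        exact mul_ofReal_log_le_mulLog_add ht hx.ne hfin
    _ = ∫⁻ x, mulLog t (f x) ∂κ + κ Set.univ * m := by
        rw [lintegral_add_right _ measurable_const, lintegral_const, mul_comm m]

/-- The entropy `∫ f log (1 + t f) dπ` of the density `f = dρ/dπ`, for an arbitrary measure `ρ`: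
only the absolutely continuous part of `ρ` contributes. -/
noncomputable def logEntropy (π : Measure α) (t : ℝ) (ρ : Measure α) : ℝ≥0∞ :=
  ∫⁻ x, mulLog t (ρ.rnDeriv π x) ∂π

theorem rnDeriv_ae_ne_top (π ρ : Measure α) [SigmaFinite ρ] : ∀ᵐ x ∂π, ρ.rnDeriv π x ≠ ⊤ :=
  (ρ.rnDeriv_lt_top π).mono fun _ h ↦ h.ne

theorem rnDeriv_le_of_le_withDensity [SigmaFinite π] {g : α → ℝ≥0∞} (h : ρ ≤ π.withDensity g) :
    ρ.rnDeriv π ≤ᵐ[π] g := by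
  refine ae_le_of_forall_setLIntegral_le_of_sigmaFinite (ρ.measurable_rnDeriv π) fun s hs _ ↦ ?_
  rw [← withDensity_apply g hs]
  exact (Measure.setLIntegral_rnDeriv_le s).trans (h s)

theorem logEntropy_le_lintegral [SigmaFinite π] {g : α → ℝ≥0∞} (ht : 0 ≤ t)
    (hg : ∀ᵐ x ∂π, g x ≠ ⊤) (h : ρ ≤ π.withDensity g) :
    logEntropy π t ρ ≤ ∫⁻ x, mulLog t (g x) ∂π := by
  refine lintegral_mono_ae ?_
  filter_upwards [hg, rnDeriv_le_of_le_withDensity h] with x hx hle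
  exact mulLog_le_mulLog ht hx hle

theorem logEntropy_mono [SigmaFinite π] [SigmaFinite ρ'] (ht : 0 ≤ t) (hac : ρ' ≪ π)
    (h : ρ ≤ ρ') : logEntropy π t ρ ≤ logEntropy π t ρ' :=
  logEntropy_le_lintegral ht (rnDeriv_ae_ne_top π ρ')
    (by rwa [Measure.withDensity_rnDeriv_eq _ _ hac])

theorem setLIntegral_mulLog_mul_left_le {s : ℝ} (hs : 0 ≤ s) (ht : 0 ≤ t) (π ρ : Measure α)
    (B : Set α) :
    ∫⁻ x in B, mulLog (s * t) (ρ.rnDeriv π x) ∂π ≤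
      ENNReal.ofReal (Real.log (1 + s)) * ρ B + ∫⁻ x in B, mulLog t (ρ.rnDeriv π x) ∂π := calc
  ∫⁻ x in B, mulLog (s * t) (ρ.rnDeriv π x) ∂π
      ≤ ∫⁻ x in B, ENNReal.ofReal (Real.log (1 + s)) * ρ.rnDeriv π x
          + mulLog t (ρ.rnDeriv π x) ∂π :=
    lintegral_mono fun x ↦ mulLog_mul_left_le hs ht _
  _ = ENNReal.ofReal (Real.log (1 + s)) * ∫⁻ x in B, ρ.rnDeriv π x ∂π
        + ∫⁻ x in B, mulLog t (ρ.rnDeriv π x) ∂π := by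
    rw [lintegral_add_left (by fun_prop), lintegral_const_mul _ (by fun_prop)]
  _ ≤ ENNReal.ofReal (Real.log (1 + s)) * ρ B + ∫⁻ x in B, mulLog t (ρ.rnDeriv π x) ∂π := by
    gcongr
    exact Measure.setLIntegral_rnDeriv_le B

theorem logEntropy_mul_left_le {s : ℝ} (hs : 0 ≤ s) (ht : 0 ≤ t) (π ρ : Measure α) :
    logEntropy π (s * t) ρ ≤
      ENNReal.ofReal (Real.log (1 + s)) * ρ Set.univ + logEntropy π t ρ := by
  simpa only [setLIntegral_univ, logEntropy] using
    setLIntegral_mulLog_mul_left_le hs ht π ρ .univ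

theorem setLIntegral_mulLog_rnDeriv_smul [SigmaFinite π] [SigmaFinite ρ] {c : ℝ≥0∞} (hc : c ≠ ⊤)
    (t : ℝ) (B : Set α) :
    ∫⁻ x in B, mulLog t ((c • ρ).rnDeriv π x) ∂π =
      c * ∫⁻ x in B, mulLog (t * c.toReal) (ρ.rnDeriv π x) ∂π := by
  rw [← lintegral_const_mul _ (by fun_prop)]
  refine lintegral_congr_ae (ae_restrict_of_ae ?_)
  filter_upwards [Measure.rnDeriv_smul_left_of_ne_top' ρ π hc] with x hx
  rw [hx, Pi.smul_apply, smul_eq_mul, mulLog_mul]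

theorem logEntropy_smul [SigmaFinite π] [SigmaFinite ρ] {c : ℝ≥0∞} (hc : c ≠ ⊤) (t : ℝ) :
    logEntropy π t (c • ρ) = c * logEntropy π (t * c.toReal) ρ := by
  simpa only [setLIntegral_univ, logEntropy] using
    setLIntegral_mulLog_rnDeriv_smul (π := π) (ρ := ρ) hc t .univ

theorem logEntropy_smul_le_of_le_one [SigmaFinite π] [SigmaFinite ρ] {r : ℝ≥0∞} (ht : 0 ≤ t)
    (hr : r ≤ 1) : logEntropy π t (r • ρ) ≤ r * logEntropy π t ρ := by
  have htr : t * r.toReal ≤ t := mul_le_of_le_one_right ht (ENNReal.toReal_le_of_le_ofReal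
    zero_le_one (by rwa [ENNReal.ofReal_one]))
  rw [logEntropy_smul (ne_top_of_le_ne_top ENNReal.one_ne_top hr)]
  unfold logEntropy mulLog
  gcongr

theorem logEntropy_ne_top_of_pos [IsFiniteMeasure ρ] {s : ℝ} (hs : 0 < s) (ht : 0 < t)
    (h : logEntropy π s ρ ≠ ⊤) : logEntropy π t ρ ≠ ⊤ := by
  have hle := logEntropy_mul_left_le (div_pos ht hs).le hs.le π ρ
  rw [div_mul_cancel₀ t hs.ne'] at hle
  exact ne_top_of_le_ne_top (by finiteness) hle

theorem setLIntegral_mulLog_rnDeriv_le [SigmaFinite π] {ρ w v : Measure α} [SigmaFinite w]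
    [SigmaFinite v] {c : ℝ} (ht : 0 ≤ t) (hc : 0 ≤ c) (hw : w ≪ π) (hv : v ≪ π)
    (h : ρ ≤ ENNReal.ofReal c • π + w + v) (B : Set α) :
    ∫⁻ x in B, mulLog t (ρ.rnDeriv π x) ∂π ≤
      ENNReal.ofReal (Real.log (1 + 3 * t * c)) * ρ B + 3 * logEntropy π (3 * t) w
        + 3 * logEntropy π (3 * t) v := by
  set κ := ENNReal.ofReal (Real.log (1 + 3 * t * c))
  have hdens : ρ.rnDeriv π ≤ᵐ[π] (fun _ ↦ ENNReal.ofReal c) + w.rnDeriv π + v.rnDeriv π := by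
    refine rnDeriv_le_of_le_withDensity (h.trans_eq ?_)
    rw [withDensity_add_right _ (v.measurable_rnDeriv π),
      withDensity_add_right _ (w.measurable_rnDeriv π), withDensity_const,
      Measure.withDensity_rnDeriv_eq _ _ hw, Measure.withDensity_rnDeriv_eq _ _ hv]
  calc ∫⁻ x in B, mulLog t (ρ.rnDeriv π x) ∂π
      ≤ ∫⁻ x in B, κ * ρ.rnDeriv π x + 3 * mulLog (3 * t) (w.rnDeriv π x)
          + 3 * mulLog (3 * t) (v.rnDeriv π x) ∂π := by
        refine lintegral_mono_ae (ae_restrict_of_ae ?_)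
        filter_upwards [hdens, rnDeriv_ae_ne_top π w, rnDeriv_ae_ne_top π v] with x hx hwx hvx
        exact mulLog_le_of_le_add_add ht hc hwx hvx hx
    _ = κ * ∫⁻ x in B, ρ.rnDeriv π x ∂π + 3 * ∫⁻ x in B, mulLog (3 * t) (w.rnDeriv π x) ∂π
          + 3 * ∫⁻ x in B, mulLog (3 * t) (v.rnDeriv π x) ∂π := by
        rw [lintegral_add_left (by fun_prop), lintegral_add_left (by fun_prop),
          lintegral_const_mul _ (by fun_prop), lintegral_const_mul _ (by fun_prop),
          lintegral_const_mul _ (by fun_prop)]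
    _ ≤ κ * ρ B + 3 * logEntropy π (3 * t) w + 3 * logEntropy π (3 * t) v := by
        gcongr
        · exact Measure.setLIntegral_rnDeriv_le B
        · exact setLIntegral_le_lintegral _ _
        · exact setLIntegral_le_lintegral _ _

theorem setLIntegral_mulLog_rnDeriv_eq [SigmaFinite π] [SigmaFinite ρ] (t : ℝ) (hac : ρ ≪ π)
    {B : Set α} (hB : MeasurableSet B) :
    ∫⁻ x in B, mulLog t (ρ.rnDeriv π x) ∂π =
      ∫⁻ x in B, ENNReal.ofReal (Real.log (1 + t * (ρ.rnDeriv π x).toReal)) ∂ρ :=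
  setLIntegral_rnDeriv_mul hac (by fun_prop) hB

end LogEntropy

section LogEntropyConvolution

variable {G : Type*} [AddGroup G] [MeasurableSpace G] [MeasurableAdd₂ G] [MeasurableNeg G]
  {π : Measure G} [SigmaFinite π] [π.IsAddLeftInvariant] {t : ℝ}

theorem logEntropy_conv_le (ht : 0 ≤ t) (κ ρ : Measure G) [IsFiniteMeasure κ]
    [IsFiniteMeasure ρ] (hac : ρ ≪ π) :
    logEntropy π t (κ ∗ ρ) ≤
      κ Set.univ * logEntropy π t ρ + κ Set.univ * (κ Set.univ * ρ Set.univ) := by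
  set f := ρ.rnDeriv π
  have hf : Measurable f := ρ.measurable_rnDeriv π
  set g : G → ℝ≥0∞ := fun y ↦ ∫⁻ x, f (-x + y) ∂κ
  have hg : Measurable g :=
    Measurable.lintegral_prod_right' (f := fun z : G × G ↦ f (-z.2 + z.1)) (by fun_prop)
  have hconv : κ ∗ ρ = π.withDensity g := by
    rw [← conv_withDensity κ π hf, Measure.withDensity_rnDeriv_eq _ _ hac]
  have hmass : ∫⁻ y, g y ∂π = κ Set.univ * ρ Set.univ := by
    rw [← conv_univ κ ρ, hconv, withDensity_apply _ MeasurableSet.univ, setLIntegral_univ]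
  have hfin : ∀ᵐ y ∂π, g y < ⊤ := ae_lt_top hg (by rw [hmass]; finiteness)
  calc logEntropy π t (κ ∗ ρ) ≤ ∫⁻ y, mulLog t (g y) ∂π :=
        logEntropy_le_lintegral ht (hfin.mono fun _ h ↦ h.ne) hconv.le
    _ ≤ ∫⁻ y, ∫⁻ x, mulLog t (f (-x + y)) ∂κ + κ Set.univ * g y ∂π := by
        refine lintegral_mono_ae (hfin.mono fun y hy ↦ ?_)
        exact mulLog_lintegral_le ht (by fun_prop) hy.ne
    _ = ∫⁻ y, ∫⁻ x, mulLog t (f (-x + y)) ∂κ ∂π + κ Set.univ * (κ Set.univ * ρ Set.univ) := by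
        rw [lintegral_add_right _ (hg.const_mul _), lintegral_const_mul _ hg, hmass]
    _ = ∫⁻ x, ∫⁻ y, mulLog t (f (-x + y)) ∂π ∂κ + κ Set.univ * (κ Set.univ * ρ Set.univ) := by
        rw [lintegral_lintegral_swap (by fun_prop)]
    _ = κ Set.univ * logEntropy π t ρ + κ Set.univ * (κ Set.univ * ρ Set.univ) := by
        simp_rw [lintegral_add_left_eq_self fun y ↦ mulLog t (f y)]
        rw [lintegral_const, mul_comm, logEntropy]

end LogEntropyConvolution

section EntropyRecursion

variable (μ : Measure ℝ) [IsProbabilityMeasure μ]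

/-- The expected number of visits of the random walk to a set before time `n`. -/
noncomputable def renewalSum (n : ℕ) : Measure ℝ := ∑ k ∈ Finset.range n, convPow μ k

theorem renewalSum_univ (n : ℕ) : renewalSum μ n Set.univ = n := by
  simp [renewalSum]

instance (n : ℕ) : IsFiniteMeasure (renewalSum μ n) :=
  ⟨by rw [renewalSum_univ]; finiteness⟩

theorem posMaxLaw_le_renewalSum_conv (n : ℕ) :
    posMaxLaw μ n ≤ renewalSum μ n ∗ μ.restrict (Set.Ioi 0) := by
  rw [posMaxLaw_eq_recentLaw, recentLaw, renewalSum, finsetSum_conv]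
  refine Finset.sum_le_sum fun k _ ↦ ?_
  rw [Measure.conv_comm]
  refine le_trans ?_ (killedLaw_succ_le μ k)
  calc maxAtom μ (n - 1 - k) • killedLaw μ (k + 1) ≤ (1 : ℝ≥0∞) • killedLaw μ (k + 1) := by
        gcongr
        exact maxAtom_le_one μ _
    _ = killedLaw μ (k + 1) := one_smul _ _

variable {μ}

theorem posMaxLaw_absolutelyContinuous (hac : μ ≪ volume) (n : ℕ) : posMaxLaw μ n ≪ volume :=
  (posMaxLaw_le_renewalSum_conv μ n).absolutelyContinuous.trans
    (Measure.conv_absolutelyContinuous (Measure.restrict_le_self.absolutelyContinuous.trans hac))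

theorem logEntropy_conv_posMaxLaw_le {t : ℝ} (ht : 0 ≤ t) (hac : μ ≪ volume) (κ : Measure ℝ)
    [IsFiniteMeasure κ] (n : ℕ) :
    logEntropy volume t (κ ∗ posMaxLaw μ n) ≤ κ Set.univ * n * (ENNReal.ofReal (Real.log (1 + t))
      + logEntropy volume 1 (μ.restrict (Set.Ioi 0)) + κ Set.univ * n) := by
  set ν := μ.restrict (Set.Ioi 0)
  have hν : ν ≪ volume := Measure.restrict_le_self.absolutelyContinuous.trans hac
  have hν_mass : ν Set.univ ≤ 1 := by
    rw [Measure.restrict_apply_univ]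
    exact prob_le_one
  have hle : κ ∗ posMaxLaw μ n ≤ (κ ∗ renewalSum μ n) ∗ ν := by
    rw [Measure.conv_assoc]
    exact conv_mono le_rfl (posMaxLaw_le_renewalSum_conv μ n)
  have hscale := logEntropy_mul_left_le ht zero_le_one volume ν
  rw [mul_one] at hscale
  calc logEntropy volume t (κ ∗ posMaxLaw μ n)
      ≤ logEntropy volume t ((κ ∗ renewalSum μ n) ∗ ν) :=
        logEntropy_mono ht (Measure.conv_absolutelyContinuous hν) hle
    _ ≤ κ Set.univ * n * (logEntropy volume t ν + κ Set.univ * n * ν Set.univ) := by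
        rw [mul_add, ← renewalSum_univ μ n, ← conv_univ]
        exact logEntropy_conv_le ht _ _ hν
    _ ≤ κ Set.univ * n * (ENNReal.ofReal (Real.log (1 + t)) * 1 + logEntropy volume 1 ν
          + κ Set.univ * n * 1) := by
        gcongr
        exact hscale.trans (by gcongr)
    _ = _ := by rw [mul_one, mul_one]

theorem logEntropy_posMaxLaw_ne_top {t : ℝ} (ht : 0 ≤ t) (hac : μ ≪ volume)
    (hfin : logEntropy volume 1 (μ.restrict (Set.Ioi 0)) ≠ ⊤) (n : ℕ) :
    logEntropy volume t (posMaxLaw μ n) ≠ ⊤ := by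
  have hle := logEntropy_conv_posMaxLaw_le ht hac (Measure.dirac 0) n
  rw [Measure.dirac_zero_conv] at hle
  exact ne_top_of_le_ne_top (by finiteness) hle

theorem tendsto_pow_mul_pow_div {θ : ℝ} (hθ₀ : 0 ≤ θ) (hθ₁ : θ < 1) {L : ℕ} (hL : L ≠ 0) (k : ℕ) :
    Tendsto (fun n : ℕ ↦ (n : ℝ) ^ k * θ ^ (n / L)) atTop (nhds 0) := by
  have hgeom := ((tendsto_pow_const_mul_const_pow_of_abs_lt_one k
    (by rwa [abs_of_nonneg hθ₀])).const_mul ((2 * L : ℝ) ^ k)).comp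
      (Nat.tendsto_div_const_atTop hL)
  rw [mul_zero] at hgeom
  refine squeeze_zero' (Eventually.of_forall fun n ↦ by positivity) ?_ hgeom
  filter_upwards [eventually_ge_atTop L] with n hn
  have hdiv : n ≤ 2 * L * (n / L) := by
    have hlt := Nat.lt_mul_div_succ n (Nat.pos_of_ne_zero hL)
    have hone := (Nat.one_le_div_iff (Nat.pos_of_ne_zero hL)).2 hn
    nlinarith
  rw [Function.comp_apply, ← mul_assoc, ← mul_pow]
  gcongr
  exact_mod_cast hdiv

theorem tendsto_mul_pow_div_mul_log_add {θ : ℝ} (hθ₀ : 0 ≤ θ) (hθ₁ : θ < 1) {L : ℕ} (hL : L ≠ 0)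
    (a : ℝ) : Tendsto (fun n : ℕ ↦ θ ^ (n / L) * n *
      (Real.log (1 + 3 * √n) + a + θ ^ (n / L) * n)) atTop (nhds 0) := by
  have hlin : Tendsto (fun n : ℕ ↦ θ ^ (n / L) * n) atTop (nhds 0) := by
    simpa only [pow_one, mul_comm] using tendsto_pow_mul_pow_div hθ₀ hθ₁ hL 1
  have hlog : Tendsto (fun n : ℕ ↦ θ ^ (n / L) * n * Real.log (1 + 3 * √n)) atTop (nhds 0) := by
    have hquad := (tendsto_pow_mul_pow_div hθ₀ hθ₁ hL 2).const_mul 3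
    rw [mul_zero] at hquad
    refine squeeze_zero (fun n ↦ mul_nonneg (by positivity) (Real.log_nonneg (by simp)))
      (fun n ↦ ?_) hquad
    have hlog_le : Real.log (1 + 3 * √n) ≤ 3 * n := by
      have hsub := Real.log_le_sub_one_of_pos (show 0 < 1 + 3 * √(n : ℝ) by positivity)
      have hsqrt : √(n : ℝ) ≤ n := by
        rw [Real.sqrt_le_left (by positivity)]
        exact_mod_cast Nat.le_self_pow two_ne_zero n
      linarith
    calc θ ^ (n / L) * n * Real.log (1 + 3 * √n) ≤ θ ^ (n / L) * n * (3 * n) := by gcongr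
      _ = 3 * ((n : ℝ) ^ 2 * θ ^ (n / L)) := by ring
  have hsum := (hlog.add (hlin.mul_const a)).add (hlin.mul hlin)
  simp only [zero_mul, add_zero] at hsum
  exact hsum.congr fun n ↦ by ring

theorem eventually_logEntropy_conv_posMaxLaw_le (hac : μ ≪ volume)
    (hfin : logEntropy volume 1 (μ.restrict (Set.Ioi 0)) ≠ ⊤) {θ : ℝ} (hθ₀ : 0 ≤ θ) (hθ₁ : θ < 1)
    {L : ℕ} (hL : L ≠ 0) {η : ℝ} (hη : 0 < η) :
    ∀ᶠ n : ℕ in atTop, ∀ κ : Measure ℝ, IsFiniteMeasure κ →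
      κ Set.univ ≤ ENNReal.ofReal (θ ^ (n / L)) → ∀ k ≤ n,
      logEntropy volume (3 * √n) (κ ∗ posMaxLaw μ k) ≤ ENNReal.ofReal η := by
  set A := logEntropy volume 1 (μ.restrict (Set.Ioi 0))
  filter_upwards [(tendsto_mul_pow_div_mul_log_add hθ₀ hθ₁ hL A.toReal).eventually_le_const hη]
    with n hn κ hκ hmass k hk
  have hlog : 0 ≤ Real.log (1 + 3 * √n) := Real.log_nonneg (by simp)
  have hcoeff : κ Set.univ * k ≤ ENNReal.ofReal (θ ^ (n / L) * n) := by
    rw [ENNReal.ofReal_mul (by positivity), ENNReal.ofReal_natCast]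
    gcongr
  calc logEntropy volume (3 * √n) (κ ∗ posMaxLaw μ k)
      ≤ κ Set.univ * k * (ENNReal.ofReal (Real.log (1 + 3 * √n)) + A + κ Set.univ * k) :=
        logEntropy_conv_posMaxLaw_le (by positivity) hac κ k
    _ ≤ ENNReal.ofReal (θ ^ (n / L) * n) * (ENNReal.ofReal (Real.log (1 + 3 * √n))
          + ENNReal.ofReal A.toReal + ENNReal.ofReal (θ ^ (n / L) * n)) := by
        rw [ENNReal.ofReal_toReal hfin]
        gcongr
    _ = ENNReal.ofReal (θ ^ (n / L) * n *
          (Real.log (1 + 3 * √n) + A.toReal + θ ^ (n / L) * n)) := by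
        rw [← ENNReal.ofReal_add hlog (by positivity), ← ENNReal.ofReal_add (by positivity)
          (by positivity), ← ENNReal.ofReal_mul (by positivity)]
    _ ≤ ENNReal.ofReal η := ENNReal.ofReal_le_ofReal hn

theorem posMaxLaw_le_smul_volume_add (h : μ (Set.Iic 0) ≠ 0) {n m : ℕ} (hmn : m ≤ n)
    {c : ℝ≥0∞} {κ : Measure ℝ} [IsFiniteMeasure κ] (hle : convPow μ m ≤ c • volume + κ) :
    posMaxLaw μ n ≤ c • volume + κ ∗ posMaxLaw μ (n - m)
      + (maxAtom μ (n - m) / maxAtom μ m) • posMaxLaw μ m := by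
  rw [posMaxLaw_eq_add μ hmn, add_comm]
  refine add_le_add ?_ (recentLaw_le μ h hmn)
  calc (killedStep μ)^[m] (posMaxLaw μ (n - m))
      ≤ posMaxLaw μ (n - m) ∗ convPow μ m := iterate_killedStep_le μ _ m
    _ ≤ posMaxLaw μ (n - m) ∗ (c • volume + κ) := conv_mono le_rfl hle
    _ = (c * posMaxLaw μ (n - m) Set.univ) • volume + κ ∗ posMaxLaw μ (n - m) := by
        rw [Measure.conv_add, Measure.conv_smul_right, conv_eq_smul_of_isAddLeftInvariant,
          smul_smul, Measure.conv_comm κ]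
    _ ≤ c • volume + κ ∗ posMaxLaw μ (n - m) := by
        gcongr ?_ • volume + _
        exact mul_le_of_le_one_right' (posMaxLaw_univ_le μ _)

theorem sqrt_le_mul_sqrt_div {j n : ℕ} (hj : 1 ≤ j) (hn : j ^ 4 + 2 ≤ n) :
    √(n : ℝ) ≤ 3 * j ^ 2 * √(n / (j ^ 4 + 2) : ℕ) := by
  set m := n / (j ^ 4 + 2)
  have hle : n ≤ 9 * j ^ 4 * m := by
    have hm : 1 ≤ m := (Nat.one_le_div_iff (by omega)).2 hn
    have hlt : n < (j ^ 4 + 2) * (m + 1) := Nat.lt_mul_div_succ n (by omega)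
    have hj4 : 1 ≤ j ^ 4 := Nat.one_le_pow _ _ hj
    nlinarith
  refine Real.sqrt_le_iff.2 ⟨by positivity, ?_⟩
  rw [mul_pow, Real.sq_sqrt (by positivity)]
  calc (n : ℝ) ≤ 9 * j ^ 4 * m := by exact_mod_cast hle
    _ = (3 * j ^ 2) ^ 2 * m := by ring

theorem log_one_add_nine_mul_sq_le {x : ℝ} (hx : 1 ≤ x) :
    Real.log (1 + 9 * x ^ 2) ≤ 8 * √x := by
  have hlog : Real.log (1 + 3 * x) / 2 ≤ √(1 + 3 * x) := by
    rw [← Real.log_sqrt (by linarith)]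
    exact Real.log_le_self (Real.sqrt_nonneg _)
  have hsqrt : √(1 + 3 * x) ≤ 2 * √x := by
    rw [Real.sqrt_le_left (by positivity), mul_pow, Real.sq_sqrt (by linarith)]
    linarith
  calc Real.log (1 + 9 * x ^ 2) ≤ Real.log ((1 + 3 * x) ^ 2) :=
        Real.log_le_log (by positivity) (by nlinarith)
    _ = 2 * Real.log (1 + 3 * x) := by rw [Real.log_pow, Nat.cast_ofNat]
    _ ≤ 8 * √x := by linarith

theorem logEntropy_smul_posMaxLaw_le {j n m : ℕ} (hj : 1 ≤ j) (hm : 1 ≤ m)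
    (hn : √(n : ℝ) ≤ 3 * j ^ 2 * √m) {r : ℝ≥0∞} (hr : r ≤ 1) :
    logEntropy volume (3 * √n) (r • posMaxLaw μ m) ≤
      r * (ENNReal.ofReal (8 * √j) + logEntropy volume √m (posMaxLaw μ m)) := by
  have hm_pos : 0 < √(m : ℝ) := by positivity
  have hratio : 3 * √n / √m ≤ 9 * (j : ℝ) ^ 2 := by
    rw [div_le_iff₀ hm_pos]
    linarith
  have hlog : Real.log (1 + 3 * √n / √m) ≤ 8 * √j :=
    (log_one_add_le_log_one_add (by positivity) hratio).trans
      (log_one_add_nine_mul_sq_le (by exact_mod_cast hj))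
  refine (logEntropy_smul_le_of_le_one (by positivity) hr).trans ?_
  gcongr
  calc logEntropy volume (3 * √n) (posMaxLaw μ m)
      = logEntropy volume (3 * √n / √m * √m) (posMaxLaw μ m) := by
        rw [div_mul_cancel₀ _ hm_pos.ne']
    _ ≤ ENNReal.ofReal (Real.log (1 + 3 * √n / √m)) * posMaxLaw μ m Set.univ
          + logEntropy volume √m (posMaxLaw μ m) :=
        logEntropy_mul_left_le (by positivity) hm_pos.le _ _
    _ ≤ ENNReal.ofReal (8 * √j) + logEntropy volume √m (posMaxLaw μ m) := by
        gcongr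
        exact (mul_le_of_le_one_right' (posMaxLaw_univ_le μ m)).trans
          (ENNReal.ofReal_le_ofReal hlog)

theorem three_mul_logEntropy_smul_posMaxLaw_le {j n m : ℕ} (hj : 1 ≤ j)
    (hm : 1 ≤ m) (hn : √(n : ℝ) ≤ 3 * j ^ 2 * √m) {r : ℝ≥0∞} {δ ε : ℝ} (hr : r ≤ ENNReal.ofReal δ)
    (hδ : 0 ≤ δ) (hδ_one : δ ≤ 1) (hδ_lin : 3 * δ ≤ ε) (hδ_sqrt : 3 * (δ * (8 * √j)) ≤ ε) :
    3 * logEntropy volume (3 * √n) (r • posMaxLaw μ m) ≤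
      ENNReal.ofReal ε * (1 + logEntropy volume √m (posMaxLaw μ m)) := by
  set a := logEntropy volume √m (posMaxLaw μ m)
  have hr_one : r ≤ 1 := hr.trans (by simpa using hδ_one)
  calc 3 * logEntropy volume (3 * √n) (r • posMaxLaw μ m)
      ≤ 3 * (ENNReal.ofReal δ * (ENNReal.ofReal (8 * √j) + a)) := by
        gcongr
        exact (logEntropy_smul_posMaxLaw_le hj hm hn hr_one).trans (by gcongr)
    _ = ENNReal.ofReal (3 * (δ * (8 * √j))) + ENNReal.ofReal (3 * δ) * a := by
        rw [ENNReal.ofReal_mul zero_le_three, ENNReal.ofReal_mul (p := δ) hδ,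
          ENNReal.ofReal_mul zero_le_three, ENNReal.ofReal_ofNat]
        ring
    _ ≤ ENNReal.ofReal ε * (1 + a) := by
        rw [mul_add, mul_one]
        gcongr

theorem maxAtom_div_maxAtom_le (h : μ (Set.Iic 0) ≠ 0) {k m n : ℕ} {c : ℝ≥0∞} (hkn : k + m ≤ n)
    (hk : maxAtom μ k ≤ c * maxAtom μ m) : maxAtom μ (n - m) / maxAtom μ m ≤ c := by
  rw [ENNReal.div_le_iff (maxAtom_ne_zero μ h m) (maxAtom_ne_top μ m)]
  exact (maxAtom_antitone μ (Nat.le_sub_of_add_le hkn)).trans hk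

theorem exists_nat_div_le_and_div_sqrt_le (C : ℝ) {ε : ℝ} (hε : 0 < ε) :
    ∃ j : ℕ, 1 ≤ j ∧ C / j ≤ 1 ∧ 3 * (C / j) ≤ ε ∧ 3 * (C / j * (8 * √j)) ≤ ε := by
  have hdiv : Tendsto (fun j : ℕ ↦ C / (j : ℝ)) atTop (nhds 0) :=
    tendsto_const_nhds.div_atTop tendsto_natCast_atTop_atTop
  have hsqrt : Tendsto (fun j : ℕ ↦ 3 * (C / (j : ℝ) * (8 * √j))) atTop (nhds 0) := by
    have hlim : Tendsto (fun j : ℕ ↦ 24 * C / √(j : ℝ)) atTop (nhds 0) :=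
      tendsto_const_nhds.div_atTop (Real.tendsto_sqrt_atTop.comp tendsto_natCast_atTop_atTop)
    refine hlim.congr fun j ↦ ?_
    rw [div_eq_mul_inv, ← Real.sqrt_div_self]
    ring
  have hthree := hdiv.const_mul 3
  rw [mul_zero] at hthree
  exact ((eventually_ge_atTop 1).and <| (hdiv.eventually_le_const one_pos).and <|
    (hthree.eventually_le_const hε).and (hsqrt.eventually_le_const hε)).exists

theorem setLIntegral_mulLog_posMaxLaw_le_add_mul (h : μ (Set.Iic 0) ≠ 0) (hac : μ ≪ volume)
    {j n m : ℕ} (hj : 1 ≤ j) (hm : 1 ≤ m) (hmn : m ≤ n) (hn : √(n : ℝ) ≤ 3 * j ^ 2 * √m)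
    {D δ ε : ℝ} (hD : 0 ≤ D) {κ : Measure ℝ} [IsFiniteMeasure κ]
    (hκ : convPow μ m ≤ ENNReal.ofReal (D / √m) • volume + κ)
    (hκ_entropy : logEntropy volume (3 * √n) (κ ∗ posMaxLaw μ (n - m)) ≤ ENNReal.ofReal (ε / 6))
    (hr : maxAtom μ (n - m) / maxAtom μ m ≤ ENNReal.ofReal δ) (hδ : 0 ≤ δ) (hδ_one : δ ≤ 1)
    (hδ_lin : 3 * δ ≤ ε / 2) (hδ_sqrt : 3 * (δ * (8 * √j)) ≤ ε / 2) (B : Set ℝ) :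
    ∫⁻ x in B, mulLog √n ((posMaxLaw μ n).rnDeriv volume x) ≤
      ENNReal.ofReal (Real.log (1 + 9 * j ^ 2 * D)) * posMaxLaw μ n B
        + ENNReal.ofReal ε * (1 + logEntropy volume √m (posMaxLaw μ m)) := by
  set r := maxAtom μ (n - m) / maxAtom μ m
  have : IsFiniteMeasure (r • posMaxLaw μ m) :=
    Measure.smul_finite _ (ne_top_of_le_ne_top ENNReal.ofReal_ne_top hr)
  have hlog : Real.log (1 + 3 * √n * (D / √m)) ≤ Real.log (1 + 9 * j ^ 2 * D) := by
    refine log_one_add_le_log_one_add (by positivity) ?_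
    rw [← mul_div_assoc, div_le_iff₀ (by positivity)]
    nlinarith
  have hε : 0 ≤ ε := by linarith
  set b := ENNReal.ofReal (ε / 2) * (1 + logEntropy volume √m (posMaxLaw μ m)) with hb
  have hκ_b : 3 * ENNReal.ofReal (ε / 6) ≤ b := by
    rw [← ENNReal.ofReal_ofNat, ← ENNReal.ofReal_mul (by norm_num)]
    exact (ENNReal.ofReal_le_ofReal (by linarith)).trans (le_mul_of_one_le_right' le_self_add)
  calc ∫⁻ x in B, mulLog √n ((posMaxLaw μ n).rnDeriv volume x)
      ≤ ENNReal.ofReal (Real.log (1 + 3 * √n * (D / √m))) * posMaxLaw μ n B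
          + 3 * logEntropy volume (3 * √n) (κ ∗ posMaxLaw μ (n - m))
          + 3 * logEntropy volume (3 * √n) (r • posMaxLaw μ m) :=
        setLIntegral_mulLog_rnDeriv_le (by positivity) (by positivity)
          (Measure.conv_absolutelyContinuous (posMaxLaw_absolutelyContinuous hac _))
          ((posMaxLaw_absolutelyContinuous hac m).smul_left r)
          (posMaxLaw_le_smul_volume_add h hmn hκ) B
    _ ≤ ENNReal.ofReal (Real.log (1 + 9 * j ^ 2 * D)) * posMaxLaw μ n B + b + b := by
        gcongr
        · exact (mul_le_mul_right hκ_entropy 3).trans hκ_b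
        · exact three_mul_logEntropy_smul_posMaxLaw_le hj hm hn hr hδ hδ_one hδ_lin hδ_sqrt
    _ = _ := by
        rw [add_assoc, hb, ← add_mul, ← ENNReal.ofReal_add (by positivity) (by positivity),
          add_halves]

theorem exists_eventually_setLIntegral_mulLog_posMaxLaw_le_add_mul (hμ : IsStandardized μ)
    (hac : μ ≪ volume) (hfin : logEntropy volume 1 (μ.restrict (Set.Ioi 0)) ≠ ⊤)
    {ε : ℝ} (hε : 0 < ε) :
    ∃ Λ : ℝ, ∀ᶠ n : ℕ in atTop, ∃ m < n, ∀ B : Set ℝ,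
      ∫⁻ x in B, mulLog √n ((posMaxLaw μ n).rnDeriv volume x) ≤
        ENNReal.ofReal Λ * posMaxLaw μ n B
          + ENNReal.ofReal ε * (1 + logEntropy volume √m (posMaxLaw μ m)) := by
  obtain ⟨C, hC, hatom⟩ := exists_eventually_maxAtom_le hμ
  obtain ⟨D, θ, hD, hθ₀, hθ₁, hlocal⟩ := exists_convPow_le_smul_volume_add_pow hac
  obtain ⟨j, hj, hj_one, hj_lin, hj_sqrt⟩ := exists_nat_div_le_and_div_sqrt_le C (half_pos hε)
  have hneg : μ (Set.Iic 0) ≠ 0 := hμ.measure_Iic_zero_ne_zero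
  refine ⟨Real.log (1 + 9 * j ^ 2 * D), ?_⟩
  have hdiv : Tendsto (fun n : ℕ ↦ n / (j ^ 4 + 2)) atTop atTop :=
    Nat.tendsto_div_const_atTop (by omega)
  filter_upwards [hdiv.eventually (hatom j hj), eventually_ge_atTop (j ^ 4 + 2),
    eventually_logEntropy_conv_posMaxLaw_le hac hfin hθ₀ hθ₁ (L := (j ^ 4 + 2) * 2) (by omega)
      (show 0 < ε / 6 by positivity)] with n hatom hn herror
  have hsqrt := sqrt_le_mul_sqrt_div hj hn
  rw [← Nat.div_div_eq_div_mul] at herror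
  set m := n / (j ^ 4 + 2)
  have hm : 1 ≤ m := (Nat.one_le_div_iff (by omega)).2 hn
  have hmn : m < n := Nat.div_lt_self (by omega) (by omega)
  have hmul : (j ^ 4 + 2) * m ≤ n := Nat.mul_div_le n _
  obtain ⟨κ, hκ, hκ_le, hκ_mass⟩ := hlocal m hm
  exact ⟨m, hmn, setLIntegral_mulLog_posMaxLaw_le_add_mul hneg hac hj hm hmn.le hsqrt hD.le hκ_le
    (herror κ hκ hκ_mass (n - m) (n.sub_le m)) (maxAtom_div_maxAtom_le hneg (by linarith) hatom)
    (by positivity) hj_one hj_lin hj_sqrt⟩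

theorem exists_bound_of_eventually_le_add_half {a : ℕ → ℝ≥0∞} (ha : ∀ n, a n ≠ ⊤) {K : ℝ≥0∞}
    (hK : K ≠ ⊤) (h : ∀ᶠ n in atTop, ∃ m < n, a n ≤ K + 2⁻¹ * a m) :
    ∃ M ≠ ⊤, ∀ n, a n ≤ M := by
  obtain ⟨N, hN⟩ := eventually_atTop.1 h
  set M := 2 * K + ∑ n ∈ Finset.range N, a n
  have hKM : K ≤ 2⁻¹ * M := by
    rw [mul_add, ← mul_assoc, ENNReal.inv_mul_cancel two_ne_zero ENNReal.ofNat_ne_top, one_mul]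
    exact le_self_add
  refine ⟨M, ENNReal.add_ne_top.2 ⟨by finiteness, ENNReal.sum_ne_top.2 fun n _ ↦ ha n⟩, fun n ↦ ?_⟩
  induction n using Nat.strong_induction_on with
  | _ n ih =>
    rcases lt_or_ge n N with hn | hn
    · exact le_add_left (Finset.single_le_sum (fun _ _ ↦ zero_le) (Finset.mem_range.2 hn))
    · obtain ⟨m, hmn, hle⟩ := hN n hn
      calc a n ≤ 2⁻¹ * M + 2⁻¹ * M := hle.trans (by gcongr; exact ih m hmn)
        _ = M := by rw [← add_mul, ENNReal.inv_two_add_inv_two, one_mul]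

theorem exists_logEntropy_posMaxLaw_le (hμ : IsStandardized μ)
    (hac : μ ≪ volume) (hfin : logEntropy volume 1 (μ.restrict (Set.Ioi 0)) ≠ ⊤) :
    ∃ M ≠ ⊤, ∀ n : ℕ, logEntropy volume √n (posMaxLaw μ n) ≤ M := by
  obtain ⟨Λ, hΛ⟩ := exists_eventually_setLIntegral_mulLog_posMaxLaw_le_add_mul hμ hac hfin
    (half_pos one_pos)
  have hhalf : ENNReal.ofReal (1 / 2) = 2⁻¹ := by
    rw [one_div, ENNReal.ofReal_inv_of_pos two_pos, ENNReal.ofReal_ofNat]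
  refine exists_bound_of_eventually_le_add_half (K := ENNReal.ofReal Λ + 2⁻¹)
    (fun n ↦ logEntropy_posMaxLaw_ne_top (by positivity) hac hfin n) (by finiteness) ?_
  filter_upwards [hΛ] with n ⟨m, hmn, hle⟩
  refine ⟨m, hmn, ?_⟩
  have huniv := hle Set.univ
  rw [setLIntegral_univ, hhalf, mul_add, mul_one, ← add_assoc] at huniv
  refine huniv.trans ?_
  gcongr
  exact mul_le_of_le_one_right' (posMaxLaw_univ_le μ n)

theorem exists_eventually_setLIntegral_mulLog_posMaxLaw_le (hμ : IsStandardized μ)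
    (hac : μ ≪ volume) (hfin : logEntropy volume 1 (μ.restrict (Set.Ioi 0)) ≠ ⊤)
    {ε : ℝ} (hε : 0 < ε) :
    ∃ Λ : ℝ, ∀ᶠ n : ℕ in atTop, ∀ B : Set ℝ,
      ∫⁻ x in B, mulLog √n ((posMaxLaw μ n).rnDeriv volume x) ≤
        ENNReal.ofReal Λ * posMaxLaw μ n B + ENNReal.ofReal ε := by
  obtain ⟨M, hM, hbound⟩ := exists_logEntropy_posMaxLaw_le hμ hac hfin
  have hpos : 0 < 1 + M.toReal := by positivity
  obtain ⟨Λ, hΛ⟩ := exists_eventually_setLIntegral_mulLog_posMaxLaw_le_add_mul hμ hac hfin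
    (div_pos hε hpos)
  refine ⟨Λ, hΛ.mono fun n ⟨m, _, hle⟩ B ↦ (hle B).trans ?_⟩
  gcongr
  calc ENNReal.ofReal (ε / (1 + M.toReal)) * (1 + logEntropy volume √m (posMaxLaw μ m))
      ≤ ENNReal.ofReal (ε / (1 + M.toReal)) * ENNReal.ofReal (1 + M.toReal) := by
        rw [ENNReal.ofReal_add zero_le_one ENNReal.toReal_nonneg, ENNReal.ofReal_one,
          ENNReal.ofReal_toReal hM]
        gcongr
        exact hbound m
    _ = ENNReal.ofReal ε := by
        rw [← ENNReal.ofReal_mul (by positivity), div_mul_cancel₀ _ hpos.ne']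

end EntropyRecursion

section RelativeEntropy

variable {ν π : Measure ℝ} [IsProbabilityMeasure ν]

theorem TVDistLE.measure_lt_llr_le {κ η : ℝ} (h : TVDistLE ν π κ) (hη : 0 < η) :
    ν {x | η < llr ν π x} ≤ ENNReal.ofReal (κ * (1 + η) / η) := by
  set B := {x | η < llr ν π x}
  have hB : MeasurableSet B := measurableSet_lt measurable_const (measurable_llr ν π)
  have hdens : ∀ x ∈ B, ENNReal.ofReal (1 + η) ≤ ν.rnDeriv π x := by
    intro x (hx : η < Real.log (ν.rnDeriv π x).toReal)
    have hpos : 0 < (ν.rnDeriv π x).toReal :=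
      lt_of_not_ge fun hle ↦ by
        rw [le_antisymm hle ENNReal.toReal_nonneg, Real.log_zero] at hx
        exact hη.not_gt hx
    refine (ENNReal.ofReal_le_ofReal ?_).trans ENNReal.ofReal_toReal_le
    linarith [Real.log_le_sub_one_of_pos hpos]
  have hmass : ENNReal.ofReal (1 + η) * π B ≤ ν B := calc
    ENNReal.ofReal (1 + η) * π B = ∫⁻ _ in B, ENNReal.ofReal (1 + η) ∂π := by
      rw [setLIntegral_const]
    _ ≤ ∫⁻ x in B, ν.rnDeriv π x ∂π := setLIntegral_mono (by fun_prop) hdens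
    _ ≤ ν B := Measure.setLIntegral_rnDeriv_le B
  have hreal : (1 + η) * π.real B ≤ ν.real B := by
    have := ENNReal.toReal_mono (measure_ne_top ν B) hmass
    rwa [ENNReal.toReal_mul, ENNReal.toReal_ofReal (by positivity)] at this
  have hdiff := (abs_le.1 (h.abs_measureReal_sub_le hB)).2
  rw [← ofReal_measureReal]
  refine ENNReal.ofReal_le_ofReal ((le_div_iff₀ hη).2 ?_)
  nlinarith

variable [IsProbabilityMeasure π]

theorem integrable_llr_of_lintegral_ofReal_ne_top (hac : ν ≪ π)
    (h : ∫⁻ x, ENNReal.ofReal (llr ν π x) ∂ν ≠ ⊤) : Integrable (llr ν π) ν := by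
  rw [← InformationTheory.integrable_klFun_rnDeriv_iff hac]
  refine ⟨(InformationTheory.measurable_klFun.comp
    (ν.measurable_rnDeriv π).ennreal_toReal).aestronglyMeasurable, ?_⟩
  rw [hasFiniteIntegral_iff_ofReal
    (ae_of_all _ fun x ↦ InformationTheory.klFun_nonneg ENNReal.toReal_nonneg)]
  calc ∫⁻ x, ENNReal.ofReal (InformationTheory.klFun (ν.rnDeriv π x).toReal) ∂π
      ≤ ∫⁻ x, ν.rnDeriv π x * ENNReal.ofReal (llr ν π x) + 1 ∂π := by
        refine lintegral_mono fun x ↦ ?_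
        set a := ν.rnDeriv π x
        have hle : InformationTheory.klFun a.toReal ≤ a.toReal * llr ν π x + 1 :=
          sub_le_self _ ENNReal.toReal_nonneg
        refine (ENNReal.ofReal_le_ofReal hle).trans (ENNReal.ofReal_add_le.trans ?_)
        rw [ENNReal.ofReal_one, ENNReal.ofReal_mul ENNReal.toReal_nonneg]
        gcongr
        exact ENNReal.ofReal_toReal_le
    _ = ∫⁻ x, ENNReal.ofReal (llr ν π x) ∂ν + 1 := by
        rw [lintegral_add_right _ measurable_const, lintegral_const, measure_univ, mul_one,
          lintegral_rnDeriv_mul hac (measurable_llr ν π).ennreal_ofReal.aemeasurable]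
    _ < ⊤ := by finiteness

theorem KL_le_lintegral_ofReal_llr (hac : ν ≪ π) :
    KL ν π ≤ ∫⁻ x, ENNReal.ofReal (llr ν π x) ∂ν := by
  by_cases htop : ∫⁻ x, ENNReal.ofReal (llr ν π x) ∂ν = ⊤
  · exact htop ▸ le_top
  have hint := integrable_llr_of_lintegral_ofReal_ne_top hac htop
  rw [KL, if_pos ⟨hac, hint⟩, integral_eq_lintegral_pos_part_sub_lintegral_neg_part hint]
  exact (ENNReal.ofReal_le_ofReal (sub_le_self _ ENNReal.toReal_nonneg)).trans
    ENNReal.ofReal_toReal_le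

theorem KL_le_ofReal_add_setLIntegral (hac : ν ≪ π) (η : ℝ) :
    KL ν π ≤ ENNReal.ofReal η + ∫⁻ x in {x | η < llr ν π x}, ENNReal.ofReal (llr ν π x) ∂ν := by
  have hB : MeasurableSet {x | η < llr ν π x} :=
    measurableSet_lt measurable_const (measurable_llr ν π)
  calc KL ν π ≤ ∫⁻ x, ENNReal.ofReal (llr ν π x) ∂ν := KL_le_lintegral_ofReal_llr hac
    _ ≤ ∫⁻ x, ENNReal.ofReal η
          + {x | η < llr ν π x}.indicator (fun x ↦ ENNReal.ofReal (llr ν π x)) x ∂ν := by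
        refine lintegral_mono fun x ↦ ?_
        by_cases hx : η < llr ν π x
        · rw [Set.indicator_of_mem (by exact hx)]
          exact le_add_self
        · exact (ENNReal.ofReal_le_ofReal (not_lt.1 hx)).trans le_self_add
    _ = ENNReal.ofReal η + ∫⁻ x in {x | η < llr ν π x}, ENNReal.ofReal (llr ν π x) ∂ν := by
        rw [lintegral_add_left measurable_const, lintegral_indicator hB, lintegral_const,
          measure_univ, mul_one]

end RelativeEntropy

section HalfNormalDensity

theorem halfNormal_rnDeriv_volume :
    ∀ᵐ x, 0 < x → halfNormal.rnDeriv volume x = 2 * gaussianPDF 0 1 x := by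
  have hsmul := Measure.rnDeriv_smul_left_of_ne_top ((gaussianReal 0 1).restrict (Set.Ioi 0))
    volume (ENNReal.ofNat_ne_top (n := 2))
  rw [← halfNormal_eq_smul_restrict] at hsmul
  filter_upwards [hsmul, Measure.rnDeriv_restrict (gaussianReal 0 1) volume measurableSet_Ioi,
    rnDeriv_gaussianReal 0 1] with x hx hx' hx'' hpos
  rw [hx, Pi.smul_apply, hx', Set.indicator_of_mem (by exact hpos), hx'', smul_eq_mul]

theorem log_two_mul_gaussianPDFReal_mem_Icc (x : ℝ) :
    Real.log (2 * gaussianPDFReal 0 1 x) ∈ Set.Icc (-(1 + x ^ 2)) 0 := by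
  have hlog : Real.log (2 * gaussianPDFReal 0 1 x) =
      Real.log 2 - Real.log √(2 * Real.pi) - x ^ 2 / 2 := by
    rw [gaussianPDFReal, Real.log_mul (by norm_num) (by positivity),
      Real.log_mul (by positivity) (by positivity), Real.log_inv, Real.log_exp]
    simp only [NNReal.coe_one, mul_one, sub_zero]
    ring
  have hlower : Real.log 2 ≤ Real.log √(2 * Real.pi) :=
    Real.log_le_log (by norm_num) (Real.le_sqrt_of_sq_le (by linarith [Real.pi_gt_three]))
  have hupper : Real.log √(2 * Real.pi) ≤ Real.log 2 + Real.log 2 := by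
    rw [← Real.log_mul two_ne_zero two_ne_zero]
    exact Real.log_le_log (by positivity)
      (Real.sqrt_le_iff.2 ⟨by norm_num, by linarith [Real.pi_lt_four]⟩)
  rw [hlog]
  constructor <;> nlinarith [Real.log_two_lt_d9]

variable {ν : Measure ℝ}

theorem absolutelyContinuous_halfNormal (hac : ν ≪ volume) (h0 : ν (Set.Iic 0) = 0) :
    ν ≪ halfNormal := by
  have hIoi : ν.restrict (Set.Ioi 0) = ν := by
    rw [Measure.restrict_eq_self_of_ae_mem]
    rw [ae_iff]
    convert h0 using 2
    ext x
    simp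
  rw [halfNormal_eq_smul_restrict, ← hIoi]
  exact ((hac.trans (gaussianReal_absolutelyContinuous' 0 one_ne_zero)).restrict _).trans
    (Measure.absolutelyContinuous_smul two_ne_zero)

variable [IsProbabilityMeasure ν]

theorem ae_llr_halfNormal_mem_Icc (hac : ν ≪ volume) (h0 : ν (Set.Iic 0) = 0) :
    ∀ᵐ x ∂ν, llr ν halfNormal x ∈
      Set.Icc (llr ν volume x) (llr ν volume x + (1 + x ^ 2)) := by
  have hpos : ∀ᵐ x ∂ν, x ∉ Set.Iic 0 := measure_eq_zero_iff_ae_notMem.1 h0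
  have hhn := absolutelyContinuous_halfNormal hac h0
  filter_upwards [hac.ae_le (Measure.rnDeriv_mul_rnDeriv (κ := volume) hhn),
    hac.ae_le halfNormal_rnDeriv_volume, hpos, Measure.rnDeriv_pos hac,
    hac.ae_le (ν.rnDeriv_lt_top volume)] with x hchain hdens hx hf hf_top
  have hx' := hdens (by simpa using hx)
  obtain ⟨hlow, hup⟩ := log_two_mul_gaussianPDFReal_mem_Icc x
  have hreal : (ν.rnDeriv volume x).toReal =
      (ν.rnDeriv halfNormal x).toReal * (2 * gaussianPDFReal 0 1 x) := by
    rw [← hchain, Pi.mul_apply, hx', ENNReal.toReal_mul, ENNReal.toReal_mul, toReal_gaussianPDF,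
      ENNReal.toReal_ofNat]
  have hne := (ENNReal.toReal_pos hf.ne' hf_top.ne).ne'
  have hsum : llr ν volume x =
      llr ν halfNormal x + Real.log (2 * gaussianPDFReal 0 1 x) := by
    rw [hreal] at hne
    rw [llr, llr, hreal, Real.log_mul (left_ne_zero_of_mul hne) (right_ne_zero_of_mul hne)]
  constructor <;> linarith

theorem setLIntegral_ofReal_llr_halfNormal_le (hac : ν ≪ volume) (h0 : ν (Set.Iic 0) = 0)
    {B : Set ℝ} (hB : MeasurableSet B) :
    ∫⁻ x in B, ENNReal.ofReal (llr ν halfNormal x) ∂ν ≤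
      (∫⁻ x in B, mulLog 1 (ν.rnDeriv volume x)) + ν B
        + ∫⁻ x in B, ENNReal.ofReal (x ^ 2) ∂ν := by
  rw [setLIntegral_mulLog_rnDeriv_eq 1 hac hB]
  calc ∫⁻ x in B, ENNReal.ofReal (llr ν halfNormal x) ∂ν
      ≤ ∫⁻ x in B, ENNReal.ofReal (Real.log (1 + 1 * (ν.rnDeriv volume x).toReal)) + 1
          + ENNReal.ofReal (x ^ 2) ∂ν := by
        refine lintegral_mono_ae (ae_restrict_of_ae ?_)
        filter_upwards [ae_llr_halfNormal_mem_Icc hac h0, Measure.rnDeriv_pos hac,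
          hac.ae_le (ν.rnDeriv_lt_top volume)] with x hx hf hf_top
        have hpos := ENNReal.toReal_pos hf.ne' hf_top.ne
        have hlog : llr ν volume x ≤ Real.log (1 + 1 * (ν.rnDeriv volume x).toReal) :=
          Real.log_le_log hpos (by linarith)
        rw [← ENNReal.ofReal_one, add_assoc, ← ENNReal.ofReal_add zero_le_one (by positivity),
          ← ENNReal.ofReal_add (Real.log_nonneg (by linarith)) (by positivity)]
        exact ENNReal.ofReal_le_ofReal (hx.2.trans (by gcongr))
    _ = _ := by
        rw [lintegral_add_right _ (by fun_prop), lintegral_add_right _ measurable_const,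
          setLIntegral_one]

theorem log_one_add_le_one_add_of_log_le {a b : ℝ} (ha : 0 ≤ a) (hb : 0 ≤ b)
    (h : Real.log a ≤ b) : Real.log (1 + a) ≤ 1 + b := by
  have hexp : a ≤ Real.exp b := by
    rcases ha.eq_or_lt with rfl | ha
    · positivity
    · exact (Real.log_le_iff_le_exp ha).1 h
  rw [Real.log_le_iff_le_exp (by linarith), Real.exp_add]
  nlinarith [Real.add_one_le_exp 1, Real.one_le_exp hb, Real.exp_pos b]

theorem KL_halfNormal_lt_top_iff (hac : ν ≪ volume) (h0 : ν (Set.Iic 0) = 0)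
    (hsq : ∫⁻ x, ENNReal.ofReal (x ^ 2) ∂ν ≠ ⊤) :
    KL ν halfNormal < ⊤ ↔ logEntropy volume 1 ν ≠ ⊤ := by
  have hhn := absolutelyContinuous_halfNormal hac h0
  constructor
  · intro hKL
    have hint : Integrable (llr ν halfNormal) ν := by
      by_contra hnot
      rw [KL, if_neg (hnot ·.2)] at hKL
      exact hKL.ne rfl
    rw [logEntropy, ← setLIntegral_univ, setLIntegral_mulLog_rnDeriv_eq 1 hac .univ,
      setLIntegral_univ]
    refine ne_top_of_le_ne_top (b := ∫⁻ x, 1 + ‖llr ν halfNormal x‖ₑ ∂ν) ?_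
      (lintegral_mono_ae ?_)
    · rw [lintegral_add_left measurable_const]
      exact ENNReal.add_ne_top.2 ⟨by simp, hint.2.ne⟩
    filter_upwards [ae_llr_halfNormal_mem_Icc hac h0] with x hx
    rw [← ofReal_norm, ← ENNReal.ofReal_one,
      ← ENNReal.ofReal_add zero_le_one (norm_nonneg _), one_mul]
    exact ENNReal.ofReal_le_ofReal (log_one_add_le_one_add_of_log_le ENNReal.toReal_nonneg
      (norm_nonneg _) (hx.1.trans (Real.le_norm_self _)))
  · intro hent
    have hle := setLIntegral_ofReal_llr_halfNormal_le hac h0 .univ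
    rw [setLIntegral_univ, setLIntegral_univ, setLIntegral_univ, measure_univ] at hle
    change _ ≤ logEntropy volume 1 ν + 1 + _ at hle
    exact (KL_le_lintegral_ofReal_llr hhn).trans_lt (hle.trans_lt (by finiteness))

end HalfNormalDensity

section SecondMoment

theorem integrable_sq_halfNormal : Integrable (fun x ↦ x ^ 2) halfNormal := by
  rw [halfNormal, integrable_map_measure (by fun_prop) (by fun_prop)]
  simpa [Function.comp_def] using (memLp_id_gaussianReal (μ := 0) (v := 1) 2).integrable_sq

theorem integral_sq_halfNormal : ∫ x, x ^ 2 ∂halfNormal = 1 := by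
  have hvar := variance_eq_sub (memLp_id_gaussianReal (μ := 0) (v := 1) 2)
  rw [variance_id_gaussianReal] at hvar
  rw [halfNormal, integral_map (by fun_prop) (by fun_prop)]
  simpa [eq_comm] using hvar

theorem exists_one_sub_le_setIntegral_sq_halfNormal {ε : ℝ} (hε : 0 < ε) :
    ∃ R : ℝ, 1 ≤ R ∧ 1 - ε ≤ ∫ x in Set.Icc (-R) R, x ^ 2 ∂halfNormal := by
  have hlim := (aecover_Icc (μ := halfNormal) tendsto_neg_atTop_atBot
    tendsto_id).integral_tendsto_of_countably_generated integrable_sq_halfNormal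
  rw [integral_sq_halfNormal] at hlim
  exact ((eventually_ge_atTop 1).and (hlim.eventually_const_le (sub_lt_self 1 hε))).exists

variable {ν : Measure ℝ} {ε κ R : ℝ}

theorem TVDistLE.sub_le_setIntegral_sq (h : TVDistLE ν halfNormal κ) (hR : 1 ≤ R)
    (htrunc : 1 - ε ≤ ∫ x in Set.Icc (-R) R, x ^ 2 ∂halfNormal) :
    1 - ε - R ^ 2 * κ ≤ ∫ x in Set.Icc (-R) R, x ^ 2 ∂ν := by
  have hdiff := h.abs_integral_sub_le_mul (F := (Set.Icc (-R) R).indicator (· ^ 2))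
    (M := R ^ 2) (by positivity) (Measurable.indicator (by fun_prop) measurableSet_Icc) fun x ↦ by
      by_cases hx : x ∈ Set.Icc (-R) R
      · rw [Set.indicator_of_mem hx, abs_of_nonneg (sq_nonneg x)]
        exact sq_le_sq' hx.1 hx.2
      · rw [Set.indicator_of_notMem hx, abs_zero]
        positivity
  rw [integral_indicator measurableSet_Icc, integral_indicator measurableSet_Icc] at hdiff
  linarith [(abs_le.1 hdiff).1]

theorem TVDistLE.setLIntegral_compl_Icc_sq_le [IsFiniteMeasure ν]
    (h : TVDistLE ν halfNormal κ) (hR : 1 ≤ R)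
    (htrunc : 1 - ε ≤ ∫ x in Set.Icc (-R) R, x ^ 2 ∂halfNormal)
    (hsq : ∫⁻ x, ENNReal.ofReal (x ^ 2) ∂ν ≤ ENNReal.ofReal (1 + ε)) :
    ∫⁻ x in (Set.Icc (-R) R)ᶜ, ENNReal.ofReal (x ^ 2) ∂ν ≤
      ENNReal.ofReal (2 * ε + R ^ 2 * κ) := by
  have hint : Integrable (fun x ↦ x ^ 2) (ν.restrict (Set.Icc (-R) R)) :=
    (by fun_prop : Continuous fun x : ℝ ↦ x ^ 2).integrableOn_Icc
  have hinside : ENNReal.ofReal (1 - ε - R ^ 2 * κ) ≤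
      ∫⁻ x in Set.Icc (-R) R, ENNReal.ofReal (x ^ 2) ∂ν := by
    rw [← ofReal_integral_eq_lintegral_ofReal hint (ae_of_all _ fun x ↦ sq_nonneg x)]
    exact ENNReal.ofReal_le_ofReal (h.sub_le_setIntegral_sq hR htrunc)
  refine ENNReal.le_of_add_le_add_left
    (a := ∫⁻ x in Set.Icc (-R) R, ENNReal.ofReal (x ^ 2) ∂ν)
    (((setLIntegral_le_lintegral _ _).trans hsq).trans_lt ENNReal.ofReal_lt_top).ne ?_
  rw [lintegral_add_compl _ measurableSet_Icc]
  calc ∫⁻ x, ENNReal.ofReal (x ^ 2) ∂ν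
      ≤ ENNReal.ofReal (1 - ε - R ^ 2 * κ + (2 * ε + R ^ 2 * κ)) :=
        hsq.trans (ENNReal.ofReal_le_ofReal (by linarith))
    _ ≤ ENNReal.ofReal (1 - ε - R ^ 2 * κ) + ENNReal.ofReal (2 * ε + R ^ 2 * κ) :=
        ENNReal.ofReal_add_le
    _ ≤ _ := by gcongr

theorem setLIntegral_sq_le_add_compl_Icc (ν : Measure ℝ) (R : ℝ) (B : Set ℝ) :
    ∫⁻ x in B, ENNReal.ofReal (x ^ 2) ∂ν ≤
      ENNReal.ofReal (R ^ 2) * ν B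
        + ∫⁻ x in (Set.Icc (-R) R)ᶜ, ENNReal.ofReal (x ^ 2) ∂ν := calc
    ∫⁻ x in B, ENNReal.ofReal (x ^ 2) ∂ν
    _ ≤ ∫⁻ x in B, ENNReal.ofReal (R ^ 2)
          + (Set.Icc (-R) R)ᶜ.indicator (fun x ↦ ENNReal.ofReal (x ^ 2)) x ∂ν := by
        refine lintegral_mono fun x ↦ ?_
        by_cases hx : x ∈ Set.Icc (-R) R
        · exact le_add_right (ENNReal.ofReal_le_ofReal (sq_le_sq' hx.1 hx.2))
        · rw [Set.indicator_of_mem (by exact hx)]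
          exact le_add_self
    _ ≤ ENNReal.ofReal (R ^ 2) * ν B
          + ∫⁻ x in (Set.Icc (-R) R)ᶜ, ENNReal.ofReal (x ^ 2) ∂ν := by
        rw [lintegral_add_left measurable_const, setLIntegral_const,
          ← lintegral_indicator measurableSet_Icc.compl]
        gcongr
        exact Measure.restrict_le_self

end SecondMoment

section TotalVariationToEntropy

variable {δ : ℝ} (Λ : ℝ)

theorem KL_halfNormal_le_of_forall_setLIntegral_le {ν : Measure ℝ} [IsProbabilityMeasure ν]
    {R τ : ℝ} (hac : ν ≪ volume) (h0 : ν (Set.Iic 0) = 0)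
    (htail : ∫⁻ x in (Set.Icc (-R) R)ᶜ, ENNReal.ofReal (x ^ 2) ∂ν ≤ ENNReal.ofReal τ)
    (hent : ∀ B, MeasurableSet B → ∫⁻ x in B, mulLog 1 (ν.rnDeriv volume x) ≤
      ENNReal.ofReal Λ * ν B + ENNReal.ofReal δ) :
    KL ν halfNormal ≤
      ENNReal.ofReal δ
        + ((ENNReal.ofReal Λ + 1 + ENNReal.ofReal (R ^ 2)) * ν {x | δ < llr ν halfNormal x}
          + (ENNReal.ofReal δ + ENNReal.ofReal τ)) := by
  set B := {x | δ < llr ν halfNormal x}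
  have hB : MeasurableSet B := measurableSet_lt measurable_const (measurable_llr ν halfNormal)
  calc KL ν halfNormal
      ≤ ENNReal.ofReal δ + ∫⁻ x in B, ENNReal.ofReal (llr ν halfNormal x) ∂ν :=
        KL_le_ofReal_add_setLIntegral (absolutelyContinuous_halfNormal hac h0) δ
    _ ≤ ENNReal.ofReal δ + ((ENNReal.ofReal Λ * ν B + ENNReal.ofReal δ) + ν B
          + (ENNReal.ofReal (R ^ 2) * ν B + ENNReal.ofReal τ)) := by
        gcongr
        refine (setLIntegral_ofReal_llr_halfNormal_le hac h0 hB).trans ?_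
        gcongr
        · exact hent B hB
        · exact (setLIntegral_sq_le_add_compl_Icc ν R B).trans (by gcongr)
    _ = _ := by ring

theorem exists_forall_KL_halfNormal_le (hδ : 0 < δ) :
    ∃ κ > 0, ∀ (ν : Measure ℝ) [IsProbabilityMeasure ν], ν ≪ volume → ν (Set.Iic 0) = 0 →
      TVDistLE ν halfNormal κ →
      ∫⁻ x, ENNReal.ofReal (x ^ 2) ∂ν ≤ ENNReal.ofReal (1 + δ) →
      (∀ B, MeasurableSet B → ∫⁻ x in B, mulLog 1 (ν.rnDeriv volume x) ≤
        ENNReal.ofReal Λ * ν B + ENNReal.ofReal δ) →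
      KL ν halfNormal ≤ ENNReal.ofReal (6 * δ) := by
  obtain ⟨R, hR, htrunc⟩ := exists_one_sub_le_setIntegral_sq_halfNormal hδ
  set S : ℝ := |Λ| + 1 + R ^ 2
  have hS : 0 < S := by positivity
  set κ : ℝ := δ ^ 2 / ((1 + δ) * S)
  have hRκ : R ^ 2 * κ ≤ δ := by
    have hRS : R ^ 2 ≤ S := le_add_of_nonneg_left (by positivity)
    rw [mul_div_assoc', div_le_iff₀ (by positivity)]
    nlinarith [mul_nonneg (sq_nonneg δ) (sub_nonneg.2 hRS), mul_pos hδ hS]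
  refine ⟨κ, by positivity, fun ν _ hac h0 hTV hsq hent ↦ ?_⟩
  have hνB : ν {x | δ < llr ν halfNormal x} ≤ ENNReal.ofReal (δ / S) := by
    have hκ : κ * (1 + δ) / δ = δ / S := by simp only [κ]; field_simp
    exact hκ ▸ hTV.measure_lt_llr_le hδ
  have hmass : (ENNReal.ofReal Λ + 1 + ENNReal.ofReal (R ^ 2))
      * ν {x | δ < llr ν halfNormal x} ≤ ENNReal.ofReal δ := calc
    _ ≤ ENNReal.ofReal S * ENNReal.ofReal (δ / S) := by
        rw [ENNReal.ofReal_add (by positivity) (by positivity),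
          ENNReal.ofReal_add (by positivity) zero_le_one, ENNReal.ofReal_one]
        gcongr
        exact le_abs_self Λ
    _ = ENNReal.ofReal δ := by rw [← ENNReal.ofReal_mul hS.le, mul_div_cancel₀ _ hS.ne']
  calc KL ν halfNormal
      ≤ _ := KL_halfNormal_le_of_forall_setLIntegral_le Λ hac h0
        (hTV.setLIntegral_compl_Icc_sq_le hR htrunc hsq) hent
    _ ≤ ENNReal.ofReal δ
          + (ENNReal.ofReal δ + (ENNReal.ofReal δ + ENNReal.ofReal (3 * δ))) := by
        gcongr
        linarith
    _ = ENNReal.ofReal (6 * δ) := by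
        rw [← ENNReal.ofReal_add hδ.le (by positivity),
          ← ENNReal.ofReal_add hδ.le (by positivity), ← ENNReal.ofReal_add hδ.le (by positivity)]
        ring_nf

end TotalVariationToEntropy

section Dilation

theorem setLIntegral_mulLog_rnDeriv_map_div {a : ℝ} (ha : 0 < a) (t : ℝ) (ρ : Measure ℝ)
    [SigmaFinite ρ] {B : Set ℝ} (hB : MeasurableSet B) :
    ∫⁻ y in B, mulLog t ((ρ.map (· / a)).rnDeriv volume y) =
      ∫⁻ x in (· / a) ⁻¹' B, mulLog (t * a) (ρ.rnDeriv volume x) := by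
  have hemb : MeasurableEmbedding fun x : ℝ ↦ x / a := by
    simpa only [div_eq_mul_inv] using measurableEmbedding_mulRight₀ (inv_ne_zero ha.ne')
  have : SigmaFinite (ρ.map (· / a)) := hemb.sigmaFinite_map
  have ha0 : ENNReal.ofReal a ≠ 0 := by simpa using ha
  have hvol : volume.map (· / a) = ENNReal.ofReal a • (volume : Measure ℝ) := by
    simp_rw [div_eq_mul_inv]
    rw [Real.map_volume_mul_right (inv_ne_zero ha.ne'), inv_inv, abs_of_pos ha]
  have hae : ∀ᵐ x : ℝ, (ρ.map (· / a)).rnDeriv volume (x / a) =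
      ENNReal.ofReal a * ρ.rnDeriv volume x := by
    have hsmul : ∀ᵐ y ∂volume.map (· / a), (ρ.map (· / a)).rnDeriv (volume.map (· / a)) y =
        (ENNReal.ofReal a)⁻¹ * (ρ.map (· / a)).rnDeriv volume y := by
      rw [hvol]
      exact Measure.smul_absolutelyContinuous.ae_le
        (Measure.rnDeriv_smul_right_of_ne_top' _ volume ha0 ENNReal.ofReal_ne_top)
    filter_upwards [hemb.rnDeriv_map ρ volume, ae_of_ae_map (by fun_prop) hsmul] with x hx hx'
    rw [← hx, hx', ← mul_assoc, ENNReal.mul_inv_cancel ha0 ENNReal.ofReal_ne_top, one_mul]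
  have hcov : ENNReal.ofReal a * ∫⁻ y in B, mulLog t ((ρ.map (· / a)).rnDeriv volume y) =
      ENNReal.ofReal a * ∫⁻ x in (· / a) ⁻¹' B, mulLog (t * a) (ρ.rnDeriv volume x) := calc
    _ = ∫⁻ y in B, mulLog t ((ρ.map (· / a)).rnDeriv volume y) ∂(volume.map (· / a)) := by
      rw [hvol, Measure.restrict_smul, lintegral_smul_measure, smul_eq_mul]
    _ = ∫⁻ x in (· / a) ⁻¹' B, mulLog t ((ρ.map (· / a)).rnDeriv volume (x / a)) :=
      setLIntegral_map hB (by fun_prop) (by fun_prop)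
    _ = ∫⁻ x in (· / a) ⁻¹' B, ENNReal.ofReal a * mulLog (t * a) (ρ.rnDeriv volume x) := by
      refine lintegral_congr_ae (ae_restrict_of_ae (hae.mono fun x hx ↦ ?_))
      dsimp only
      rw [hx, mulLog_mul, ENNReal.toReal_ofReal ha.le]
    _ = _ := lintegral_const_mul _ (by fun_prop)
  exact (ENNReal.mul_right_inj ha0 ENNReal.ofReal_ne_top).1 hcov

theorem logEntropy_map_div {a : ℝ} (ha : 0 < a) (t : ℝ) (ρ : Measure ℝ) [SigmaFinite ρ] :
    logEntropy volume t (ρ.map (· / a)) = logEntropy volume (t * a) ρ := by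
  simpa only [setLIntegral_univ, Set.preimage_univ, logEntropy] using
    setLIntegral_mulLog_rnDeriv_map_div ha t ρ .univ

end Dilation

section Conditioning

theorem tvDistLE_cond {α : Type*} [MeasurableSpace α] (σ : Measure α) [IsProbabilityMeasure σ]
    {s : Set α} (hs : σ s ≠ 0) : TVDistLE (ProbabilityTheory.cond σ s) σ (2 * (1 - σ.real s)) := by
  have := cond_isProbabilityMeasure hs
  have hle : σ.restrict s ≤ ProbabilityTheory.cond σ s := by
    rw [ProbabilityTheory.cond]
    exact (one_smul ℝ≥0∞ (σ.restrict s)).symm.trans_le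
      (by gcongr; exact ENNReal.one_le_inv.2 prob_le_one)
  have hcond := tvDistLE_of_le hle
  have hrestrict := tvDistLE_of_le (σ.restrict_le_self (s := s))
  rw [measureReal_restrict_apply_univ, probReal_univ] at hcond hrestrict
  exact (hcond.symm.trans hrestrict).mono (two_mul _).ge

theorem logEntropy_smul_ne_top_iff {α : Type*} [MeasurableSpace α] {π ρ : Measure α} [SigmaFinite π]
    [IsFiniteMeasure ρ] {c : ℝ≥0∞} (hc0 : c ≠ 0) (hc : c ≠ ⊤) {t : ℝ} (ht : 0 < t) :
    logEntropy π t (c • ρ) ≠ ⊤ ↔ logEntropy π t ρ ≠ ⊤ := by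
  have hpos : 0 < t * c.toReal := mul_pos ht (ENNReal.toReal_pos hc0 hc)
  rw [logEntropy_smul hc]
  refine ⟨fun h ↦ logEntropy_ne_top_of_pos hpos ht fun htop ↦ h ?_,
    fun h ↦ ENNReal.mul_ne_top hc (logEntropy_ne_top_of_pos ht hpos h)⟩
  rw [htop, ENNReal.mul_top hc0]

theorem cond_Ioi_Iic_eq_zero (σ : Measure ℝ) (a : ℝ) :
    ProbabilityTheory.cond σ (Set.Ioi a) (Set.Iic a) = 0 := by
  simp [cond_apply measurableSet_Ioi, Set.Ioi_inter_Iic]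

theorem KL_cond_Ioi_zero_lt_top_iff {σ : Measure ℝ} [IsFiniteMeasure σ]
    (hac : σ.restrict (Set.Ioi 0) ≪ volume) (h0 : σ (Set.Ioi 0) ≠ 0)
    (hsq : ∫⁻ x, ENNReal.ofReal (x ^ 2) ∂σ ≠ ⊤) :
    KL (ProbabilityTheory.cond σ (Set.Ioi 0)) halfNormal < ⊤ ↔
      logEntropy volume 1 (σ.restrict (Set.Ioi 0)) ≠ ⊤ := by
  have hinv : (σ (Set.Ioi 0))⁻¹ ≠ ⊤ := ENNReal.inv_ne_top.2 h0
  have hsq' : ∫⁻ x, ENNReal.ofReal (x ^ 2) ∂(ProbabilityTheory.cond σ (Set.Ioi 0)) ≠ ⊤ := by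
    rw [ProbabilityTheory.cond, lintegral_smul_measure]
    exact ENNReal.mul_ne_top hinv (ne_top_of_le_ne_top hsq (setLIntegral_le_lintegral _ _))
  have hac' : ProbabilityTheory.cond σ (Set.Ioi 0) ≪ volume :=
    Measure.smul_absolutelyContinuous.trans hac
  have := cond_isProbabilityMeasure h0
  rw [KL_halfNormal_lt_top_iff hac' (cond_Ioi_Iic_eq_zero σ 0) hsq', ProbabilityTheory.cond,
    logEntropy_smul_ne_top_iff (ENNReal.inv_ne_zero.2 (measure_ne_top σ _)) hinv one_pos]

end Conditioning

section ConditionedMaxLaw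

variable {μ : Measure ℝ}

variable (μ) in
/-- The law of `max 0 (max_{k ≤ n} S_k) / √n` conditioned on being positive, which is that of
`S̄ₙ / √n` conditioned on being positive. -/
noncomputable def condMaxLaw (n : ℕ) : Measure ℝ :=
  ProbabilityTheory.cond (scaledMaxLaw μ n) (Set.Ioi 0)

theorem scaledMaxLaw_restrict_Ioi_zero {n : ℕ} (hn : 1 ≤ n) :
    (scaledMaxLaw μ n).restrict (Set.Ioi 0) = (posMaxLaw μ n).map (· / √n) := by
  have hsqrt : 0 < √(n : ℝ) := by positivity
  rw [scaledMaxLaw, posMaxLaw, Measure.restrict_map (by fun_prop) measurableSet_Ioi]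
  congr 2
  ext x
  simp [div_pos_iff_of_pos_right, hsqrt]

theorem condMaxLaw_eq_smul {n : ℕ} (hn : 1 ≤ n) :
    condMaxLaw μ n = (scaledMaxLaw μ n (Set.Ioi 0))⁻¹ • (posMaxLaw μ n).map (· / √n) := by
  rw [condMaxLaw, ProbabilityTheory.cond, scaledMaxLaw_restrict_Ioi_zero hn]

variable [IsProbabilityMeasure μ]

theorem scaledMaxLaw_restrict_Ioi_zero_absolutelyContinuous (hac : μ ≪ volume) {n : ℕ}
    (hn : 1 ≤ n) : (scaledMaxLaw μ n).restrict (Set.Ioi 0) ≪ volume := by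
  have hsqrt : √(n : ℝ) ≠ 0 := by positivity
  rw [scaledMaxLaw_restrict_Ioi_zero hn]
  refine ((posMaxLaw_absolutelyContinuous hac n).map (by fun_prop)).trans ?_
  simp_rw [div_eq_mul_inv]
  rw [Real.map_volume_mul_right (inv_ne_zero hsqrt)]
  exact Measure.smul_absolutelyContinuous

theorem lintegral_scaledMaxLaw_sq_le_one (hμ : IsStandardized μ) (n : ℕ) :
    ∫⁻ x, ENNReal.ofReal (x ^ 2) ∂(scaledMaxLaw μ n) ≤ 1 := by
  have hdiv (x : ℝ) : ENNReal.ofReal ((x / √n) ^ 2) =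
      ENNReal.ofReal (n : ℝ)⁻¹ * ENNReal.ofReal (x ^ 2) := by
    rw [← ENNReal.ofReal_mul (by positivity), div_pow, Real.sq_sqrt n.cast_nonneg, div_eq_inv_mul]
  rw [scaledMaxLaw, lintegral_map (by fun_prop) (by fun_prop)]
  simp only [hdiv]
  rw [lintegral_const_mul _ (by fun_prop)]
  calc ENNReal.ofReal (n : ℝ)⁻¹ * ∫⁻ x, ENNReal.ofReal (x ^ 2) ∂(maxLaw μ n)
      ≤ ENNReal.ofReal (n : ℝ)⁻¹ * ENNReal.ofReal n := by
        rw [ENNReal.ofReal_natCast]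
        gcongr
        exact hμ.lintegral_maxLaw_sq_le n
    _ ≤ 1 := by
        rw [← ENNReal.ofReal_mul (by positivity)]
        exact ENNReal.ofReal_le_one.2 inv_mul_le_one

theorem lintegral_condMaxLaw_sq_le (hμ : IsStandardized μ) (n : ℕ) :
    ∫⁻ x, ENNReal.ofReal (x ^ 2) ∂(condMaxLaw μ n) ≤ (scaledMaxLaw μ n (Set.Ioi 0))⁻¹ := by
  rw [condMaxLaw, ProbabilityTheory.cond, lintegral_smul_measure, smul_eq_mul]
  exact mul_le_of_le_one_right' ((setLIntegral_le_lintegral _ _).trans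
    (lintegral_scaledMaxLaw_sq_le_one hμ n))

theorem tendsto_scaledMaxLaw_Ioi_zero (hμ : IsStandardized μ) :
    Tendsto (fun n ↦ scaledMaxLaw μ n (Set.Ioi 0)) atTop (nhds 1) := by
  have hlim := tendsto_scaledMaxLaw_Ioi hμ 0
  rw [halfNormal_real_Ioi le_rfl, gaussianTail_zero] at hlim
  norm_num at hlim
  simpa using ENNReal.tendsto_ofReal hlim

theorem eventually_scaledMaxLaw_Ioi_zero_inv_le (hμ : IsStandardized μ) {δ : ℝ} (hδ : 0 < δ) :
    ∀ᶠ n in atTop, (scaledMaxLaw μ n (Set.Ioi 0))⁻¹ ≤ ENNReal.ofReal (1 + δ) := by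
  have hlim := tendsto_inv_iff.2 (tendsto_scaledMaxLaw_Ioi_zero hμ)
  rw [inv_one] at hlim
  exact hlim.eventually_le_const (ENNReal.one_lt_ofReal.2 (by linarith))

theorem eventually_tvDistLE_condMaxLaw_halfNormal (hμ : IsStandardized μ) (hac : μ ≪ volume)
    {ε : ℝ} (hε : 0 < ε) : ∀ᶠ n in atTop, TVDistLE (condMaxLaw μ n) halfNormal ε := by
  have hlim := tendsto_scaledMaxLaw_Ioi_zero hμ
  have hreal := (ENNReal.tendsto_toReal ENNReal.one_ne_top).comp hlim
  filter_upwards [eventually_tvDistLE_scaledMaxLaw_halfNormal hμ hac (half_pos hε),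
    hlim.eventually_ne one_ne_zero,
    hreal.eventually_const_le (show 1 - ε / 4 < (1 : ℝ≥0∞).toReal by norm_num; exact hε)]
    with n hTV hne hmass
  have hmass' : 1 - ε / 4 ≤ (scaledMaxLaw μ n).real (Set.Ioi 0) := hmass
  exact ((tvDistLE_cond _ hne).trans hTV).mono (by linarith)

theorem setLIntegral_mulLog_condMaxLaw_le {n : ℕ} (hn : 1 ≤ n)
    (hmass : (scaledMaxLaw μ n (Set.Ioi 0))⁻¹ ≤ 2) {Λ : ℝ} {ε : ℝ≥0∞}
    (hΛ : ∀ B, ∫⁻ x in B, mulLog √n ((posMaxLaw μ n).rnDeriv volume x) ≤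
      ENNReal.ofReal Λ * posMaxLaw μ n B + ε) {B : Set ℝ} (hB : MeasurableSet B) :
    ∫⁻ x in B, mulLog 1 ((condMaxLaw μ n).rnDeriv volume x) ≤
      ENNReal.ofReal (Real.log 3 + |Λ|) * condMaxLaw μ n B + 2 * ε := by
  have hsqrt : 0 < √(n : ℝ) := by positivity
  rw [condMaxLaw_eq_smul hn, Measure.smul_apply, Measure.map_apply (by fun_prop) hB, smul_eq_mul]
  set c := (scaledMaxLaw μ n (Set.Ioi 0))⁻¹
  have hc : c ≠ ⊤ := ne_top_of_le_ne_top ENNReal.ofNat_ne_top hmass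
  have hc2 : c.toReal ≤ 2 := by simpa using ENNReal.toReal_mono ENNReal.ofNat_ne_top hmass
  rw [setLIntegral_mulLog_rnDeriv_smul hc, setLIntegral_mulLog_rnDeriv_map_div hsqrt _ _ hB,
    one_mul]
  set A := (· / √(n : ℝ)) ⁻¹' B
  calc c * ∫⁻ x in A, mulLog (c.toReal * √n) ((posMaxLaw μ n).rnDeriv volume x)
      ≤ c * (ENNReal.ofReal (Real.log 3) * posMaxLaw μ n A
          + (ENNReal.ofReal |Λ| * posMaxLaw μ n A + ε)) := by
        gcongr
        refine (setLIntegral_mulLog_mul_left_le ENNReal.toReal_nonneg hsqrt.le _ _ A).trans ?_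
        gcongr
        · linarith
        · exact (hΛ A).trans (by gcongr; exact le_abs_self Λ)
    _ = ENNReal.ofReal (Real.log 3 + |Λ|) * (c * posMaxLaw μ n A) + c * ε := by
        rw [ENNReal.ofReal_add (Real.log_nonneg (by norm_num)) (abs_nonneg Λ)]
        ring
    _ ≤ _ := by gcongr

theorem exists_eventually_setLIntegral_mulLog_condMaxLaw_le (hμ : IsStandardized μ)
    (hac : μ ≪ volume) (hfin : logEntropy volume 1 (μ.restrict (Set.Ioi 0)) ≠ ⊤)
    {ε : ℝ} (hε : 0 < ε) :
    ∃ Λ : ℝ, ∀ᶠ n in atTop, ∀ B, MeasurableSet B →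
      ∫⁻ x in B, mulLog 1 ((condMaxLaw μ n).rnDeriv volume x) ≤
        ENNReal.ofReal Λ * condMaxLaw μ n B + ENNReal.ofReal ε := by
  obtain ⟨Λ, hΛ⟩ := exists_eventually_setLIntegral_mulLog_posMaxLaw_le hμ hac hfin (half_pos hε)
  refine ⟨Real.log 3 + |Λ|, ?_⟩
  filter_upwards [hΛ, eventually_scaledMaxLaw_Ioi_zero_inv_le hμ one_pos, eventually_ge_atTop 1]
    with n hn_bound hmass hn B hB
  have htwo : 2 * ENNReal.ofReal (ε / 2) = ENNReal.ofReal ε := by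
    rw [← ENNReal.ofReal_ofNat, ← ENNReal.ofReal_mul zero_le_two, mul_div_cancel₀ _ two_ne_zero]
  rw [← htwo]
  refine setLIntegral_mulLog_condMaxLaw_le hn (hmass.trans_eq ?_) hn_bound hB
  norm_num

theorem tendsto_KL_condMaxLaw (hμ : IsStandardized μ) (hac : μ ≪ volume)
    (hfin : logEntropy volume 1 (μ.restrict (Set.Ioi 0)) ≠ ⊤) :
    Tendsto (fun n ↦ KL (condMaxLaw μ n) halfNormal) atTop (nhds 0) := by
  suffices ∀ δ > 0, ∀ᶠ n in atTop, KL (condMaxLaw μ n) halfNormal ≤ ENNReal.ofReal (6 * δ) by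
    refine ENNReal.tendsto_nhds_zero.2 fun ε hε ↦ ?_
    obtain ⟨δ, -, hδ, hle⟩ := ENNReal.lt_iff_exists_real_btwn.1 hε
    filter_upwards [this (δ / 6) (by simpa using hδ)] with n hn
    refine hn.trans ?_
    rw [mul_div_cancel₀ _ (by norm_num)]
    exact hle.le
  intro δ hδ
  obtain ⟨Λ, hΛ⟩ := exists_eventually_setLIntegral_mulLog_condMaxLaw_le hμ hac hfin hδ
  obtain ⟨κ, hκ, hKL⟩ := exists_forall_KL_halfNormal_le Λ hδ
  filter_upwards [hΛ, eventually_tvDistLE_condMaxLaw_halfNormal hμ hac hκ,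
    eventually_scaledMaxLaw_Ioi_zero_inv_le hμ hδ,
    (tendsto_scaledMaxLaw_Ioi_zero hμ).eventually_ne one_ne_zero, eventually_ge_atTop 1]
    with n hent hTV hmass hne hn
  have : IsProbabilityMeasure (condMaxLaw μ n) := cond_isProbabilityMeasure hne
  have hac_cond : condMaxLaw μ n ≪ volume := Measure.smul_absolutelyContinuous.trans
    (scaledMaxLaw_restrict_Ioi_zero_absolutelyContinuous hac hn)
  exact hKL _ hac_cond (cond_Ioi_Iic_eq_zero _ 0) hTV
    ((lintegral_condMaxLaw_sq_le hμ n).trans hmass) hent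

theorem logEntropy_restrict_Ioi_ne_top_of_posMaxLaw (h0 : μ (Set.Iic 0) ≠ 0) (hac : μ ≪ volume)
    {n : ℕ} (hn : 1 ≤ n) {t : ℝ} (ht : 0 < t) (h : logEntropy volume t (posMaxLaw μ n) ≠ ⊤) :
    logEntropy volume t (μ.restrict (Set.Ioi 0)) ≠ ⊤ :=
  (logEntropy_smul_ne_top_iff (maxAtom_ne_zero μ h0 (n - 1)) (maxAtom_ne_top μ (n - 1)) ht).1
    (ne_top_of_le_ne_top h (logEntropy_mono ht.le (posMaxLaw_absolutelyContinuous hac n)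
      (smul_restrict_le_posMaxLaw μ hn)))

theorem KL_condMaxLaw_lt_top_iff (hμ : IsStandardized μ) (hac : μ ≪ volume) {n : ℕ} (hn : 1 ≤ n)
    (hne : scaledMaxLaw μ n (Set.Ioi 0) ≠ 0) :
    KL (condMaxLaw μ n) halfNormal < ⊤ ↔ logEntropy volume √n (posMaxLaw μ n) ≠ ⊤ := by
  rw [condMaxLaw, KL_cond_Ioi_zero_lt_top_iff
    (scaledMaxLaw_restrict_Ioi_zero_absolutelyContinuous hac hn) hne
    (ne_top_of_le_ne_top ENNReal.one_ne_top (lintegral_scaledMaxLaw_sq_le_one hμ n)),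
    scaledMaxLaw_restrict_Ioi_zero hn, logEntropy_map_div (by positivity), one_mul]

theorem tendsto_KL_condMaxLaw_iff (hμ : IsStandardized μ) (hac : μ ≪ volume) :
    Tendsto (fun n ↦ KL (condMaxLaw μ n) halfNormal) atTop (nhds 0) ↔
      KL (ProbabilityTheory.cond μ (Set.Ioi 0)) halfNormal < ⊤ := by
  rw [KL_cond_Ioi_zero_lt_top_iff (Measure.restrict_le_self.absolutelyContinuous.trans hac)
    hμ.measure_Ioi_zero_ne_zero (by rw [hμ.lintegral_sq]; exact ENNReal.one_ne_top)]
  refine ⟨fun hlim ↦ ?_, tendsto_KL_condMaxLaw hμ hac⟩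
  obtain ⟨n, hKL, hne, hn⟩ := ((hlim.eventually_lt_const ENNReal.zero_lt_top).and
    (((tendsto_scaledMaxLaw_Ioi_zero hμ).eventually_ne one_ne_zero).and
      (eventually_ge_atTop 1))).exists
  have hsqrt : 0 < √(n : ℝ) := by positivity
  exact logEntropy_restrict_Ioi_ne_top_of_posMaxLaw hμ.measure_Iic_zero_ne_zero hac hn one_pos
    (logEntropy_ne_top_of_pos hsqrt one_pos ((KL_condMaxLaw_lt_top_iff hμ hac hn hne).1 hKL))

end ConditionedMaxLaw

section PartialSums

/-- The maximum of the partial sums `0, y 0, y 0 + y 1, …, y 0 + ⋯ + y (n - 1)`. -/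
noncomputable def maxPartialSum (n : ℕ) (y : ℕ → ℝ) : ℝ :=
  (Finset.range (n + 1)).sup' Finset.nonempty_range_add_one fun k ↦ ∑ i ∈ Finset.range k, y i

@[fun_prop]
theorem measurable_maxPartialSum (n : ℕ) : Measurable (maxPartialSum n) := by
  have heq : maxPartialSum n = (Finset.range (n + 1)).sup' Finset.nonempty_range_add_one
      fun k y ↦ ∑ i ∈ Finset.range k, y i := by
    ext y
    rw [maxPartialSum, Finset.sup'_apply]
  rw [heq]
  exact Finset.measurable_sup' _ fun k _ ↦ by fun_prop

theorem maxPartialSum_zero (y : ℕ → ℝ) : maxPartialSum 0 y = 0 := by simp [maxPartialSum]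

theorem maxPartialSum_le_iff {n : ℕ} {y : ℕ → ℝ} {c : ℝ} :
    maxPartialSum n y ≤ c ↔ ∀ k ≤ n, ∑ i ∈ Finset.range k, y i ≤ c := by
  simp [maxPartialSum]

theorem maxPartialSum_succ (n : ℕ) (y : ℕ → ℝ) :
    maxPartialSum (n + 1) y = max (maxPartialSum n (fun i ↦ y (i + 1)) + y 0) 0 := by
  refine eq_of_forall_ge_iff fun c ↦ ?_
  rw [max_le_iff, ← le_sub_iff_add_le, maxPartialSum_le_iff, maxPartialSum_le_iff]
  simp only [le_sub_iff_add_le, ← Finset.sum_range_succ']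
  refine ⟨fun h ↦ ⟨fun k hk ↦ h (k + 1) (by lia), by simpa using h 0 (Nat.zero_le _)⟩, ?_⟩
  rintro ⟨hsucc, hzero⟩ (_ | k) hk
  · simpa using hzero
  · exact hsucc k (by lia)

theorem maxPartialSum_eq_max {n : ℕ} (hn : 1 ≤ n) (y : ℕ → ℝ) :
    maxPartialSum n y = max ((Finset.Icc 1 n).sup' (Finset.nonempty_Icc.mpr hn)
      fun k ↦ ∑ i ∈ Finset.range k, y i) 0 := by
  refine eq_of_forall_ge_iff fun c ↦ ?_
  rw [maxPartialSum_le_iff, max_le_iff, Finset.sup'_le_iff]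
  refine ⟨fun h ↦ ⟨fun k hk ↦ h k (Finset.mem_Icc.1 hk).2, by simpa using h 0 n.zero_le⟩, ?_⟩
  rintro ⟨hpos, hzero⟩ k hk
  rcases k.eq_zero_or_pos with rfl | hk_pos
  · simpa using hzero
  · exact hpos k (Finset.mem_Icc.2 ⟨hk_pos, hk⟩)

end PartialSums

section IndependentSteps

variable {Ω : Type*} [MeasurableSpace Ω] {P : Measure Ω} {X : ℕ → Ω → ℝ}

theorem indepFun_shift_zero {E : Type*} [MeasurableSpace E] {X : ℕ → Ω → E}
    (hmeas : ∀ i, Measurable (X i)) (hindep : iIndepFun X P) :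
    IndepFun (fun ω i ↦ X (i + 1) ω) (X 0) P := by
  have hdisj := indep_iSup_of_disjoint (fun i ↦ (hmeas i).comap_le) hindep
    (disjoint_compl_left (a := ({0} : Set ℕ)))
  refine indep_of_indep_of_le_left (indep_of_indep_of_le_right hdisj ?_) ?_
  · exact le_iSup₂_of_le 0 rfl le_rfl
  · refine Measurable.comap_le (@measurable_pi_lambda _ _ _ (_) _ _ fun i ↦ ?_)
    exact (comap_measurable (X (i + 1))).mono (le_iSup₂_of_le (i + 1) (by simp) le_rfl) le_rfl

theorem map_maxPartialSum {μ : Measure ℝ} [IsProbabilityMeasure P] (hmeas : ∀ i, Measurable (X i))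
    (hindep : iIndepFun X P) (hlaw : ∀ i, P.map (X i) = μ) (n : ℕ) :
    P.map (fun ω ↦ maxPartialSum n (X · ω)) = maxLaw μ n := by
  induction n generalizing X with
  | zero => simp [maxPartialSum_zero, maxLaw]
  | succ n ih =>
    have htail : P.map (fun ω ↦ maxPartialSum n fun i ↦ X (i + 1) ω) = maxLaw μ n :=
      ih (fun i ↦ hmeas _) (hindep.precomp (add_left_injective 1)) fun i ↦ hlaw _
    have hmeas_tail : Measurable fun ω ↦ maxPartialSum n fun i ↦ X (i + 1) ω := by fun_prop
    have hconv := ((indepFun_shift_zero hmeas hindep).comp (measurable_maxPartialSum n)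
      measurable_id).map_add_eq_map_conv_map hmeas_tail (hmeas 0)
    simp_rw [maxPartialSum_succ]
    rw [maxLaw_succ, ← htail, ← hlaw 0]
    refine Eq.trans ?_ (congrArg (Measure.map (max · 0)) hconv)
    rw [Measure.map_map (by fun_prop) (hmeas_tail.add (hmeas 0))]
    rfl

theorem cond_map_max_zero (ρ : Measure ℝ) :
    ProbabilityTheory.cond (ρ.map (max · 0)) (Set.Ioi 0) =
      ProbabilityTheory.cond ρ (Set.Ioi 0) := by
  have hrestrict := restrict_Ioi_zero_map_max_zero ρ
  rw [ProbabilityTheory.cond, ProbabilityTheory.cond, hrestrict,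
    ← Measure.restrict_apply_self, hrestrict, Measure.restrict_apply_self]

theorem cond_map_div_sqrt_eq_condMaxLaw {μ : Measure ℝ} [IsProbabilityMeasure P]
    (hmeas : ∀ i, Measurable (X i)) (hindep : iIndepFun X P) (hlaw : ∀ i, P.map (X i) = μ)
    {n : ℕ} (hn : 1 ≤ n) {S : Ω → ℝ}
    (hS : ∀ ω, S ω = (Finset.Icc 1 n).sup' (Finset.nonempty_Icc.mpr hn)
      fun k ↦ ∑ i ∈ Finset.range k, X i ω) :
    ProbabilityTheory.cond (P.map fun ω ↦ S ω / √n) (Set.Ioi 0) = condMaxLaw μ n := by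
  have hS_meas : Measurable S := by
    have heq : S = (Finset.Icc 1 n).sup' (Finset.nonempty_Icc.mpr hn)
        fun k ω ↦ ∑ i ∈ Finset.range k, X i ω := by
      ext ω
      rw [hS, Finset.sup'_apply]
    rw [heq]
    exact Finset.measurable_sup' _ fun k _ ↦ by fun_prop
  have hmax : (fun ω ↦ max (S ω / √n) 0) = fun ω ↦ maxPartialSum n (X · ω) / √n := by
    ext ω
    rw [maxPartialSum_eq_max hn, ← hS, ← max_div_div_right (Real.sqrt_nonneg _), zero_div]
  have hscaled : (P.map fun ω ↦ S ω / √n).map (max · 0) = scaledMaxLaw μ n := by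
    rw [scaledMaxLaw, ← map_maxPartialSum hmeas hindep hlaw, Measure.map_map (by fun_prop)
      (by fun_prop), Measure.map_map (by fun_prop) (by fun_prop)]
    exact congrArg P.map hmax
  rw [← cond_map_max_zero, hscaled, condMaxLaw]

theorem isStandardized_map {Z : Ω → ℝ} (hZ : MemLp Z 2 P)
    (hmean : ∫ ω, Z ω ∂P = 0) (hvar : ∫ ω, Z ω ^ 2 ∂P = 1) : IsStandardized (P.map Z) where
  memLp := (memLp_map_measure_iff (by fun_prop) hZ.aestronglyMeasurable.aemeasurable).2 hZ
  integral_id := by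
    rwa [integral_map hZ.aestronglyMeasurable.aemeasurable (by fun_prop)]
  integral_sq := by
    rwa [integral_map hZ.aestronglyMeasurable.aemeasurable (by fun_prop)]

end IndependentSteps

end EntropicErdosKac

/-- The entropic Erdős–Kac theorem: for i.i.d. `X i` with a Lebesgue density,
mean `0` and variance `1`, `D₊(S̄ n / √n | |Z|) → 0` iff `D₊(X 0 | |Z|) < ∞`. -/
theorem stmt0 {Ω : Type*} [MeasureSpace Ω] [IsProbabilityMeasure (ℙ : Measure Ω)]
    (X : ℕ → Ω → ℝ) (hmeas : ∀ i, Measurable (X i))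
    (hindep : iIndepFun X ℙ)
    (hident : ∀ i, Measure.map (X i) ℙ = Measure.map (X 0) ℙ)
    (hdensity : Measure.map (X 0) ℙ ≪ volume)
    (hL2 : MemLp (X 0) 2 ℙ)
    (hmean : ∫ ω, X 0 ω ∂ℙ = 0)
    (hvar : ∫ ω, (X 0 ω) ^ 2 ∂ℙ = 1)
    (Sbar : ℕ → Ω → ℝ)
    (hSbar : ∀ n, ∀ hn : 1 ≤ n, ∀ ω, Sbar n ω =
      (Finset.Icc 1 n).sup' (Finset.nonempty_Icc.mpr hn)
        (fun k => ∑ i ∈ Finset.range k, X i ω)) :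
    Tendsto (fun n => Dplus ℙ (fun ω => Sbar n ω / Real.sqrt n)) atTop (nhds 0) ↔
      Dplus ℙ (X 0) < ⊤ := by
  have : IsProbabilityMeasure (Measure.map (X 0) (ℙ : Measure Ω)) :=
    Measure.isProbabilityMeasure_map (hmeas 0).aemeasurable
  have hstd : EntropicErdosKac.IsStandardized (Measure.map (X 0) (ℙ : Measure Ω)) :=
    EntropicErdosKac.isStandardized_map hL2 hmean hvar
  refine (tendsto_congr' ?_).trans (EntropicErdosKac.tendsto_KL_condMaxLaw_iff hstd hdensity)
  filter_upwards [eventually_ge_atTop 1] with n hn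
  rw [Dplus, EntropicErdosKac.cond_map_div_sqrt_eq_condMaxLaw hmeas hindep hident hn (hSbar n hn)]
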